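/- arXiv:2005.13941 — 4 statements merged into one kernel-verified Lean document; each statement's English description precedes it below -/
import Mathlib

section
/- Let (X,d) be a metric space, let σ be a reversible conical geodesic bicombing on X, and let e : X → E be an injective hull of X. Then there exists a reversible conical geodesic bicombing σ̄ on E such that e(σ(x,y,t)) = σ̄(e(x), e(y), t) for all x, y ∈ X and t ∈ [0,1]. -/
universe u

/-- A geodesic bicombing on a metric space `X`: a map `σ : X × X × [0,1] → X` such that
`σ x y 0 = x`, `σ x y 1 = y` and `dist (σ x y s) (σ x y t) = |s - t| * dist x y`
for all `s, t ∈ [0,1]`. -/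
def IsGeodesicBicombing {X : Type*} [MetricSpace X] (σ : X → X → ℝ → X) : Prop :=
  (∀ x y : X, σ x y 0 = x) ∧ (∀ x y : X, σ x y 1 = y) ∧
    ∀ x y : X, ∀ s ∈ Set.Icc (0:ℝ) 1, ∀ t ∈ Set.Icc (0:ℝ) 1,
      dist (σ x y s) (σ x y t) = |s - t| * dist x y

/-- A bicombing is conical if
`dist (σ x y t) (σ x' y' t) ≤ (1 - t) * dist x x' + t * dist y y'` for all `t ∈ [0,1]`. -/
def IsConical {X : Type*} [MetricSpace X] (σ : X → X → ℝ → X) : Prop :=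
  ∀ x y x' y' : X, ∀ t ∈ Set.Icc (0:ℝ) 1,
    dist (σ x y t) (σ x' y' t) ≤ (1 - t) * dist x x' + t * dist y y'

/-- A bicombing is reversible if `σ x y t = σ y x (1 - t)` for all `t ∈ [0,1]`. -/
def IsReversible {X : Type*} [MetricSpace X] (σ : X → X → ℝ → X) : Prop :=
  ∀ x y : X, ∀ t ∈ Set.Icc (0:ℝ) 1, σ x y t = σ y x (1 - t)

/-- A metric space `Y` is injective if every `1`-Lipschitz map into `Y` defined on a subset
of a metric space `B` extends to a `1`-Lipschitz map on all of `B`. -/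
def IsInjectiveMetricSpace (Y : Type u) [MetricSpace Y] : Prop :=
  ∀ (B : Type u) [MetricSpace B] (A : Set B) (f : A → Y),
    LipschitzWith 1 f → ∃ g : B → Y, LipschitzWith 1 g ∧ ∀ a : A, g ↑a = f a

/-- An isometric embedding `e : X → E` into an injective metric space `E` is an injective hull
if every `1`-Lipschitz map `f : E → Z` such that `f ∘ e` is an isometric embedding is itself
an isometric embedding. -/
def IsInjectiveHull {X : Type u} {E : Type u} [MetricSpace X] [MetricSpace E] (e : X → E) :
    Prop :=
  Isometry e ∧ IsInjectiveMetricSpace E ∧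
    ∀ (Z : Type u) [MetricSpace Z] (f : E → Z),
      LipschitzWith 1 f → Isometry (f ∘ e) → Isometry f

section Coupling

variable {ι κ μ : Type*} [Fintype ι] [Fintype κ] [Fintype μ]

/-- `π` is a coupling (transport plan) of the finite measures with weights `m` and `n`. -/
structure IsCoupling (m : ι → ℝ) (n : κ → ℝ) (π : ι → κ → ℝ) : Prop where
  nonneg : ∀ i j, 0 ≤ π i j
  sum_right : ∀ i, ∑ j, π i j = m i
  sum_left : ∀ j, ∑ i, π i j = n j

/-- The cost of a transport plan between finitely supported measures on a metric space. -/
def transportCost {E : Type*} [MetricSpace E] (x : ι → E) (y : κ → E) (π : ι → κ → ℝ) : ℝ :=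
  ∑ i, ∑ j, π i j * dist (x i) (y j)

theorem IsCoupling.symm {m : ι → ℝ} {n : κ → ℝ} {π : ι → κ → ℝ} (h : IsCoupling m n π) :
    IsCoupling n m (fun j i => π i j) :=
  ⟨fun j i => h.nonneg i j, h.sum_left, h.sum_right⟩

theorem transportCost_symm {E : Type*} [MetricSpace E] (x : ι → E) (y : κ → E)
    (π : ι → κ → ℝ) : transportCost y x (fun j i => π i j) = transportCost x y π := by
  unfold transportCost
  rw [Finset.sum_comm]
  simp only [dist_comm]

theorem IsCoupling.transportCost_nonneg {E : Type*} [MetricSpace E] {m : ι → ℝ} {n : κ → ℝ}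
    {π : ι → κ → ℝ} (h : IsCoupling m n π) (x : ι → E) (y : κ → E) :
    0 ≤ transportCost x y π :=
  Finset.sum_nonneg fun i _ => Finset.sum_nonneg fun j _ => mul_nonneg (h.nonneg i j) dist_nonneg

theorem IsCoupling.exists_glue {m : ι → ℝ} {n : κ → ℝ} {l : μ → ℝ} {π : ι → κ → ℝ}
    {ρ : κ → μ → ℝ} (hπ : IsCoupling m n π) (hρ : IsCoupling n l ρ) :
    ∃ τ : ι → μ → ℝ, IsCoupling m l τ ∧ ∀ {E : Type u} [MetricSpace E] (x : ι → E) (y : κ → E)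
      (z : μ → E), transportCost x z τ ≤ transportCost x y π + transportCost y z ρ := by
  have hn : ∀ j, 0 ≤ n j := fun j => by
    rw [← hπ.sum_left j]; exact Finset.sum_nonneg fun i _ => hπ.nonneg i j
  have hl : ∀ i j, π i j / n j * n j = π i j := fun i j => by
    by_cases h : n j = 0
    · have h0 := (Finset.sum_eq_zero_iff_of_nonneg fun i _ => hπ.nonneg i j).1
        ((hπ.sum_left j).trans h) i (Finset.mem_univ i)
      simp [h, h0]
    · field_simp
  have hr : ∀ j k, n j * (ρ j k / n j) = ρ j k := fun j k => by
    by_cases h : n j = 0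
    · have h0 := (Finset.sum_eq_zero_iff_of_nonneg fun k _ => hρ.nonneg j k).1
        ((hρ.sum_right j).trans h) k (Finset.mem_univ k)
      simp [h, h0]
    · field_simp
  have sum_k : ∀ i j, ∑ k, π i j * ρ j k / n j = π i j := fun i j => by
    rw [← Finset.sum_div, ← Finset.mul_sum, hρ.sum_right, mul_div_right_comm, hl]
  have sum_i : ∀ j k, ∑ i, π i j * ρ j k / n j = ρ j k := fun j k => by
    rw [← Finset.sum_div, ← Finset.sum_mul, hπ.sum_left, mul_div_assoc, hr]
  refine ⟨fun i k => ∑ j, π i j * ρ j k / n j, ⟨?_, ?_, ?_⟩, ?_⟩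
  · exact fun i k => Finset.sum_nonneg fun j _ =>
      div_nonneg (mul_nonneg (hπ.nonneg i j) (hρ.nonneg j k)) (hn j)
  · intro i
    rw [Finset.sum_comm, ← hπ.sum_right i]
    exact Finset.sum_congr rfl fun j _ => sum_k i j
  · intro k
    rw [Finset.sum_comm, ← hρ.sum_left k]
    exact Finset.sum_congr rfl fun j _ => sum_i j k
  · intro E _ x y z
    have h1 : transportCost x y π =
        ∑ i, ∑ j, ∑ k, π i j * ρ j k / n j * dist (x i) (y j) := by
      simp only [transportCost, ← Finset.sum_mul, sum_k]
    have h2 : transportCost y z ρ =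
        ∑ i, ∑ j, ∑ k, π i j * ρ j k / n j * dist (y j) (z k) := by
      rw [Finset.sum_comm]
      refine Finset.sum_congr rfl fun j _ => ?_
      rw [Finset.sum_comm]
      refine Finset.sum_congr rfl fun k _ => ?_
      rw [← Finset.sum_mul, sum_i]
    rw [h1, h2]
    simp only [transportCost, ← Finset.sum_add_distrib, ← mul_add, Finset.sum_mul]
    refine Finset.sum_le_sum fun i _ => ?_
    rw [Finset.sum_comm]
    exact Finset.sum_le_sum fun j _ => Finset.sum_le_sum fun k _ =>
      mul_le_mul_of_nonneg_left (dist_triangle _ _ _)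
        (div_nonneg (mul_nonneg (hπ.nonneg i j) (hρ.nonneg j k)) (hn j))

end Coupling

/-- The probability measure `(1 - t) δ_fst + t δ_snd` on `E`, given by its data. -/
structure TwoPointMeasure (E : Type u) where
  fst : E
  snd : E
  t : unitInterval

namespace TwoPointMeasure

variable {E : Type u}

/-- The support points, indexed by `Bool`. -/
def point (p : TwoPointMeasure E) : Bool → E := fun b => cond b p.snd p.fst

/-- The masses of the support points. -/
def weight (p : TwoPointMeasure E) : Bool → ℝ := fun b => cond b (p.t : ℝ) (1 - p.t)

variable [MetricSpace E]

/-- The set of costs of all couplings of two measures. -/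
def costs (p q : TwoPointMeasure E) : Set ℝ :=
  {c | ∃ π, IsCoupling p.weight q.weight π ∧ transportCost p.point q.point π = c}

theorem mem_costs {p q : TwoPointMeasure E} {a b c d : ℝ} (ha : 0 ≤ a) (hb : 0 ≤ b) (hc : 0 ≤ c)
    (hd : 0 ≤ d) (hab : a + b = 1 - p.t) (hcd : c + d = p.t) (hac : a + c = 1 - q.t) :
    a * dist p.fst q.fst + b * dist p.fst q.snd + c * dist p.snd q.fst + d * dist p.snd q.snd
      ∈ costs p q := by
  refine ⟨fun i j => cond i (cond j d c) (cond j b a), ⟨?_, ?_, ?_⟩, ?_⟩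
  · rintro (_ | _) (_ | _) <;> simpa
  · rintro (_ | _) <;> simp [weight] <;> linarith
  · rintro (_ | _) <;> simp [weight] <;> linarith
  · simp [transportCost, point]
    ring

theorem exists_of_mem_costs {p q : TwoPointMeasure E} {r : ℝ} (h : r ∈ costs p q) :
    ∃ a b c d : ℝ, 0 ≤ a ∧ 0 ≤ b ∧ 0 ≤ c ∧ 0 ≤ d ∧ a + b = 1 - p.t ∧ c + d = p.t ∧
      a + c = 1 - q.t ∧ b + d = q.t ∧
      a * dist p.fst q.fst + b * dist p.fst q.snd + c * dist p.snd q.fst + d * dist p.snd q.snd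
        = r := by
  obtain ⟨π, hπ, rfl⟩ := h
  have h1 := hπ.sum_right false
  have h2 := hπ.sum_right true
  have h3 := hπ.sum_left false
  have h4 := hπ.sum_left true
  simp only [Fintype.sum_bool, weight, cond_true, cond_false] at h1 h2 h3 h4
  refine ⟨π false false, π false true, π true false, π true true, hπ.nonneg _ _, hπ.nonneg _ _,
    hπ.nonneg _ _, hπ.nonneg _ _, by linarith, by linarith, by linarith, by linarith, ?_⟩
  simp only [transportCost, point, Fintype.sum_bool, cond_true, cond_false]
  ring

theorem costs_nonempty (p q : TwoPointMeasure E) : (costs p q).Nonempty := by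
  have hp := p.t.2
  have hq := q.t.2
  refine ⟨_, mem_costs (a := (1 - p.t) * (1 - q.t)) (b := (1 - p.t) * q.t)
    (c := p.t * (1 - q.t)) (d := p.t * q.t) ?_ ?_ ?_ ?_ ?_ ?_ ?_⟩
  · exact mul_nonneg (by linarith [hp.2]) (by linarith [hq.2])
  · exact mul_nonneg (by linarith [hp.2]) hq.1
  · exact mul_nonneg hp.1 (by linarith [hq.2])
  · exact mul_nonneg hp.1 hq.1
  all_goals ring

theorem nonneg_of_mem_costs {p q : TwoPointMeasure E} {r : ℝ} (h : r ∈ costs p q) : 0 ≤ r := by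
  obtain ⟨π, hπ, rfl⟩ := h
  exact hπ.transportCost_nonneg _ _

theorem bddBelow_costs (p q : TwoPointMeasure E) : BddBelow (costs p q) :=
  ⟨0, fun _ => nonneg_of_mem_costs⟩

theorem costs_comm_subset (p q : TwoPointMeasure E) : costs p q ⊆ costs q p := by
  rintro _ ⟨π, hπ, rfl⟩
  exact ⟨_, hπ.symm, transportCost_symm _ _ _⟩

/-- The Wasserstein distance. -/
noncomputable instance : PseudoMetricSpace (TwoPointMeasure E) where
  dist p q := sInf (costs p q)
  dist_self p := by
    refine le_antisymm (csInf_le (bddBelow_costs p p) ?_)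
      (le_csInf (costs_nonempty p p) fun _ => nonneg_of_mem_costs)
    convert mem_costs (p := p) (q := p) (a := 1 - p.t) (b := 0) (c := 0) (d := p.t)
      (by linarith [p.t.2.2]) le_rfl le_rfl p.t.2.1 (by ring) (by ring) (by ring) using 1
    simp
  dist_comm p q := congrArg sInf ((costs_comm_subset p q).antisymm (costs_comm_subset q p))
  dist_triangle p q r := by
    rw [← csInf_add (costs_nonempty p q) (bddBelow_costs p q) (costs_nonempty q r)
      (bddBelow_costs q r)]
    refine le_csInf ((costs_nonempty p q).add (costs_nonempty q r)) ?_
    rintro _ ⟨_, ⟨π, hπ, rfl⟩, _, ⟨ρ, hρ, rfl⟩, rfl⟩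
    obtain ⟨τ, hτ, hle⟩ := hπ.exists_glue hρ
    exact (csInf_le (bddBelow_costs p r) ⟨τ, hτ, rfl⟩).trans (hle _ _ _)

theorem dist_le_of_mem_costs {p q : TwoPointMeasure E} {r : ℝ} (h : r ∈ costs p q) :
    dist p q ≤ r :=
  csInf_le (bddBelow_costs p q) h

theorem dist_mk_mk_le (x y x' y' : E) (t : unitInterval) :
    dist (mk x y t) (mk x' y' t) ≤ (1 - t) * dist x x' + t * dist y y' := by
  refine dist_le_of_mem_costs ?_
  convert mem_costs (p := mk x y t) (q := mk x' y' t) (a := 1 - t) (b := 0) (c := 0) (d := t)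
    (by linarith [t.2.2]) le_rfl le_rfl t.2.1 (by ring) (by ring) (by ring) using 1
  simp

theorem dist_mk_mk_le_of_le (x y : E) {s t : unitInterval} (hst : s ≤ t) :
    dist (mk x y s) (mk x y t) ≤ (t - s) * dist x y := by
  refine dist_le_of_mem_costs ?_
  have hst' : (s : ℝ) ≤ t := hst
  convert mem_costs (p := mk x y s) (q := mk x y t) (a := 1 - t) (b := t - s) (c := 0) (d := s)
    (by linarith [t.2.2]) (by linarith) le_rfl s.2.1 (by ring) (by ring) (by ring) using 1
  simp

theorem dist_mk_mk_symm (x y : E) (t : unitInterval) :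
    dist (mk x y t) (mk y x (unitInterval.symm t)) = 0 := by
  refine le_antisymm (dist_le_of_mem_costs ?_) dist_nonneg
  convert mem_costs (p := mk x y t) (q := mk y x (unitInterval.symm t)) (a := 0) (b := 1 - t)
    (c := t) (d := 0) le_rfl (by linarith [t.2.2]) t.2.1 le_rfl (by ring) (by ring) (by simp) using 1
  simp

end TwoPointMeasure

section Bicombing

variable {X : Type*} [MetricSpace X] {σ : X → X → ℝ → X}

theorem IsConical.dist_le_monotone_cost (hgeo : IsGeodesicBicombing σ) (hcon : IsConical σ)
    (x y x' y' : X) {s t : ℝ} (hs : s ∈ Set.Icc (0 : ℝ) 1) (ht : t ∈ Set.Icc (0 : ℝ) 1)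
    (hst : s ≤ t) :
    dist (σ x y s) (σ x' y' t) ≤ (1 - t) * dist x x' + (t - s) * dist x y' + s * dist y y' := by
  have h1 := hcon x y x y' s hs
  have h2 := hgeo.2.2 x y' s hs t ht
  have h3 := hcon x y' x' y' t ht
  rw [abs_sub_comm, abs_of_nonneg (sub_nonneg.2 hst)] at h2
  rw [dist_self, mul_zero] at h1 h3
  linarith [dist_triangle4 (σ x y s) (σ x y' s) (σ x y' t) (σ x' y' t)]

/-- A reversible conical bicombing is `1`-Lipschitz for the Wasserstein distance. -/
theorem IsConical.dist_le_cost (hgeo : IsGeodesicBicombing σ) (hcon : IsConical σ)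
    (hrev : IsReversible σ) (x y x' y' : X) {s t a b c d : ℝ}
    (hs : s ∈ Set.Icc (0 : ℝ) 1) (ht : t ∈ Set.Icc (0 : ℝ) 1)
    (ha : 0 ≤ a) (hb : 0 ≤ b) (hc : 0 ≤ c) (hd : 0 ≤ d)
    (hab : a + b = 1 - s) (hcd : c + d = s) (hac : a + c = 1 - t) (hbd : b + d = t) :
    dist (σ x y s) (σ x' y' t) ≤
      a * dist x x' + b * dist x y' + c * dist y x' + d * dist y y' := by
  have hs' : 1 - s ∈ Set.Icc (0 : ℝ) 1 := ⟨by linarith [hs.2], by linarith [hs.1]⟩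
  have ht' : 1 - t ∈ Set.Icc (0 : ℝ) 1 := ⟨by linarith [ht.2], by linarith [ht.1]⟩
  have parallel : dist (σ x y s) (σ x' y' t) ≤
      min (1 - s) (1 - t) * dist x x' + (t - min s t) * dist x y' + (s - min s t) * dist y x'
        + min s t * dist y y' := by
    rcases le_total s t with h | h
    · have := hcon.dist_le_monotone_cost hgeo x y x' y' hs ht h
      rw [min_eq_left h, min_eq_right (by linarith)]
      linarith
    · have := hcon.dist_le_monotone_cost hgeo x' y' x y ht hs h
      rw [min_eq_right h, min_eq_left (by linarith)]
      rw [dist_comm (σ x y s), dist_comm x x', dist_comm y x', dist_comm y y']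
      linarith
  have crossed : dist (σ x y s) (σ x' y' t) ≤
      (1 - t - min s (1 - t)) * dist x x' + min (1 - s) t * dist x y'
        + min s (1 - t) * dist y x' + (s - min s (1 - t)) * dist y y' := by
    rw [hrev x' y' t ht]
    rcases le_total s (1 - t) with h | h
    · have := hcon.dist_le_monotone_cost hgeo x y y' x' hs ht' h
      rw [min_eq_left h, min_eq_right (by linarith)]
      linarith
    · have := hcon.dist_le_monotone_cost hgeo y' x' x y ht' hs h
      rw [min_eq_right h, min_eq_left (by linarith)]
      rw [dist_comm (σ x y s), dist_comm x y', dist_comm y x', dist_comm y y']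
      linarith
  rcases le_total (dist x x' + dist y y') (dist x y' + dist y x') with h | h
  · obtain rfl : t = b + d := hbd.symm
    obtain rfl : s = c + d := hcd.symm
    rw [← hab, ← hac] at parallel
    rcases le_total b c with hbc | hbc
    · rw [min_eq_left (by linarith), min_eq_right (by linarith)] at parallel
      nlinarith [mul_nonneg hb (sub_nonneg.2 h)]
    · rw [min_eq_right (by linarith), min_eq_left (by linarith)] at parallel
      nlinarith [mul_nonneg hc (sub_nonneg.2 h)]
  · obtain rfl : t = b + d := hbd.symm
    obtain rfl : s = c + d := hcd.symm
    rw [← hab, ← hac] at crossed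
    rcases le_total a d with had | had
    · rw [min_eq_right (a := c + d) (by linarith), min_eq_left (by linarith)] at crossed
      nlinarith [mul_nonneg ha (sub_nonneg.2 h)]
    · rw [min_eq_left (a := c + d) (by linarith), min_eq_right (by linarith)] at crossed
      nlinarith [mul_nonneg hd (sub_nonneg.2 h)]

end Bicombing

/-- Extension of `1`-Lipschitz maps from an indexed family of points in a pseudometric space. -/
theorem IsInjectiveMetricSpace.exists_extension {E P : Type u} [MetricSpace E]
    [PseudoMetricSpace P] (hE : IsInjectiveMetricSpace E) {ι : Type*} (i : ι → P) (h : ι → E)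
    (hle : ∀ a b, dist (h a) (h b) ≤ dist (i a) (i b)) :
    ∃ g : P → E, (∀ p q, dist (g p) (g q) ≤ dist p q) ∧ ∀ a, g (i a) = h a := by
  let j : ι → SeparationQuotient P := fun a => SeparationQuotient.mk (i a)
  have hj : ∀ a : Set.range j, j a.2.choose = a := fun a => a.2.choose_spec
  obtain ⟨g, hg, hgA⟩ := hE (SeparationQuotient P) (Set.range j) (fun a => h a.2.choose) <| by
    refine LipschitzWith.of_dist_le_mul fun a b => ?_
    have hab : dist (j a.2.choose) (j b.2.choose) = dist a b := by
      rw [hj a, hj b, Subtype.dist_eq]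
    rw [NNReal.coe_one, one_mul, ← hab]
    exact hle _ _
  refine ⟨fun p => g (SeparationQuotient.mk p), fun p q => ?_, fun a => ?_⟩
  · exact (hg.dist_le_mul (SeparationQuotient.mk p) (SeparationQuotient.mk q)).trans_eq
      (one_mul _)
  · refine (hgA ⟨j a, a, rfl⟩).trans (dist_le_zero.1 ((hle _ _).trans ?_))
    have := hj ⟨j a, a, rfl⟩
    rw [← SeparationQuotient.dist_mk]
    exact (dist_eq_zero.2 this).le

/-- A `1`-Lipschitz self-map of the injective hull fixing the base space is the identity. -/
theorem IsInjectiveHull.eq_id_of_fixes {X E : Type u} [MetricSpace X] [MetricSpace E] {e : X → E}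
    (he : IsInjectiveHull e) {φ : E → E} (hφ : ∀ z w, dist (φ z) (φ w) ≤ dist z w)
    (hfix : ∀ x, φ (e x) = e x) (z : E) : φ z = z := by
  obtain ⟨hiso, hinj, hhull⟩ := he
  have isometry_of_fixes : ∀ g : E → E, (∀ z w, dist (g z) (g w) ≤ dist z w) →
      (∀ x, g (e x) = e x) → Isometry g := fun g hg hge =>
    hhull E g (LipschitzWith.of_dist_le_mul fun z w => by simpa using hg z w)
      (by rwa [show g ∘ e = e from funext hge])
  have hdist : ∀ x, dist (φ z) (e x) = dist z (e x) := fun x => by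
    simpa only [hfix] using (isometry_of_fixes φ hφ hfix).dist_eq z (e x)
  have hdist' : ∀ x, dist (e x) (φ z) = dist (e x) z := fun x => by
    rw [dist_comm, hdist, dist_comm]
  obtain ⟨g, hg, hgi⟩ := hinj.exists_extension
    (Sum.elim e fun b : Bool => cond b z (φ z)) (Sum.elim e fun _ => z) <| by
      rintro (x | _ | _) (y | _ | _) <;> simp [hdist, hdist']
  refine (isometry_of_fixes g hg fun x => hgi (Sum.inl x)).injective ?_
  exact (hgi (Sum.inr false)).trans (hgi (Sum.inr true)).symm

/-- The geodesic condition follows from the upper bounds on distances along the curve. -/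
theorem isGeodesicBicombing_of_dist_le {E : Type*} [MetricSpace E] {σ : E → E → ℝ → E}
    (h0 : ∀ x y, σ x y 0 = x) (h1 : ∀ x y, σ x y 1 = y)
    (hle : ∀ x y, ∀ s ∈ Set.Icc (0 : ℝ) 1, ∀ t ∈ Set.Icc (0 : ℝ) 1, s ≤ t →
      dist (σ x y s) (σ x y t) ≤ (t - s) * dist x y) :
    IsGeodesicBicombing σ := by
  have key : ∀ x y, ∀ s ∈ Set.Icc (0 : ℝ) 1, ∀ t ∈ Set.Icc (0 : ℝ) 1, s ≤ t →
      dist (σ x y s) (σ x y t) = (t - s) * dist x y := fun x y s hs t ht hst => by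
    refine le_antisymm (hle x y s hs t ht hst) ?_
    have ha := hle x y 0 (by simp) s hs hs.1
    have hb := hle x y t ht 1 (by simp) ht.2
    rw [h0] at ha
    rw [h1] at hb
    linarith [dist_triangle4 x (σ x y s) (σ x y t) y]
  refine ⟨h0, h1, fun x y s hs t ht => ?_⟩
  rcases le_total s t with hst | hst
  · rw [key x y s hs t ht hst, abs_sub_comm, abs_of_nonneg (sub_nonneg.2 hst)]
  · rw [dist_comm, key x y t ht s hs hst, abs_of_nonneg (sub_nonneg.2 hst)]

/-- **Extension of reversible conical bicombings to the injective hull.**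
If `σ` is a reversible conical geodesic bicombing on `X` and `e : X → E` is an injective hull
of `X`, then there is a reversible conical geodesic bicombing `σ'` on `E` with
`e (σ x y t) = σ' (e x) (e y) t` for all `x, y ∈ X` and `t ∈ [0,1]`. -/
theorem reversible_conical_bicombing_extends_to_injective_hull
    {X E : Type u} [MetricSpace X] [MetricSpace E] (e : X → E) (he : IsInjectiveHull e)
    (σ : X → X → ℝ → X) (hgeo : IsGeodesicBicombing σ) (hcon : IsConical σ)
    (hrev : IsReversible σ) :
    ∃ σ' : E → E → ℝ → E, IsGeodesicBicombing σ' ∧ IsConical σ' ∧ IsReversible σ' ∧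
      ∀ x y : X, ∀ t ∈ Set.Icc (0:ℝ) 1, e (σ x y t) = σ' (e x) (e y) t := by
  have hiso := he.1
  obtain ⟨g, hg, hge⟩ := he.2.1.exists_extension (P := TwoPointMeasure E)
    (fun p : X × X × unitInterval => ⟨e p.1, e p.2.1, p.2.2⟩)
    (fun p => e (σ p.1 p.2.1 p.2.2)) <| by
      rintro ⟨x, y, s⟩ ⟨x', y', t⟩
      refine le_csInf (TwoPointMeasure.costs_nonempty _ _) fun r hr => ?_
      obtain ⟨a, b, c, d, ha, hb, hc, hd, hab, hcd, hac, hbd, rfl⟩ :=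
        TwoPointMeasure.exists_of_mem_costs hr
      simp only [hiso.dist_eq]
      exact hcon.dist_le_cost hgeo hrev x y x' y' s.2 t.2 ha hb hc hd hab hcd hac hbd
  let τ : E → E → ℝ → E := fun x y t => g ⟨x, y, Set.projIcc 0 1 zero_le_one t⟩
  have hτ : ∀ x y, ∀ t (ht : t ∈ Set.Icc (0 : ℝ) 1), τ x y t = g ⟨x, y, ⟨t, ht⟩⟩ :=
    fun x y t ht => by simp only [τ, Set.projIcc_of_mem _ ht]
  have hext : ∀ x y : X, ∀ t ∈ Set.Icc (0 : ℝ) 1, e (σ x y t) = τ (e x) (e y) t :=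
    fun x y t ht => by rw [hτ _ _ t ht]; exact (hge (x, y, ⟨t, ht⟩)).symm
  have hτcon : IsConical τ := fun x y x' y' t ht => by
    rw [hτ _ _ t ht, hτ _ _ t ht]
    exact (hg _ _).trans (TwoPointMeasure.dist_mk_mk_le x y x' y' ⟨t, ht⟩)
  have hconst : ∀ x : X, ∀ t ∈ Set.Icc (0 : ℝ) 1, σ x x t = x := fun x t ht => by
    have := hgeo.2.2 x x t ht 0 (by simp)
    rwa [dist_self, mul_zero, dist_eq_zero, hgeo.1] at this
  have hdiag : ∀ z, ∀ t ∈ Set.Icc (0 : ℝ) 1, τ z z t = z := fun z t ht =>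
    he.eq_id_of_fixes (φ := fun z => τ z z t)
      (fun z w => (hτcon z z w w t ht).trans_eq (by ring))
      (fun x => by rw [← hext x x t ht, hconst x t ht]) z
  refine ⟨τ, isGeodesicBicombing_of_dist_le ?_ ?_ ?_, hτcon, ?_, hext⟩
  · intro x y
    have := hτcon x y x x 0 (by simp)
    rw [hdiag x 0 (by simp)] at this
    exact dist_le_zero.1 (this.trans_eq (by simp))
  · intro x y
    have := hτcon x y y y 1 (by simp)
    rw [hdiag y 1 (by simp)] at this
    exact dist_le_zero.1 (this.trans_eq (by simp))
  · intro x y s hs t ht hst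
    rw [hτ _ _ s hs, hτ _ _ t ht]
    exact (hg _ _).trans (TwoPointMeasure.dist_mk_mk_le_of_le x y hst)
  · intro x y t ht
    rw [hτ _ _ t ht, hτ _ _ (1 - t) (unitInterval.symm ⟨t, ht⟩).2]
    exact dist_le_zero.1 ((hg _ _).trans_eq (TwoPointMeasure.dist_mk_mk_symm x y ⟨t, ht⟩))
end

section
/- Let (X,d) be a complete metric space. Then X admits a conical geodesic bicombing if and only if X admits a contracting barycenter map β : P₁(X) → X. -/
open scoped ENNReal

/-- The first Wasserstein distance between two (probability) measures: the infimum of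
`∫ d(x,y) dγ` over all couplings `γ` of the pair, i.e. probability measures on `X × X`
with first marginal `μ` and second marginal `ν`. -/
noncomputable def W1 {X : Type*} [MetricSpace X] [MeasurableSpace X]
    (μ ν : MeasureTheory.Measure X) : ℝ≥0∞ :=
  ⨅ (γ : MeasureTheory.Measure (X × X)) (_ : MeasureTheory.IsProbabilityMeasure γ ∧
      γ.map Prod.fst = μ ∧ γ.map Prod.snd = ν),
    ∫⁻ p, edist p.1 p.2 ∂γ

/-- Membership in `P₁(X)`: a Radon probability measure with finite first moment. -/
def MemP1 {X : Type*} [MetricSpace X] [MeasurableSpace X]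
    (μ : MeasureTheory.Measure X) : Prop :=
  MeasureTheory.IsProbabilityMeasure μ ∧ μ.InnerRegular ∧
    ∀ x₀ : X, (∫⁻ x, edist x x₀ ∂μ) ≠ ⊤

/-- `P₁(X)`: the space of Radon probability measures on `X` with finite first moment. -/
abbrev P1 (X : Type*) [MetricSpace X] [MeasurableSpace X] : Type _ :=
  {μ : MeasureTheory.Measure X // MemP1 μ}

/-- A contracting barycenter map: a `1`-Lipschitz map `β : P₁(X) → X` (with respect to the
first Wasserstein distance) such that `β δ_x = x` for every `x`. -/
def IsContractingBarycenter {X : Type*} [MetricSpace X] [MeasurableSpace X]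
    (β : P1 X → X) : Prop :=
  (∀ μ ν : P1 X, edist (β μ) (β ν) ≤ W1 μ.1 ν.1) ∧
    ∀ (x : X) (μ : P1 X), μ.1 = MeasureTheory.Measure.dirac x → β μ = x

open MeasureTheory in
lemma W1_le_of_coupling {X : Type*} [MetricSpace X] [MeasurableSpace X] {μ ν : Measure X}
    (γ : Measure (X × X)) [IsProbabilityMeasure γ] (h₁ : γ.map Prod.fst = μ)
    (h₂ : γ.map Prod.snd = ν) : W1 μ ν ≤ ∫⁻ p, edist p.1 p.2 ∂γ :=
  iInf₂_le γ ⟨inferInstance, h₁, h₂⟩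

/-- The measure `(1 - t) δ_x + t δ_y`. -/
noncomputable def twoPoint {X : Type*} [MeasurableSpace X] (x y : X) (t : ℝ) :
    MeasureTheory.Measure X :=
  ENNReal.ofReal (1 - t) • MeasureTheory.Measure.dirac x +
    ENNReal.ofReal t • MeasureTheory.Measure.dirac y

section TwoPoint

open MeasureTheory Set

variable {X : Type*} [MetricSpace X] [MeasurableSpace X] [BorelSpace X]

lemma isProbabilityMeasure_twoPoint {Y : Type*} [MeasurableSpace Y] (x y : Y) {t : ℝ}
    (ht : t ∈ Icc (0 : ℝ) 1) : IsProbabilityMeasure (twoPoint x y t) := by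
  constructor
  simp [twoPoint, ← ENNReal.ofReal_add (sub_nonneg.2 ht.2) ht.1]

lemma innerRegular_dirac (x : X) : (Measure.dirac x).InnerRegular := by
  refine ⟨fun s hs r hr => ?_⟩
  by_cases hx : x ∈ s
  · exact ⟨{x}, by simpa using hx, isCompact_singleton, by simpa [hx] using hr⟩
  · simp [hx] at hr

lemma memP1_twoPoint (x y : X) {t : ℝ} (ht : t ∈ Icc (0 : ℝ) 1) : MemP1 (twoPoint x y t) := by
  have := innerRegular_dirac x
  have := innerRegular_dirac y
  refine ⟨isProbabilityMeasure_twoPoint x y ht, by unfold twoPoint; infer_instance, fun z => ?_⟩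
  simp [twoPoint, ENNReal.mul_eq_top, edist_ne_top]

lemma W1_twoPoint_le_conical (x y x' y' : X) {t : ℝ} (ht : t ∈ Icc (0 : ℝ) 1) :
    W1 (twoPoint x y t) (twoPoint x' y' t) ≤
      ENNReal.ofReal ((1 - t) * dist x x' + t * dist y y') := by
  have := isProbabilityMeasure_twoPoint (x, x') (y, y') ht
  have h1 := sub_nonneg.2 ht.2
  refine (W1_le_of_coupling (twoPoint (x, x') (y, y') t) ?_ ?_).trans_eq ?_
  · simp [twoPoint, Measure.map_add _ _ measurable_fst, Measure.map_dirac' measurable_fst]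
  · simp [twoPoint, Measure.map_add _ _ measurable_snd, Measure.map_dirac' measurable_snd]
  · simp only [twoPoint, lintegral_add_measure, lintegral_smul_measure, lintegral_dirac,
      smul_eq_mul, edist_dist]
    rw [ENNReal.ofReal_add (mul_nonneg h1 dist_nonneg) (mul_nonneg ht.1 dist_nonneg),
      ENNReal.ofReal_mul h1, ENNReal.ofReal_mul ht.1]

lemma W1_twoPoint_le_geodesic (x y : X) {s t : ℝ} (hs : 0 ≤ s) (hst : s ≤ t) (ht : t ≤ 1) :
    W1 (twoPoint x y s) (twoPoint x y t) ≤ ENNReal.ofReal ((t - s) * dist x y) := by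
  have h1 := sub_nonneg.2 ht
  have h2 := sub_nonneg.2 hst
  let γ : Measure (X × X) := ENNReal.ofReal (1 - t) • Measure.dirac (x, x) +
    (ENNReal.ofReal s • Measure.dirac (y, y) + ENNReal.ofReal (t - s) • Measure.dirac (x, y))
  have : IsProbabilityMeasure γ := by
    constructor
    simp only [γ, Measure.coe_add, Pi.add_apply, Measure.smul_apply, measure_univ, smul_eq_mul,
      mul_one]
    rw [← ENNReal.ofReal_add hs h2, ← ENNReal.ofReal_add h1 (by linarith)]
    simp
  refine (W1_le_of_coupling γ ?_ ?_).trans_eq ?_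
  · simp only [γ, twoPoint, Measure.map_add _ _ measurable_fst, Measure.map_smul,
      Measure.map_dirac' measurable_fst]
    rw [show 1 - s = (1 - t) + (t - s) by ring, ENNReal.ofReal_add h1 h2, add_smul]
    abel
  · simp only [γ, twoPoint, Measure.map_add _ _ measurable_snd, Measure.map_smul,
      Measure.map_dirac' measurable_snd]
    conv_rhs => rw [show t = s + (t - s) by ring, ENNReal.ofReal_add hs h2, add_smul]
    simp
  · simp [γ, lintegral_add_measure, edist_dist, ENNReal.ofReal_mul h2]

open Classical in
/-- The curve `t ↦ β ((1 - t) δ_x + t δ_y)`. -/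
noncomputable def barycenterBicombing (β : P1 X → X) (x y : X) (t : ℝ) : X :=
  if ht : t ∈ Icc (0 : ℝ) 1 then β ⟨twoPoint x y t, memP1_twoPoint x y ht⟩ else x

lemma IsContractingBarycenter.exists_bicombing {β : P1 X → X} (hβ : IsContractingBarycenter β) :
    ∃ σ : X → X → ℝ → X, IsGeodesicBicombing σ ∧ IsConical σ := by
  refine ⟨barycenterBicombing β, ⟨fun x y => ?_, fun x y => ?_, fun x y s hs t ht => ?_⟩,
    fun x y x' y' t ht => ?_⟩
  · simp only [barycenterBicombing, left_mem_Icc, zero_le_one, dite_true]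
    exact hβ.2 x _ (by simp [twoPoint])
  · simp only [barycenterBicombing, right_mem_Icc, zero_le_one, dite_true]
    exact hβ.2 y _ (by simp [twoPoint])
  · have key : ∀ s t : ℝ, 0 ≤ s → s ≤ t → t ≤ 1 →
        dist (barycenterBicombing β x y s) (barycenterBicombing β x y t) ≤
          (t - s) * dist x y := by
      intro s t hs hst ht
      have h1 : s ∈ Icc (0 : ℝ) 1 := ⟨hs, hst.trans ht⟩
      have h2 : t ∈ Icc (0 : ℝ) 1 := ⟨hs.trans hst, ht⟩
      simp only [barycenterBicombing, h1, h2, dite_true]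
      have := (hβ.1 ⟨_, memP1_twoPoint x y h1⟩ ⟨_, memP1_twoPoint x y h2⟩).trans
        (W1_twoPoint_le_geodesic x y hs hst ht)
      rwa [edist_dist, ENNReal.ofReal_le_ofReal_iff
        (mul_nonneg (sub_nonneg.2 hst) dist_nonneg)] at this
    have e0 : barycenterBicombing β x y 0 = x := by
      simp only [barycenterBicombing, left_mem_Icc, zero_le_one, dite_true]
      exact hβ.2 x _ (by simp [twoPoint])
    have e1 : barycenterBicombing β x y 1 = y := by
      simp only [barycenterBicombing, right_mem_Icc, zero_le_one, dite_true]
      exact hβ.2 y _ (by simp [twoPoint])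
    have eq : ∀ s t : ℝ, 0 ≤ s → s ≤ t → t ≤ 1 →
        dist (barycenterBicombing β x y s) (barycenterBicombing β x y t) =
          (t - s) * dist x y := by
      intro s t hs hst ht
      have h1 := key 0 s le_rfl hs (hst.trans ht)
      have h2 := key s t hs hst ht
      have h3 := key t 1 (hs.trans hst) ht le_rfl
      rw [e0] at h1
      rw [e1] at h3
      have := dist_triangle4 x (barycenterBicombing β x y s) (barycenterBicombing β x y t) y
      linarith
    rcases le_total s t with hst | hst
    · rw [eq s t hs.1 hst ht.2, abs_sub_comm, abs_of_nonneg (sub_nonneg.2 hst)]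
    · rw [dist_comm, eq t s ht.1 hst hs.2, abs_of_nonneg (sub_nonneg.2 hst)]
  · simp only [barycenterBicombing, ht, dite_true]
    have := (hβ.1 ⟨_, memP1_twoPoint x y ht⟩ ⟨_, memP1_twoPoint x' y' ht⟩).trans
      (W1_twoPoint_le_conical x y x' y' ht)
    rwa [edist_dist, ENNReal.ofReal_le_ofReal_iff (add_nonneg
      (mul_nonneg (sub_nonneg.2 ht.2) dist_nonneg) (mul_nonneg ht.1 dist_nonneg))] at this

end TwoPoint

section Multiset

open Filter Topology

variable {X : Type*}

lemma Multiset.exists_map_fst_map_snd {U V : Multiset X} (h : U.card = V.card) :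
    ∃ p : Multiset (X × X), p.map Prod.fst = U ∧ p.map Prod.snd = V := by
  induction U using Quotient.inductionOn with | _ l
  induction V using Quotient.inductionOn with | _ l'
  simp only [Multiset.quot_mk_to_coe, Multiset.coe_card] at h ⊢
  exact ⟨(l.zip l' : List (X × X)), by simp [List.map_fst_zip h.le],
    by simp [List.map_snd_zip h.ge]⟩

/-- Replace every point `a` of `y` by the value of `F` at `a` and the remaining points. -/
def reshuffle [DecidableEq X] (F : X → Multiset X → X) (y : Multiset X) : Multiset X :=
  y.map fun a => F a (y.erase a)

/-- The effect of `reshuffle` on matched pairs. -/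
def reshufflePairs [DecidableEq X] (F : X → Multiset X → X) (p : Multiset (X × X)) :
    Multiset (X × X) :=
  p.map fun q => (F q.1 ((p.map Prod.fst).erase q.1), F q.2 ((p.map Prod.snd).erase q.2))

variable [DecidableEq X] {F : X → Multiset X → X}

@[simp] lemma card_reshuffle (y : Multiset X) : (reshuffle F y).card = y.card := by
  simp [reshuffle]

@[simp] lemma card_reshuffle_iterate (y : Multiset X) (k : ℕ) :
    ((reshuffle F)^[k] y).card = y.card := by
  induction k generalizing y with
  | zero => rfl
  | succ k ih => rw [Function.iterate_succ_apply, ih, card_reshuffle]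

@[simp] lemma card_reshufflePairs_iterate (p : Multiset (X × X)) (k : ℕ) :
    ((reshufflePairs F)^[k] p).card = p.card := by
  induction k generalizing p with
  | zero => rfl
  | succ k ih => rw [Function.iterate_succ_apply, ih]; simp [reshufflePairs]

lemma map_fst_reshufflePairs_iterate (p : Multiset (X × X)) (k : ℕ) :
    ((reshufflePairs F)^[k] p).map Prod.fst = (reshuffle F)^[k] (p.map Prod.fst) := by
  induction k generalizing p with
  | zero => rfl
  | succ k ih =>
    rw [Function.iterate_succ_apply, ih, Function.iterate_succ_apply]
    simp [reshufflePairs, reshuffle, Multiset.map_map]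

lemma map_snd_reshufflePairs_iterate (p : Multiset (X × X)) (k : ℕ) :
    ((reshufflePairs F)^[k] p).map Prod.snd = (reshuffle F)^[k] (p.map Prod.snd) := by
  induction k generalizing p with
  | zero => rfl
  | succ k ih =>
    rw [Function.iterate_succ_apply, ih, Function.iterate_succ_apply]
    simp [reshufflePairs, reshuffle, Multiset.map_map]

lemma reshuffle_replicate {n : ℕ} (hrep : ∀ a, F a (Multiset.replicate n a) = a) (a : X) :
    reshuffle F (Multiset.replicate (n + 1) a) = Multiset.replicate (n + 1) a := by
  rw [reshuffle, Multiset.map_replicate]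
  congr 1
  rw [Multiset.replicate_succ, Multiset.erase_cons_head, hrep]

/-- The squared distance between the frequencies of `y` and the weights `π`. -/
noncomputable def frequencyDefect (A : Finset X) (π : X → ℝ) (y : Multiset X) : ℝ :=
  ∑ c ∈ A, (y.count c / y.card - π c) ^ 2

lemma sum_map_count_erase (y : Multiset X) (c : X) (f : ℕ → ℝ) :
    (y.map fun a => f ((y.erase a).count c)).sum =
      y.count c * f (y.count c - 1) + (y.card - y.count c) * f (y.count c) := by
  have h : ∀ a, f ((y.erase a).count c) =
      if a = c then f (y.count c - 1) else f (y.count c) := by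
    intro a
    split_ifs with h
    · rw [h, Multiset.count_erase_self]
    · rw [Multiset.count_erase_of_ne (Ne.symm h)]
  have h' : ∀ z : Multiset X, ∀ u v : ℝ, (z.map fun a => if a = c then u else v).sum =
      z.count c * u + (z.card - z.count c) * v := by
    intro z u v
    induction z using Multiset.induction_on with
    | empty => simp
    | cons a z ih =>
      rw [Multiset.map_cons, Multiset.sum_cons, ih, Multiset.card_cons, Multiset.count_cons]
      by_cases hac : a = c
      · simp [hac]; ring
      · simp [hac, Ne.symm hac]; ring
  simp only [h, h']

lemma sum_frequencyDefect_erase_le (A : Finset X) (π : X → ℝ) {y : Multiset X} {K : ℕ}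
    (hK : 1 ≤ K) (hy : y.card = K + 1) (hA : ∀ a ∈ y, a ∈ A) :
    (y.map fun a => frequencyDefect A π (y.erase a)).sum ≤
      (K + 1) * (frequencyDefect A π y + 1 / K ^ 2) := by
  have hK0 : (0 : ℝ) < K := by exact_mod_cast hK
  have e : (y.map fun a => frequencyDefect A π (y.erase a)) =
      y.map fun a => ∑ c ∈ A, (((y.erase a).count c : ℝ) / K - π c) ^ 2 :=
    Multiset.map_congr rfl fun a ha => by
      rw [frequencyDefect, Multiset.card_erase_of_mem ha, hy]; rfl
  rw [e, Multiset.sum_map_sum]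
  have h : ∀ c ∈ A, (y.map fun a => (((y.erase a).count c : ℝ) / K - π c) ^ 2).sum ≤
      (K + 1) * (y.count c / y.card - π c) ^ 2 + y.count c * (1 / K ^ 2) := by
    intro c _
    rw [sum_map_count_erase y c (fun n => ((n : ℝ) / K - π c) ^ 2), hy]
    rcases Nat.eq_zero_or_pos (y.count c) with h0 | h0
    · rw [h0]; simp
    · rw [Nat.cast_pred h0]
      push_cast
      generalize (y.count c : ℝ) = x
      have : x * ((x - 1) / K - π c) ^ 2 + ((K : ℝ) + 1 - x) * (x / K - π c) ^ 2 =
          (K + 1) * (x / (K + 1) - π c) ^ 2 + x * (1 / K ^ 2) - x ^ 2 / ((K + 1) * K ^ 2) := by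
        field_simp
        ring
      rw [this]
      have : 0 ≤ x ^ 2 / (((K : ℝ) + 1) * K ^ 2) := by positivity
      linarith
  refine (Finset.sum_le_sum h).trans_eq ?_
  rw [Finset.sum_add_distrib, ← Finset.mul_sum, ← Finset.sum_mul, ← Nat.cast_sum,
    Multiset.sum_count_eq_card hA, hy, frequencyDefect, hy]
  push_cast
  ring

lemma abs_le_add_sq_div {δ : ℝ} (hδ : 0 < δ) (t : ℝ) : |t| ≤ δ + t ^ 2 / δ := by
  rw [← sub_nonneg, show δ + t ^ 2 / δ - |t| = (δ ^ 2 + t ^ 2 - |t| * δ) / δ by field_simp]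
  refine div_nonneg ?_ hδ.le
  nlinarith [sq_abs t, sq_nonneg (|t| - δ), abs_nonneg t]

lemma frequencyDefect_nsmul (A : Finset X) {s : Multiset X} (hs : s ≠ 0) {k r : ℕ} (hk : k ≠ 0)
    (hr : r ≠ 0) :
    frequencyDefect A (fun a => ((r • s).count a : ℝ) / (r * s.card : ℕ)) (k • s) = 0 := by
  have hs0 : (s.card : ℝ) ≠ 0 := by simpa using hs
  have hk0 : (k : ℝ) ≠ 0 := by exact_mod_cast hk
  have hr0 : (r : ℝ) ≠ 0 := by exact_mod_cast hr
  refine Finset.sum_eq_zero fun a _ => ?_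
  simp only [Multiset.count_nsmul, Multiset.card_nsmul]
  push_cast
  rw [mul_div_mul_left _ _ hk0, mul_div_mul_left _ _ hr0, sub_self]
  simp

variable [MetricSpace X]

/-- All points of the iterated reshufflings of `y` converge to `c`. -/
def ReshuffleLimit (F : X → Multiset X → X)
    (y : Multiset X) (c : X) : Prop :=
  ∀ ε > 0, ∀ᶠ k in atTop, ∀ z ∈ (reshuffle F)^[k] y, dist z c ≤ ε

/-- A map on multisets of cardinality `n` which fixes points and is `1`-Lipschitz for the
normalized matching distance. -/
def IsContractingOn (n : ℕ) (b : Multiset X → X) : Prop :=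
  (∀ a, b (Multiset.replicate n a) = a) ∧
    ∀ p : Multiset (X × X), p.card = n →
      n * dist (b (p.map Prod.fst)) (b (p.map Prod.snd)) ≤ (p.map fun q => dist q.1 q.2).sum

lemma ReshuffleLimit.unique {y : Multiset X} (hy : y.card ≠ 0) {c c' : X}
    (h : ReshuffleLimit F y c) (h' : ReshuffleLimit F y c') : c = c' := by
  refine dist_le_zero.1 (le_of_forall_pos_le_add fun ε hε => ?_)
  obtain ⟨k, hk, hk'⟩ := ((h (ε / 2) (half_pos hε)).and (h' (ε / 2) (half_pos hε))).exists
  obtain ⟨z, hz⟩ : ∃ z, z ∈ (reshuffle F)^[k] y :=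
    Multiset.card_pos_iff_exists_mem.1 (by rw [card_reshuffle_iterate]; omega)
  have := dist_triangle_left c c' z
  linarith [hk z hz, hk' z hz]

lemma ReshuffleLimit.of_reshuffle {y : Multiset X} {c : X}
    (h : ReshuffleLimit F (reshuffle F y) c) : ReshuffleLimit F y c := by
  intro ε hε
  obtain ⟨N, hN⟩ := eventually_atTop.1 (h ε hε)
  refine eventually_atTop.2 ⟨N + 1, fun k hk => ?_⟩
  obtain ⟨j, rfl⟩ := Nat.exists_eq_add_of_le' (show 1 ≤ k by omega)
  rw [Function.iterate_succ_apply]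
  exact hN j (by omega)

lemma reshuffleLimit_replicate {n : ℕ} (hrep : ∀ a, F a (Multiset.replicate n a) = a) (a : X) :
    ReshuffleLimit F (Multiset.replicate (n + 1) a) a := by
  intro ε hε
  refine Eventually.of_forall fun k z hz => ?_
  rw [Function.iterate_fixed (reshuffle_replicate hrep a)] at hz
  rw [Multiset.eq_of_mem_replicate hz, dist_self]
  exact hε.le

lemma sum_dist_reshufflePairs_iterate_le {n : ℕ}
    (hsum : ∀ p : Multiset (X × X), p.card = n →
      ((reshufflePairs F p).map fun q => dist q.1 q.2).sum ≤ (p.map fun q => dist q.1 q.2).sum)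
    (p : Multiset (X × X)) (hp : p.card = n) (k : ℕ) :
    (((reshufflePairs F)^[k] p).map fun q => dist q.1 q.2).sum ≤
      (p.map fun q => dist q.1 q.2).sum := by
  induction k with
  | zero => rfl
  | succ k ih =>
    rw [Function.iterate_succ_apply']
    exact (hsum _ (by simpa using hp)).trans ih

lemma dist_le_of_mem_reshuffle {n : ℕ} (hrep : ∀ a, F a (Multiset.replicate n a) = a)
    (hsum : ∀ p : Multiset (X × X), p.card = n + 1 →
      ((reshufflePairs F p).map fun q => dist q.1 q.2).sum ≤ (p.map fun q => dist q.1 q.2).sum)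
    {y : Multiset X} (hy : y.card = n + 1) {D : ℝ} (hD : ∀ a ∈ y, ∀ c ∈ y, dist a c ≤ D)
    {a c : X} (ha : a ∈ reshuffle F y) (hc : c ∈ y) : dist a c ≤ (n + 1) * D := by
  have h := hsum (y.map fun u => (u, c)) (by simpa using hy)
  have e : (y.map fun _ => c).erase c = Multiset.replicate n c := by
    rw [Multiset.map_const', hy, Multiset.replicate_succ, Multiset.erase_cons_head]
  simp only [reshufflePairs, Multiset.map_map, Function.comp_def, Multiset.map_id', e, hrep] at h
  obtain ⟨u, hu, rfl⟩ := Multiset.mem_map.1 ha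
  have h1 : dist (F u (y.erase u)) c ≤ (y.map fun u => dist (F u (y.erase u)) c).sum :=
    Multiset.single_le_sum (by simp [dist_nonneg]) _ (Multiset.mem_map_of_mem _ hu)
  have h2 : (y.map fun u => dist u c).sum ≤ y.card • D := by
    rw [← Multiset.card_map (fun u => dist u c) y]
    refine Multiset.sum_le_card_nsmul _ _ fun x hx => ?_
    obtain ⟨u, hu, rfl⟩ := Multiset.mem_map.1 hx
    exact hD u hu c hc
  rw [hy, nsmul_eq_mul] at h2
  push_cast at h2
  linarith

lemma exists_reshuffleLimit [CompleteSpace X] {n : ℕ}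
    (hrep : ∀ a, F a (Multiset.replicate n a) = a)
    (hsum : ∀ p : Multiset (X × X), p.card = n + 1 →
      ((reshufflePairs F p).map fun q => dist q.1 q.2).sum ≤ (p.map fun q => dist q.1 q.2).sum)
    (hdiam : ∀ a c r, (a ::ₘ c ::ₘ r).card = n + 1 →
      dist (F a (c ::ₘ r)) (F c (a ::ₘ r)) ≤ 1 / 2 * dist a c)
    {y : Multiset X} (hy : y.card = n + 1) : ∃ c, ReshuffleLimit F y c := by
  obtain ⟨D, hD0, hD⟩ : ∃ D : ℝ, 0 ≤ D ∧ ∀ a ∈ y, ∀ c ∈ y, dist a c ≤ D := by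
    have hb := (y.toFinset.finite_toSet).isBounded
    refine ⟨Metric.diam (y.toFinset : Set X), Metric.diam_nonneg, fun a ha c hc => ?_⟩
    exact Metric.dist_le_diam_of_mem hb (by simpa using ha) (by simpa using hc)
  have hDk : ∀ k : ℕ, ∀ a ∈ (reshuffle F)^[k] y, ∀ c ∈ (reshuffle F)^[k] y,
      dist a c ≤ D * (1 / 2) ^ k := by
    intro k
    induction k with
    | zero => simpa using hD
    | succ k ih =>
      rw [Function.iterate_succ_apply']
      intro a ha c hc
      obtain ⟨u, hu, rfl⟩ := Multiset.mem_map.1 ha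
      obtain ⟨v, hv, rfl⟩ := Multiset.mem_map.1 hc
      rcases eq_or_ne u v with rfl | huv
      · simp only [dist_self]; positivity
      · obtain ⟨r, hr⟩ := Multiset.exists_cons_of_mem hu
        have hv' : v ∈ r := by
          rw [hr] at hv
          exact (Multiset.mem_cons.1 hv).resolve_left huv.symm
        obtain ⟨r', rfl⟩ := Multiset.exists_cons_of_mem hv'
        have hcard := congrArg Multiset.card hr
        rw [card_reshuffle_iterate, hy] at hcard
        have huv' := ih u hu v hv
        rw [hr, Multiset.erase_cons_head, Multiset.cons_swap, Multiset.erase_cons_head]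
        refine (hdiam u v r' hcard.symm).trans ?_
        rw [pow_succ]
        linarith
  have hne : ∀ k, ∃ z, z ∈ (reshuffle F)^[k] y := fun k =>
    Multiset.card_pos_iff_exists_mem.1 (by rw [card_reshuffle_iterate]; omega)
  choose z hz using hne
  have hzz : ∀ k, dist (z k) (z (k + 1)) ≤ ((n + 1) * D) * (1 / 2) ^ k := by
    intro k
    have h := hz (k + 1)
    rw [Function.iterate_succ_apply'] at h
    rw [dist_comm, mul_assoc]
    exact dist_le_of_mem_reshuffle hrep hsum (by simpa using hy) (hDk k) h (hz k)
  obtain ⟨c, hc⟩ := cauchySeq_tendsto_of_complete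
    (cauchySeq_of_le_geometric (1 / 2) _ (by norm_num) hzz)
  refine ⟨c, fun ε hε => ?_⟩
  have h1 : Tendsto (fun k : ℕ => D * (1 / 2 : ℝ) ^ k) atTop (𝓝 0) := by
    simpa using (tendsto_pow_atTop_nhds_zero_of_lt_one (r := (1 / 2 : ℝ)) (by norm_num)
      (by norm_num)).const_mul D
  filter_upwards [Metric.tendsto_nhds.1 hc (ε / 2) (half_pos hε),
    h1.eventually_lt_const (half_pos hε)] with k hk hk' w hw
  have := dist_triangle w (z k) c
  linarith [hDk k w hw (z k) (hz k)]

/-- Iterated reshuffling produces a contracting map on multisets of cardinality `n + 1`. -/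
lemma exists_isContractingOn_succ [CompleteSpace X] [Nonempty X] {n : ℕ}
    (hrep : ∀ a, F a (Multiset.replicate n a) = a)
    (hsum : ∀ p : Multiset (X × X), p.card = n + 1 →
      ((reshufflePairs F p).map fun q => dist q.1 q.2).sum ≤ (p.map fun q => dist q.1 q.2).sum)
    (hdiam : ∀ a c r, (a ::ₘ c ::ₘ r).card = n + 1 →
      dist (F a (c ::ₘ r)) (F c (a ::ₘ r)) ≤ 1 / 2 * dist a c) :
    ∃ b, IsContractingOn (n + 1) b ∧
      ∀ y : Multiset X, y.card = n + 1 → b (reshuffle F y) = b y := by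
  have hex : ∀ y : Multiset X, ∃ c, y.card = n + 1 → ReshuffleLimit F y c := by
    intro y
    by_cases hy : y.card = n + 1
    · obtain ⟨c, hc⟩ := exists_reshuffleLimit hrep hsum hdiam hy
      exact ⟨c, fun _ => hc⟩
    · exact ⟨Classical.arbitrary X, fun h => (hy h).elim⟩
  choose b hb using hex
  refine ⟨b, ⟨fun a => ?_, fun p hp => ?_⟩, fun y hy => ?_⟩
  · exact (hb _ (by simp)).unique (by simp) (reshuffleLimit_replicate hrep a)
  · refine le_of_forall_pos_le_add fun ε hε => ?_
    have hn : (0 : ℝ) < n + 1 := by positivity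
    have hδ : 0 < ε / (2 * (n + 1)) := by positivity
    obtain ⟨k, hk, hk'⟩ := ((hb (p.map Prod.fst) (by simpa using hp) _ hδ).and
      (hb (p.map Prod.snd) (by simpa using hp) _ hδ)).exists
    rw [← map_fst_reshufflePairs_iterate] at hk
    rw [← map_snd_reshufflePairs_iterate] at hk'
    set c := b (p.map Prod.fst)
    set c' := b (p.map Prod.snd)
    have h1 : (((reshufflePairs F)^[k] p).map fun _ => dist c c').sum ≤
        (((reshufflePairs F)^[k] p).map fun q => dist q.1 q.2 + ε / (n + 1)).sum := by
      refine Multiset.sum_map_le_sum_map _ _ fun q hq => ?_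
      have e1 := hk q.1 (Multiset.mem_map_of_mem _ hq)
      have e2 := hk' q.2 (Multiset.mem_map_of_mem _ hq)
      have e3 := dist_triangle4 c q.1 q.2 c'
      rw [dist_comm] at e1
      have : ε / (n + 1) = ε / (2 * (n + 1)) + ε / (2 * (n + 1)) := by field_simp; norm_num
      linarith
    have h2 := sum_dist_reshufflePairs_iterate_le hsum p hp k
    simp only [Multiset.sum_map_add, Multiset.map_const', Multiset.sum_replicate,
      card_reshufflePairs_iterate, hp, nsmul_eq_mul] at h1
    push_cast at h1 ⊢
    rw [mul_div_cancel₀ _ hn.ne'] at h1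
    linarith
  · exact ((hb _ (by simpa using hy)).of_reshuffle).unique (by omega) (hb y hy)

/-- A conical bicombing yields a contracting map on pairs. -/
lemma exists_isContractingOn_two [CompleteSpace X] [Nonempty X] {σ : X → X → ℝ → X}
    (hσ : IsGeodesicBicombing σ) (hc : IsConical σ) : ∃ b, IsContractingOn (X := X) 2 b := by
  obtain ⟨b, hb⟩ : ∃ b : Multiset X → X, ∀ a, b {a} = a := by
    classical
    exact ⟨fun y => if h : ∃ a, y = {a} then h.choose else Classical.arbitrary X, fun a => by simp⟩
  have half : (1 / 2 : ℝ) ∈ Set.Icc (0 : ℝ) 1 := by norm_num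
  have self : ∀ a, σ a a (1 / 2) = a := fun a => by
    have := hσ.2.2 a a (1 / 2) half 0 (by simp)
    simpa [hσ.1] using this
  have cone : ∀ a c a' c', dist (σ a c (1 / 2)) (σ a' c' (1 / 2)) ≤
      1 / 2 * dist a a' + 1 / 2 * dist c c' := fun a c a' c' => by
    have := hc a c a' c' _ half
    linarith
  obtain ⟨b₂, h, -⟩ := exists_isContractingOn_succ (n := 1) (F := fun a r => σ a (b r) (1 / 2))
    (fun a => by rw [Multiset.replicate_one, hb, self])
    (fun p hp => by
      obtain ⟨q, r, rfl⟩ := Multiset.card_eq_two.1 hp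
      have e : ∀ a c : X, (a ::ₘ {c}).erase c = {a} := fun a c => by
        rw [← Multiset.insert_eq_cons, Multiset.pair_comm, Multiset.insert_eq_cons,
          Multiset.erase_cons_head]
      simp only [reshufflePairs, Multiset.insert_eq_cons, Multiset.map_cons,
        Multiset.map_singleton, Multiset.erase_cons_head, e, hb, Multiset.sum_cons,
        Multiset.sum_singleton]
      linarith [cone q.1 r.1 q.2 r.2, cone r.1 q.1 r.2 q.2])
    (fun a c r hr => by
      obtain rfl : r = 0 := by simpa using hr
      simp only [Multiset.cons_zero, hb]
      have h1 := cone a c (σ c a (1 / 2)) (σ c a (1 / 2))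
      have h2 := cone a a c a
      have h3 := cone c c c a
      simp only [self, dist_self] at h1 h2 h3
      rw [dist_comm c a] at h3
      linarith)
  exact ⟨b₂, h⟩

/-- Averaging a contracting map over the submultisets omitting one point. -/
lemma IsContractingOn.exists_succ [CompleteSpace X] [Nonempty X] {n : ℕ} (hn : 2 ≤ n)
    {b : Multiset X → X} (hb : IsContractingOn n b) :
    ∃ b', IsContractingOn (n + 1) b' ∧ ∀ y : Multiset X, y.card = n + 1 → ∀ z,
      (n + 1) * dist (b' y) z ≤ (y.map fun a => dist (b (y.erase a)) z).sum := by
  have hn0 : (0 : ℝ) < n := by positivity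
  obtain ⟨b', hb', h⟩ := exists_isContractingOn_succ (n := n) (F := fun _ r => b r)
    (fun a => hb.1 a)
    (fun p hp => by
      simp only [reshufflePairs, Multiset.map_map, Function.comp_def]
      have h1 : (p.map fun q => dist (b ((p.map Prod.fst).erase q.1))
          (b ((p.map Prod.snd).erase q.2))).sum ≤ (p.map fun q => (n : ℝ)⁻¹ *
            ((p.map fun q => dist q.1 q.2).sum - dist q.1 q.2)).sum := by
        refine Multiset.sum_map_le_sum_map _ _ fun q hq => ?_
        have h2 := hb.2 (p.erase q) (by rw [Multiset.card_erase_of_mem hq, hp]; rfl)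
        rw [Multiset.map_erase_of_mem _ _ hq, Multiset.map_erase_of_mem _ _ hq] at h2
        have h3 : ((p.erase q).map fun q => dist q.1 q.2).sum =
            (p.map fun q => dist q.1 q.2).sum - dist q.1 q.2 := by
          conv_rhs => rw [← Multiset.cons_erase hq]
          simp
        rw [h3] at h2
        rwa [le_inv_mul_iff₀ hn0]
      refine h1.trans_eq ?_
      rw [Multiset.sum_map_mul_left, Multiset.sum_map_sub, Multiset.map_const',
        Multiset.sum_replicate, hp, nsmul_eq_mul]
      push_cast
      field_simp
      ring)
    (fun a c r hr => by
      have h1 := hb.2 ((c, a) ::ₘ r.map fun u => (u, u)) (by simpa using hr)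
      simp only [Multiset.map_cons, Multiset.map_map, Function.comp_def, Multiset.map_id',
        dist_self, Multiset.map_const', Multiset.sum_cons, Multiset.sum_replicate, smul_zero,
        add_zero] at h1
      rw [dist_comm c a] at h1
      have : (2 : ℝ) ≤ n := by exact_mod_cast hn
      nlinarith [dist_nonneg (x := b (c ::ₘ r)) (y := b (a ::ₘ r))])
  refine ⟨b', hb', fun y hy z => ?_⟩
  have h1 := hb'.2 ((reshuffle (fun _ r => b r) y).map fun u => (u, z)) (by simpa using hy)
  simp only [Multiset.map_map, Function.comp_def, Multiset.map_id', Multiset.map_const',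
    card_reshuffle, hy, hb'.1, h y hy] at h1
  simpa [reshuffle, Multiset.map_map] using h1

/-- A family of contracting maps on multisets of all cardinalities at least two, compatible with
the removal of one point. -/
lemma exists_barycenter_family [CompleteSpace X] [Nonempty X] {σ : X → X → ℝ → X}
    (hσ : IsGeodesicBicombing σ) (hc : IsConical σ) :
    ∃ b : Multiset X → X, (∀ n, 2 ≤ n → IsContractingOn n b) ∧
      ∀ y : Multiset X, 3 ≤ y.card → ∀ z,
        y.card * dist (b y) z ≤ (y.map fun a => dist (b (y.erase a)) z).sum := by
  obtain ⟨b₂, h₂⟩ := exists_isContractingOn_two hσ hc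
  choose next hnext using fun (n : ℕ) (b : {b : Multiset X → X // IsContractingOn (n + 2) b}) =>
    b.2.exists_succ (by omega)
  obtain ⟨B, hB, hB'⟩ : ∃ B : ℕ → Multiset X → X, (∀ n, IsContractingOn (n + 2) (B n)) ∧
      ∀ n, ∀ y : Multiset X, y.card = n + 3 → ∀ z, ((n + 2 : ℕ) + 1) * dist (B (n + 1) y) z ≤
        (y.map fun a => dist (B n (y.erase a)) z).sum := by
    let B : (n : ℕ) → {b : Multiset X → X // IsContractingOn (n + 2) b} := fun n =>
      Nat.rec (motive := fun n => {b : Multiset X → X // IsContractingOn (n + 2) b})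
        ⟨b₂, h₂⟩ (fun n b => ⟨next n b, (hnext n b).1⟩) n
    exact ⟨fun n => (B n).1, fun n => (B n).2, fun n => (hnext n (B n)).2⟩
  refine ⟨fun y => B (y.card - 2) y, fun n hn => ?_, fun y hy z => ?_⟩
  · obtain ⟨n, rfl⟩ := Nat.exists_eq_add_of_le' hn
    refine ⟨fun a => ?_, fun p hp => ?_⟩
    · simp only [Multiset.card_replicate, Nat.add_sub_cancel]
      exact (hB n).1 a
    · simp only [Multiset.card_map, hp, Nat.add_sub_cancel]
      exact (hB n).2 p hp
  · obtain ⟨n, hn⟩ := Nat.exists_eq_add_of_le' hy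
    have h := hB' n y hn z
    have e : (y.map fun a => dist (B ((y.erase a).card - 2) (y.erase a)) z) =
        y.map fun a => dist (B n (y.erase a)) z :=
      Multiset.map_congr rfl fun a ha => by
        rw [Multiset.card_erase_of_mem ha, hn]; rfl
    beta_reduce
    rw [e, hn, show n + 3 - 2 = n + 1 by omega]
    push_cast at h ⊢
    rwa [show (n : ℝ) + 3 = n + 2 + 1 by ring]

lemma IsContractingOn.dist_le_sum_count {N : ℕ} {b : Multiset X → X} (hb : IsContractingOn N b)
    {U V : Multiset X} (hU : U.card = N) (hV : V.card = N) {A : Finset X}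
    (hUA : ∀ a ∈ U, a ∈ A) (hVA : ∀ a ∈ V, a ∈ A) {D : ℝ} (hD0 : 0 ≤ D)
    (hD : ∀ a ∈ A, ∀ c ∈ A, dist a c ≤ D) :
    N * dist (b U) (b V) ≤ D * ∑ a ∈ A, |(U.count a : ℝ) - V.count a| := by
  have hUV : U - V + U ∩ V = U := Multiset.sub_add_inter U V
  have hVU : V - U + U ∩ V = V := by rw [Multiset.inter_comm]; exact Multiset.sub_add_inter V U
  have hcU := congrArg Multiset.card hUV
  have hcV := congrArg Multiset.card hVU
  rw [Multiset.card_add] at hcU hcV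
  obtain ⟨p, hp1, hp2⟩ := Multiset.exists_map_fst_map_snd (U := U - V) (V := V - U) (by omega)
  have h := hb.2 (p + (U ∩ V).map fun a => (a, a)) (by
    rw [Multiset.card_add, Multiset.card_map, ← Multiset.card_map Prod.fst p, hp1]; omega)
  simp only [Multiset.map_add, Multiset.map_map, Function.comp_def, Multiset.map_id', hp1, hp2,
    hUV, hVU, dist_self, Multiset.map_const', Multiset.sum_add, Multiset.sum_replicate, smul_zero,
    add_zero] at h
  refine h.trans ?_
  have h1 : (p.map fun q => dist q.1 q.2).sum ≤ p.card • D := by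
    rw [← Multiset.card_map (fun q => dist q.1 q.2) p]
    refine Multiset.sum_le_card_nsmul _ _ fun x hx => ?_
    obtain ⟨q, hq, rfl⟩ := Multiset.mem_map.1 hx
    have m1 : q.1 ∈ U - V := hp1 ▸ Multiset.mem_map_of_mem _ hq
    have m2 : q.2 ∈ V - U := hp2 ▸ Multiset.mem_map_of_mem _ hq
    exact hD _ (hUA _ (Multiset.mem_of_le (Multiset.sub_le_self _ _) m1)) _
      (hVA _ (Multiset.mem_of_le (Multiset.sub_le_self _ _) m2))
  have h2 : (p.card : ℝ) ≤ ∑ a ∈ A, |(U.count a : ℝ) - V.count a| := by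
    rw [← Multiset.card_map Prod.fst p, hp1, ← Multiset.sum_count_eq_card (s := A)
      fun a ha => hUA _ (Multiset.mem_of_le (Multiset.sub_le_self _ _) ha)]
    push_cast
    refine Finset.sum_le_sum fun a _ => ?_
    rw [Multiset.count_sub]
    rcases le_total (U.count a) (V.count a) with h | h
    · rw [Nat.sub_eq_zero_of_le h]; simp
    · rw [Nat.cast_sub h]; exact le_abs_self _
  rw [nsmul_eq_mul, mul_comm] at h1
  exact h1.trans (mul_le_mul_of_nonneg_left h2 hD0)

/-- Removing points one at a time, the contracting map at a large multiset is compared with its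
value at a small multiset having approximately the same frequencies. -/
lemma dist_le_frequencyDefect {b : Multiset X → X} (hb : ∀ n, 2 ≤ n → IsContractingOn n b)
    (he : ∀ y : Multiset X, 3 ≤ y.card → ∀ z,
        y.card * dist (b y) z ≤ (y.map fun a => dist (b (y.erase a)) z).sum)
    {R : Multiset X} {m : ℕ} (hm : 2 ≤ m) (hR : R.card = m) {A : Finset X}
    (hRA : ∀ a ∈ R, a ∈ A) {D : ℝ} (hD0 : 0 ≤ D) (hD : ∀ a ∈ A, ∀ c ∈ A, dist a c ≤ D)
    {δ : ℝ} (hδ : 0 < δ) {K : ℕ} (hK : m ≤ K) {y : Multiset X} (hy : y.card = K)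
    (hyA : ∀ a ∈ y, a ∈ A) :
    dist (b y) (b R) ≤ D * (A.card * δ +
      (frequencyDefect A (fun a => R.count a / m) y + (1 / (m - 1) - 1 / (K - 1))) / δ) := by
  induction K, hK using Nat.le_induction generalizing y with
  | base =>
    have hm0 : (0 : ℝ) < m := by positivity
    have h := (hb m hm).dist_le_sum_count hy hR hyA hRA hD0 hD
    rw [sub_self, add_zero, frequencyDefect, hy]
    have h1 : ∑ a ∈ A, |(y.count a : ℝ) - R.count a| ≤ m * (A.card * δ +
        (∑ a ∈ A, ((y.count a : ℝ) / m - R.count a / m) ^ 2) / δ) := by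
      rw [← nsmul_eq_mul A.card, ← Finset.sum_const, Finset.sum_div, ← Finset.sum_add_distrib,
        Finset.mul_sum]
      refine Finset.sum_le_sum fun a _ => ?_
      have := mul_le_mul_of_nonneg_left
        (abs_le_add_sq_div hδ ((y.count a : ℝ) / m - R.count a / m)) hm0.le
      rwa [← sub_div, abs_div, abs_of_pos hm0, mul_div_cancel₀ _ hm0.ne', sub_div] at this
    have h2 := h.trans (mul_le_mul_of_nonneg_left h1 hD0)
    rw [mul_left_comm] at h2
    exact le_of_mul_le_mul_left h2 hm0
  | succ K hmK ih =>
    have hK0 : (2 : ℝ) ≤ K := by exact_mod_cast hm.trans hmK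
    have hK1 : (0 : ℝ) < K - 1 := by linarith
    set π : X → ℝ := fun a => R.count a / m
    have h := he y (by omega) (b R)
    have h1 : (y.map fun a => dist (b (y.erase a)) (b R)).sum ≤
        (y.map fun a => D / δ * frequencyDefect A π (y.erase a) +
          D * (A.card * δ + (1 / (m - 1) - 1 / (K - 1)) / δ)).sum := by
      refine Multiset.sum_map_le_sum_map _ _ fun a ha => ?_
      refine (ih (y := y.erase a) (by rw [Multiset.card_erase_of_mem ha, hy]; rfl)
        fun c hc => hyA _ (Multiset.mem_of_mem_erase hc)).trans_eq ?_
      ring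
    have h2 := sum_frequencyDefect_erase_le A π (K := K) (by omega) hy hyA
    have h3 := mul_le_mul_of_nonneg_left h2 (div_nonneg hD0 hδ.le)
    rw [Multiset.sum_map_add, Multiset.sum_map_mul_left, Multiset.map_const',
      Multiset.sum_replicate, hy, nsmul_eq_mul] at h1
    rw [hy] at h
    have h4 : (1 : ℝ) / K ^ 2 - 1 / (K - 1) ≤ - (1 / K) := by
      have : (1 : ℝ) / K ^ 2 - 1 / (K - 1) = - (1 / K) - 1 / (K ^ 2 * (K - 1)) := by
        field_simp
        ring
      rw [this]
      have : (0 : ℝ) ≤ 1 / (K ^ 2 * (K - 1)) := by positivity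
      linarith
    have h5 := mul_le_mul_of_nonneg_left h4 (div_nonneg hD0 hδ.le)
    have hK2 : (0 : ℝ) < K + 1 := by linarith
    push_cast at h h1 ⊢
    rw [add_sub_cancel_right]
    refine le_of_mul_le_mul_left (h.trans (h1.trans ?_)) hK2
    have h6 := mul_le_mul_of_nonneg_left h5 hK2.le
    calc _ ≤ _ := add_le_add_left h3 _
      _ = (K + 1) * (D * (A.card * δ + (frequencyDefect A π y + 1 / (m - 1)) / δ)) +
        (K + 1) * (D / δ * (1 / K ^ 2 - 1 / (K - 1))) := by ring
      _ ≤ _ := add_le_add_right h6 _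
      _ = _ := by ring

lemma cauchySeq_nsmul {b : Multiset X → X} (hb : ∀ n, 2 ≤ n → IsContractingOn n b)
    (he : ∀ y : Multiset X, 3 ≤ y.card → ∀ z,
        y.card * dist (b y) z ≤ (y.map fun a => dist (b (y.erase a)) z).sum)
    {s : Multiset X} (hs : s ≠ 0) : CauchySeq fun k : ℕ => b ((k + 2) • s) := by
  have hn : 1 ≤ s.card := Multiset.card_pos.2 hs
  set A := s.toFinset
  set D := Metric.diam (A : Set X)
  have hD0 : 0 ≤ D := Metric.diam_nonneg
  have hD : ∀ a ∈ A, ∀ c ∈ A, dist a c ≤ D := fun a ha c hc =>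
    Metric.dist_le_diam_of_mem A.finite_toSet.isBounded ha hc
  have hA : ∀ k : ℕ, ∀ a ∈ k • s, a ∈ A := fun k a ha =>
    Multiset.mem_toFinset.2 (Multiset.mem_of_mem_nsmul ha)
  refine Metric.cauchySeq_iff'.2 fun ε hε => ?_
  obtain ⟨δ, hδ, hδ'⟩ : ∃ δ > 0, D * A.card * δ < ε / 2 := by
    refine ⟨ε / 2 / (D * A.card + 1), by positivity, ?_⟩
    rw [mul_div_assoc', div_lt_iff₀ (by positivity)]
    nlinarith
  obtain ⟨N, hN⟩ : ∃ N : ℕ, D / δ * (1 / (N + 1 : ℝ)) < ε / 2 := by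
    have h : Tendsto (fun N : ℕ => D / δ * (1 / (N + 1 : ℝ))) atTop (𝓝 0) := by
      simpa using tendsto_one_div_add_atTop_nhds_zero_nat.const_mul (D / δ)
    exact (h.eventually_lt_const (half_pos hε)).exists
  refine ⟨N, fun k hk => ?_⟩
  have hm : N + 2 ≤ (N + 2) * s.card := Nat.le_mul_of_pos_right _ hn
  have h := dist_le_frequencyDefect hb he (R := (N + 2) • s) (m := (N + 2) * s.card) (by omega)
    (Multiset.card_nsmul _ _) (hA _) hD0 hD hδ (K := (k + 2) * s.card)
    (Nat.mul_le_mul_right _ (by omega)) (y := (k + 2) • s) (Multiset.card_nsmul _ _) (hA _)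
  rw [frequencyDefect_nsmul A hs (by omega) (by omega), zero_add] at h
  have hm' : (N : ℝ) + 1 ≤ ((N + 2) * s.card : ℕ) - 1 := by
    have : ((N + 2 : ℕ) : ℝ) ≤ ((N + 2) * s.card : ℕ) := by exact_mod_cast hm
    push_cast at this ⊢
    linarith
  have hK' : (0 : ℝ) ≤ 1 / (((k + 2) * s.card : ℕ) - 1) := by
    have : k + 2 ≤ (k + 2) * s.card := Nat.le_mul_of_pos_right _ hn
    have : ((1 : ℕ) : ℝ) ≤ ((k + 2) * s.card : ℕ) := by exact_mod_cast (by omega)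
    rw [Nat.cast_one] at this
    exact one_div_nonneg.2 (sub_nonneg.2 this)
  have h1 : (1 : ℝ) / (((N + 2) * s.card : ℕ) - 1) ≤ 1 / (N + 1) :=
    one_div_le_one_div_of_le (by positivity) hm'
  have h2 := mul_le_mul_of_nonneg_left
    ((sub_le_self (1 / ((((N + 2) * s.card : ℕ) : ℝ) - 1)) hK').trans h1) (div_nonneg hD0 hδ.le)
  rw [mul_add, ← mul_assoc, mul_div_assoc', mul_div_right_comm] at h
  linarith

/-- A contracting barycenter map on finite multisets which depends only on the frequencies. -/
lemma exists_barycenter_multiset [CompleteSpace X] [Nonempty X] {σ : X → X → ℝ → X}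
    (hσ : IsGeodesicBicombing σ) (hc : IsConical σ) :
    ∃ b : Multiset X → X, (∀ n, 1 ≤ n → IsContractingOn n b) ∧
      ∀ s : Multiset X, s ≠ 0 → ∀ k : ℕ, k ≠ 0 → b (k • s) = b s := by
  obtain ⟨b, hb, he⟩ := exists_barycenter_family hσ hc
  have hex : ∀ s : Multiset X, ∃ c, s ≠ 0 → Tendsto (fun k : ℕ => b ((k + 2) • s)) atTop (𝓝 c) := by
    intro s
    by_cases hs : s = 0
    · exact ⟨Classical.arbitrary X, fun h => (h hs).elim⟩
    · obtain ⟨c, h⟩ := cauchySeq_tendsto_of_complete (cauchySeq_nsmul hb he hs)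
      exact ⟨c, fun _ => h⟩
  choose β hβ using hex
  refine ⟨β, fun n hn => ⟨fun a => ?_, fun p hp => ?_⟩, fun s hs k hk => ?_⟩
  · have hne : Multiset.replicate n a ≠ 0 := by
      rw [← Multiset.card_pos, Multiset.card_replicate]; exact hn
    refine tendsto_nhds_unique (hβ _ hne) (tendsto_const_nhds.congr fun k => ?_)
    rw [Multiset.nsmul_replicate]
    exact ((hb _ (by nlinarith)).1 a).symm
  · have hp0 : p ≠ 0 := by rw [← Multiset.card_pos]; omega
    refine le_of_tendsto (((hβ (p.map Prod.fst) (by simpa using hp0)).dist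
      (hβ (p.map Prod.snd) (by simpa using hp0))).const_mul (n : ℝ)) (Eventually.of_forall ?_)
    intro k
    have h := (hb ((k + 2) * n) (by nlinarith)).2 ((k + 2) • p) (by rw [Multiset.card_nsmul, hp])
    rw [Multiset.map_nsmul, Multiset.map_nsmul, Multiset.map_nsmul, Multiset.sum_nsmul,
      nsmul_eq_mul, Nat.cast_mul, mul_assoc] at h
    exact le_of_mul_le_mul_left h (by positivity)
  · have hks : k • s ≠ 0 := by
      rw [← Multiset.card_pos, Multiset.card_nsmul]
      exact Nat.mul_pos (Nat.pos_of_ne_zero hk) (Multiset.card_pos.2 hs)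
    have hlim : Tendsto (fun j : ℕ => (j + 2) * k - 2) atTop atTop := by
      refine tendsto_atTop_mono (fun j => ?_) tendsto_id
      have : (j + 2) * 1 ≤ (j + 2) * k := Nat.mul_le_mul_left _ (Nat.pos_of_ne_zero hk)
      simp only [id]
      omega
    refine tendsto_nhds_unique (hβ _ hks) (((hβ s hs).comp hlim).congr fun j => ?_)
    have : (j + 2) * 1 ≤ (j + 2) * k := Nat.mul_le_mul_left _ (Nat.pos_of_ne_zero hk)
    rw [Function.comp_apply, Nat.sub_add_cancel (by omega), mul_nsmul']

end Multiset

section Extension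

open MeasureTheory ProbabilityTheory Filter Topology

variable {X : Type*}

/-- The strong law of large numbers for the coordinates of an infinite product. -/
lemma ae_tendsto_average {E : Type*} [MeasurableSpace E] (γ : Measure E) [IsProbabilityMeasure γ]
    {g : E → ℝ} (hg : Integrable g γ) :
    ∀ᵐ z ∂Measure.infinitePi (fun _ : ℕ => γ),
      Tendsto (fun n : ℕ => (∑ i ∈ Finset.range n, g (z i)) / n) atTop (𝓝 (∫ e, g e ∂γ)) := by
  set g' := hg.1.mk g
  have hm : Measurable g' := hg.1.stronglyMeasurable_mk.measurable
  have hP : ∀ i : ℕ, MeasurePreserving (fun z : ℕ → E => z i)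
      (Measure.infinitePi fun _ : ℕ => γ) γ := measurePreserving_eval_infinitePi _
  have hint : Integrable g' γ := hg.congr hg.1.ae_eq_mk
  have h := strong_law_ae_real (μ := Measure.infinitePi fun _ : ℕ => γ)
    (fun i z => g' (z i)) ((hP 0).integrable_comp_of_integrable hint)
    (fun i j hij => (iIndepFun_infinitePi (P := fun _ : ℕ => γ) (X := fun _ => g')
      fun _ => hm).indepFun hij)
    (fun i => ⟨(hm.comp (hP i).measurable).aemeasurable, (hm.comp (hP 0).measurable).aemeasurable,
      by
        change Measure.map (g' ∘ fun z : ℕ → E => z i) _ = Measure.map (g' ∘ fun z : ℕ → E => z 0) _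
        rw [← Measure.map_map hm (hP i).measurable, ← Measure.map_map hm (hP 0).measurable,
          (hP i).map_eq, (hP 0).map_eq]⟩)
  have hae : ∀ᵐ z ∂Measure.infinitePi (fun _ : ℕ => γ), ∀ i, g (z i) = g' (z i) :=
    ae_all_iff.2 fun i => (hP i).quasiMeasurePreserving.ae hg.1.ae_eq_mk
  have hI : ∫ z, g' (z 0) ∂Measure.infinitePi (fun _ : ℕ => γ) = ∫ e, g e ∂γ := by
    have h0 := integral_map (μ := Measure.infinitePi fun _ : ℕ => γ)
      (hP 0).measurable.aemeasurable (f := g')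
      (hg.1.stronglyMeasurable_mk.aestronglyMeasurable)
    rw [(hP 0).map_eq] at h0
    exact h0.symm.trans (integral_congr_ae hg.1.ae_eq_mk.symm)
  filter_upwards [h, hae] with z hz hz'
  rw [hI] at hz
  simpa only [hz'] using hz

variable [MetricSpace X]

lemma IsContractingOn.dist_le_average {b : Multiset X → X} {n : ℕ} (hn : 1 ≤ n)
    (hb : IsContractingOn n b) (u v : ℕ → X) :
    dist (b ((Multiset.range n).map u)) (b ((Multiset.range n).map v)) ≤
      (∑ i ∈ Finset.range n, dist (u i) (v i)) / n := by
  have h := hb.2 ((Multiset.range n).map fun i => (u i, v i)) (by simp)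
  simp only [Multiset.map_map, Function.comp_def] at h
  rw [le_div_iff₀ (by exact_mod_cast hn), mul_comm]
  exact h

lemma tendsto_dist_of_frequency [DecidableEq X] {b : Multiset X → X}
    (hb : ∀ n, 1 ≤ n → IsContractingOn n b)
    (hk : ∀ s : Multiset X, s ≠ 0 → ∀ k : ℕ, k ≠ 0 → b (k • s) = b s)
    {A : Finset X} {u v : ℕ → X} (hu : ∀ i, u i ∈ A) (hv : ∀ i, v i ∈ A) {w : X → ℝ}
    (hwu : ∀ a ∈ A, Tendsto (fun n : ℕ => (((Multiset.range n).map u).count a : ℝ) / n)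
      atTop (𝓝 (w a)))
    (hwv : ∀ a ∈ A, Tendsto (fun n : ℕ => (((Multiset.range n).map v).count a : ℝ) / n)
      atTop (𝓝 (w a))) :
    Tendsto (fun q : ℕ × ℕ =>
      dist (b ((Multiset.range q.1).map u)) (b ((Multiset.range q.2).map v)))
      (atTop ×ˢ atTop) (𝓝 0) := by
  set D := Metric.diam (A : Set X)
  have hD : ∀ a ∈ A, ∀ c ∈ A, dist a c ≤ D := fun a ha c hc =>
    Metric.dist_le_diam_of_mem A.finite_toSet.isBounded ha hc
  have hlim : Tendsto (fun q : ℕ × ℕ => D * ∑ a ∈ A,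
      |(((Multiset.range q.1).map u).count a : ℝ) / q.1 -
        (((Multiset.range q.2).map v).count a : ℝ) / q.2|) (atTop ×ˢ atTop) (𝓝 0) := by
    have : Tendsto (fun q : ℕ × ℕ => D * ∑ a ∈ A,
      |(((Multiset.range q.1).map u).count a : ℝ) / q.1 -
        (((Multiset.range q.2).map v).count a : ℝ) / q.2|) (atTop ×ˢ atTop)
        (𝓝 (D * ∑ a ∈ A, |w a - w a|)) :=
      (tendsto_finsetSum A fun a ha => (((hwu a ha).comp tendsto_fst).sub
        ((hwv a ha).comp tendsto_snd)).abs).const_mul D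
    simpa using this
  refine squeeze_zero' (Eventually.of_forall fun _ => dist_nonneg) ?_ hlim
  filter_upwards [prod_mem_prod (Ici_mem_atTop 1) (Ici_mem_atTop 1)]
  rintro ⟨n, m⟩ ⟨hn : 1 ≤ n, hm : 1 ≤ m⟩
  have hn0 : (0 : ℝ) < n := by exact_mod_cast hn
  have hm0 : (0 : ℝ) < m := by exact_mod_cast hm
  have hne : ∀ {j : ℕ} (x : ℕ → X), 1 ≤ j → (Multiset.range j).map x ≠ 0 := by
    intro j x hj
    rw [← Multiset.card_pos, Multiset.card_map, Multiset.card_range]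
    exact hj
  have hmem : ∀ {j k : ℕ} {x : ℕ → X}, (∀ i, x i ∈ A) →
      ∀ a ∈ k • (Multiset.range j).map x, a ∈ A := by
    intro j k x hx a ha
    obtain ⟨i, -, rfl⟩ := Multiset.mem_map.1 (Multiset.mem_of_mem_nsmul ha)
    exact hx i
  have h := (hb (n * m) (Nat.mul_pos hn hm)).dist_le_sum_count
    (U := m • (Multiset.range n).map u) (V := n • (Multiset.range m).map v)
    (by simp [mul_comm]) (by simp) (hmem hu) (hmem hv) Metric.diam_nonneg hD
  rw [hk _ (hne u hn) m (by omega), hk _ (hne v hm) n (by omega)] at h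
  simp only [Multiset.count_nsmul, Nat.cast_mul] at h
  have hnm : (0 : ℝ) < n * m := mul_pos hn0 hm0
  refine le_of_mul_le_mul_left (h.trans_eq ?_) hnm
  rw [mul_left_comm, Finset.mul_sum (a := (n : ℝ) * m)]
  refine congrArg (D * ·) (Finset.sum_congr rfl fun a _ => ?_)
  rw [← abs_of_pos hnm, ← abs_mul]
  congr 1
  field_simp

variable [MeasurableSpace X]

/-- The empirical averages along the sequence `x` of the functions associated with the simple
functions `f k` converge to the corresponding integrals. -/
def IsTypical (μ : Measure X) (f : ℕ → SimpleFunc X X) (x : ℕ → X) : Prop :=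
  ∀ k, (∀ a, Tendsto (fun n : ℕ =>
      (∑ i ∈ Finset.range n, (f k ⁻¹' {a}).indicator (fun _ => (1 : ℝ)) (x i)) / n)
        atTop (𝓝 (μ.real (f k ⁻¹' {a})))) ∧
    Tendsto (fun n : ℕ => (∑ i ∈ Finset.range n, dist (x i) (f k (x i))) / n) atTop
      (𝓝 (∫ y, dist y (f k y) ∂μ))

lemma IsTypical.tendsto_dist {b : Multiset X → X} (hb : ∀ n, 1 ≤ n → IsContractingOn n b)
    (hk : ∀ s : Multiset X, s ≠ 0 → ∀ k : ℕ, k ≠ 0 → b (k • s) = b s)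
    {μ : Measure X} {f : ℕ → SimpleFunc X X}
    (hf : Tendsto (fun k => ∫ y, dist y (f k y) ∂μ) atTop (𝓝 0)) {x y : ℕ → X}
    (hx : IsTypical μ f x) (hy : IsTypical μ f y) :
    Tendsto (fun q : ℕ × ℕ =>
      dist (b ((Multiset.range q.1).map x)) (b ((Multiset.range q.2).map y)))
      (atTop ×ˢ atTop) (𝓝 0) := by
  classical
  have key : ∀ k, Tendsto (fun q : ℕ × ℕ =>
      dist (b ((Multiset.range q.1).map fun i => f k (x i)))
        (b ((Multiset.range q.2).map fun i => f k (y i)))) (atTop ×ˢ atTop) (𝓝 0) := by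
    intro k
    have hc : ∀ {z : ℕ → X}, IsTypical μ f z → ∀ a, Tendsto (fun n : ℕ =>
        (((Multiset.range n).map fun i => f k (z i)).count a : ℝ) / n) atTop
          (𝓝 (μ.real (f k ⁻¹' {a}))) := by
      intro z hz a
      refine ((hz k).1 a).congr fun n => ?_
      congr 1
      induction n with
      | zero => simp
      | succ n ih =>
        rw [Finset.sum_range_succ, ih, Multiset.range_succ, Multiset.map_cons,
          Multiset.count_cons]
        by_cases h : f k (z n) = a
        · simp [h]
        · simp [h, Ne.symm h]
    exact tendsto_dist_of_frequency hb hk (A := (f k).range)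
      (fun i => SimpleFunc.mem_range_self _ _) (fun i => SimpleFunc.mem_range_self _ _)
      (fun a _ => hc hx a) (fun a _ => hc hy a)
  rw [Metric.tendsto_nhds]
  intro ε hε
  obtain ⟨k, hkε⟩ := (hf.eventually_lt_const (show 0 < ε / 3 by positivity)).exists
  have e1 : ∀ {z : ℕ → X}, IsTypical μ f z → ∀ᶠ n : ℕ in atTop,
      dist (b ((Multiset.range n).map z)) (b ((Multiset.range n).map fun i => f k (z i))) <
        ε / 3 := by
    intro z hz
    filter_upwards [(hz k).2.eventually_lt_const hkε, eventually_ge_atTop 1] with n hn hn1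
    exact ((hb n hn1).dist_le_average hn1 z fun i => f k (z i)).trans_lt hn
  filter_upwards [(e1 hx).prod_mk (e1 hy),
    (key k).eventually_lt_const (show 0 < ε / 3 by positivity)] with q hq hq'
  rw [Real.dist_0_eq_abs, abs_of_nonneg dist_nonneg]
  have t := dist_triangle4 (b ((Multiset.range q.1).map x))
    (b ((Multiset.range q.1).map fun i => f k (x i)))
    (b ((Multiset.range q.2).map fun i => f k (y i))) (b ((Multiset.range q.2).map y))
  have h2 := hq.2
  rw [dist_comm] at h2
  linarith [hq.1]

lemma ae_isTypical {μ : Measure X} {f : ℕ → SimpleFunc X X}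
    (hf : ∀ k, Integrable (fun y => dist y (f k y)) μ) {E : Type*} [MeasurableSpace E]
    {γ : Measure E} [IsProbabilityMeasure γ] {φ : E → X} (hφ : Measurable φ) (hμ : γ.map φ = μ) :
    ∀ᵐ z ∂Measure.infinitePi (fun _ : ℕ => γ), IsTypical μ f (fun i => φ (z i)) := by
  subst hμ
  have : IsProbabilityMeasure (γ.map φ) := Measure.isProbabilityMeasure_map hφ.aemeasurable
  have hslln : ∀ {g : X → ℝ}, Integrable g (γ.map φ) →
      ∀ᵐ z ∂Measure.infinitePi (fun _ : ℕ => γ), Tendsto (fun n : ℕ =>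
        (∑ i ∈ Finset.range n, g (φ (z i))) / n) atTop (𝓝 (∫ e, g e ∂γ.map φ)) := by
    intro g hg
    rw [integral_map hφ.aemeasurable hg.1]
    exact ae_tendsto_average γ (hg.comp_measurable hφ)
  refine ae_all_iff.2 fun k => Filter.Eventually.and ?_ (hslln (hf k))
  have hm : ∀ a, MeasurableSet (f k ⁻¹' {a}) := fun a => (f k).measurableSet_fiber a
  have h1 : ∀ᵐ z ∂Measure.infinitePi (fun _ : ℕ => γ), ∀ a ∈ (f k).range, Tendsto (fun n : ℕ =>
      (∑ i ∈ Finset.range n, (f k ⁻¹' {a}).indicator (fun _ => (1 : ℝ)) (φ (z i))) / n)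
        atTop (𝓝 ((γ.map φ).real (f k ⁻¹' {a}))) := by
    refine (Finset.eventually_all _).2 fun a _ => ?_
    have h := hslln ((integrable_const (1 : ℝ)).indicator (hm a))
    rwa [integral_indicator_const _ (hm a), smul_eq_mul, mul_one] at h
  filter_upwards [h1] with z hz a
  by_cases ha : a ∈ (f k).range
  · exact hz a ha
  · have h0 : f k ⁻¹' {a} = ∅ := by
      rw [Set.preimage_singleton_eq_empty]
      simpa using ha
    simp [h0]

lemma MemP1.aestronglyMeasurable_id [BorelSpace X] {μ : Measure X} (hμ : MemP1 μ) :
    AEStronglyMeasurable (id : X → X) μ := by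
  obtain ⟨_, _, -⟩ := hμ
  have hK : ∀ n : ℕ, ∃ K : Set X, IsCompact K ∧ 1 - ((n : ℝ≥0∞) + 1)⁻¹ < μ K := by
    intro n
    obtain ⟨K, -, hK, h⟩ := (MeasurableSet.univ (α := X)).exists_lt_isCompact
      (μ := μ) (r := 1 - ((n : ℝ≥0∞) + 1)⁻¹) (by
        rw [measure_univ]
        exact ENNReal.sub_lt_self (by simp) (by simp) (by simp))
    exact ⟨K, hK, h⟩
  choose K hK hKμ using hK
  refine aestronglyMeasurable_iff_aemeasurable_separable.2 ⟨aemeasurable_id, ⋃ n, K n,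
    TopologicalSpace.IsSeparable.iUnion fun n => (hK n).isSeparable, ?_⟩
  change μ (⋃ n, K n)ᶜ = 0
  have hm : MeasurableSet (⋃ n, K n) := MeasurableSet.iUnion fun n => (hK n).measurableSet
  rw [prob_compl_eq_zero_iff hm]
  refine le_antisymm prob_le_one (le_of_tendsto' (x := atTop)
    (f := fun n : ℕ => 1 - ((n : ℝ≥0∞) + 1)⁻¹) ?_ fun n =>
      (hKμ n).le.trans (measure_mono (Set.subset_iUnion K n)))
  have : Tendsto (fun n : ℕ => ((n : ℝ≥0∞) + 1)⁻¹) atTop (𝓝 0) := by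
    have := (tendsto_add_atTop_iff_nat 1).2 ENNReal.tendsto_inv_nat_nhds_zero
    simpa using this
  simpa using ENNReal.Tendsto.sub (tendsto_const_nhds (x := (1 : ℝ≥0∞))) this (by simp)

lemma MemP1.integrable_dist [BorelSpace X] {μ : Measure X} (hμ : MemP1 μ) (c : X) :
    Integrable (fun y => dist c y) μ := by
  refine ⟨(continuous_const.dist continuous_id).measurable.aestronglyMeasurable, ?_⟩
  refine (lt_top_iff_ne_top.2 (hμ.2.2 c)).trans_le' (lintegral_mono fun y => ?_)
  rw [Real.enorm_of_nonneg dist_nonneg, ← edist_dist, edist_comm]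

lemma MemP1.exists_simpleFunc [BorelSpace X] {μ : Measure X} (hμ : MemP1 μ) :
    ∃ f : ℕ → SimpleFunc X X, (∀ k, Integrable (fun y => dist y (f k y)) μ) ∧
      Tendsto (fun k => ∫ y, dist y (f k y) ∂μ) atTop (𝓝 0) := by
  have := hμ.1
  obtain ⟨c⟩ := nonempty_of_isProbabilityMeasure μ
  obtain ⟨t, ht, htμ⟩ := hμ.aestronglyMeasurable_id.isSeparable_ae_range
  have hs : TopologicalSpace.IsSeparable (t ∪ {c}) :=
    ht.union (Set.countable_singleton c).isSeparable
  have := hs.separableSpace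
  have hc : c ∈ t ∪ {c} := Or.inr rfl
  set f := SimpleFunc.approxOn id measurable_id (t ∪ {c}) c hc
  have hle : ∀ k y, dist y (f k y) ≤ dist c y := by
    intro k y
    have := SimpleFunc.edist_approxOn_le measurable_id hc y k
    rw [dist_comm]
    rwa [edist_dist, edist_dist, ENNReal.ofReal_le_ofReal_iff dist_nonneg] at this
  have hm : ∀ k, AEStronglyMeasurable (fun y => dist y (f k y)) μ := fun k =>
    (SimpleFunc.measurable_bind (f k) (fun a y => dist y a) fun a =>
      (continuous_id.dist continuous_const).measurable).aestronglyMeasurable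
  have hb : ∀ k, ∀ᵐ y ∂μ, ‖dist y (f k y)‖ ≤ dist c y := fun k =>
    Eventually.of_forall fun y => by rw [Real.norm_of_nonneg dist_nonneg]; exact hle k y
  refine ⟨f, fun k => (hμ.integrable_dist c).mono' (hm k) (hb k), ?_⟩
  have h := tendsto_integral_of_dominated_convergence (f := fun _ => (0 : ℝ)) _ hm
    (hμ.integrable_dist c) hb (htμ.mono fun y hy => by
      have := SimpleFunc.tendsto_approxOn measurable_id hc (subset_closure (Or.inl hy))
      have h := (tendsto_const_nhds (x := y)).dist this
      rwa [id, dist_self] at h)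
  simpa using h

lemma exists_tendsto_of_memP1 [BorelSpace X] [CompleteSpace X] {b : Multiset X → X}
    (hb : ∀ n, 1 ≤ n → IsContractingOn n b)
    (hk : ∀ s : Multiset X, s ≠ 0 → ∀ k : ℕ, k ≠ 0 → b (k • s) = b s) {μ : Measure X}
    (hμ : MemP1 μ) :
    ∃ c, ∃ f : ℕ → SimpleFunc X X, (∀ k, Integrable (fun y => dist y (f k y)) μ) ∧
      ∀ x, IsTypical μ f x → Tendsto (fun n : ℕ => b ((Multiset.range n).map x)) atTop (𝓝 c) := by
  have := hμ.1
  obtain ⟨f, hf, hf0⟩ := hμ.exists_simpleFunc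
  obtain ⟨x, hx⟩ := (ae_isTypical hf measurable_id Measure.map_id).exists
  have hcauchy : CauchySeq fun n : ℕ => b ((Multiset.range n).map fun i => id (x i)) := by
    rw [cauchySeq_iff_tendsto_dist_atTop_0, ← prod_atTop_atTop_eq]
    exact hx.tendsto_dist hb hk hf0 hx
  obtain ⟨c, hc⟩ := cauchySeq_tendsto_of_complete hcauchy
  refine ⟨c, f, hf, fun y hy => ?_⟩
  have h := (hx.tendsto_dist hb hk hf0 hy).comp (tendsto_id.prodMk tendsto_id)
  exact (tendsto_iff_of_dist h).1 hc

lemma exists_isContractingBarycenter [BorelSpace X] [CompleteSpace X] {b : Multiset X → X}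
    (hb : ∀ n, 1 ≤ n → IsContractingOn n b)
    (hk : ∀ s : Multiset X, s ≠ 0 → ∀ k : ℕ, k ≠ 0 → b (k • s) = b s) :
    ∃ β : P1 X → X, IsContractingBarycenter β := by
  choose β f hf hβ using fun μ : P1 X => exists_tendsto_of_memP1 hb hk μ.2
  refine ⟨β, fun μ ν => le_iInf₂ fun γ hγ => ?_, fun x μ hμ => ?_⟩
  · obtain ⟨hγ1, hfst, hsnd⟩ := hγ
    rcases eq_or_ne (∫⁻ p, edist p.1 p.2 ∂γ) ⊤ with htop | htop
    · rw [htop]; exact le_top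
    have hm : AEStronglyMeasurable (fun p : X × X => dist p.1 p.2) γ := by
      have h1 := μ.2.aestronglyMeasurable_id
      have h2 := ν.2.aestronglyMeasurable_id
      rw [← hfst] at h1
      rw [← hsnd] at h2
      exact (h1.comp_measurable measurable_fst).dist (h2.comp_measurable measurable_snd)
    have hint : Integrable (fun p : X × X => dist p.1 p.2) γ := by
      refine ⟨hm, (lt_top_iff_ne_top.2 htop).trans_le' (lintegral_mono fun p => ?_)⟩
      rw [Real.enorm_of_nonneg dist_nonneg, ← edist_dist]
    obtain ⟨z, ⟨hz1, hz2⟩, hz⟩ := (((ae_isTypical (hf μ) measurable_fst hfst).and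
      (ae_isTypical (hf ν) measurable_snd hsnd)).and (ae_tendsto_average γ hint)).exists
    have h : dist (β μ) (β ν) ≤ ∫ p, dist p.1 p.2 ∂γ := by
      refine le_of_tendsto_of_tendsto ((hβ μ _ hz1).dist (hβ ν _ hz2)) hz ?_
      filter_upwards [eventually_ge_atTop 1] with n hn
      exact (hb n hn).dist_le_average hn _ _
    rw [edist_dist]
    refine (ENNReal.ofReal_le_ofReal h).trans_eq ?_
    rw [ofReal_integral_eq_lintegral_ofReal hint (Eventually.of_forall fun _ => dist_nonneg)]
    simp only [edist_dist]
  · have hφ : (Measure.dirac ()).map (fun _ => x) = μ.1 := by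
      rw [hμ, Measure.map_const, measure_univ, one_smul]
    have := μ.2.1
    obtain ⟨z, hz⟩ := (ae_isTypical (hf μ) measurable_const hφ).exists
    refine tendsto_nhds_unique (hβ μ _ hz) (tendsto_const_nhds.congr' ?_)
    filter_upwards [eventually_ge_atTop 1] with n hn
    rw [Multiset.map_const', Multiset.card_range, (hb n hn).1]

end Extension

/-- **Barycentric metric spaces = spaces with a conical bicombing.**
A complete metric space admits a conical geodesic bicombing if and only if it admits a
contracting barycenter map `β : P₁(X) → X`. -/
theorem conical_bicombing_iff_contracting_barycenter
    {X : Type*} [MetricSpace X] [CompleteSpace X] [MeasurableSpace X] [BorelSpace X] :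
    (∃ σ : X → X → ℝ → X, IsGeodesicBicombing σ ∧ IsConical σ) ↔
      ∃ β : P1 X → X, IsContractingBarycenter β := by
  classical
  refine ⟨fun ⟨σ, hσ, hc⟩ => ?_, fun ⟨β, hβ⟩ => hβ.exists_bicombing⟩
  rcases isEmpty_or_nonempty X with hX | hX
  · have hP : ∀ μ : P1 X, Nonempty X := fun μ =>
      have := μ.2.1
      MeasureTheory.nonempty_of_isProbabilityMeasure μ.1
    exact ⟨fun μ => (hP μ).some, fun μ => (hP μ).elim hX.elim, fun x => hX.elim x⟩
  · obtain ⟨b, hb, hk⟩ := exists_barycenter_multiset hσ hc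
    exact exists_isContractingBarycenter hb hk
end

section
/- Let (X,d) be a proper metric space admitting a conical geodesic bicombing. Then there exists a geodesic bicombing s on X such that: (1) s is consistent, i.e. whenever p = s(x,y,a) and q = s(x,y,b) with 0 ≤ a ≤ b ≤ 1, then s(p,q,λ) = s(x,y,(1−λ)a + λb) for all λ ∈ [0,1]; (2) for all x,y ∈ X the geodesic t ↦ s(x,y,t) is straight, i.e. for every z ∈ X the function t ↦ d(z, s(x,y,t)) is convex on [0,1]; and (3) for all x,y,x′,y′ ∈ X with d(x,y) = d(x′,y′), the function t ↦ d(s(x,y,t), s(x′,y′,t)) is convex on [0,1]. -/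
open Filter Topology

/-- A conical midpoint map: `m x y` is a midpoint of `x` and `y`, and `m` satisfies the conical
inequality. -/
structure IsConicalMidpoint {X : Type*} [MetricSpace X] (m : X → X → X) : Prop where
  dist_left : ∀ x y, dist x (m x y) = dist x y / 2
  dist_right : ∀ x y, dist (m x y) y = dist x y / 2
  dist_le : ∀ x y x' y', dist (m x y) (m x' y') ≤ (dist x x' + dist y y') / 2

/-- The first `n + 1` terms of `u` form a chain each of whose interior points is the `m`-midpoint
of its two neighbours. -/
def IsMidpointChain {X : Type*} (m : X → X → X) (n : ℕ) (u : ℕ → X) : Prop :=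
  ∀ i, i + 2 ≤ n → u (i + 1) = m (u i) (u (i + 2))

theorem mul_le_add_mul_succ_of_midpoint_convex {f : ℕ → ℝ} {n : ℕ}
    (hf : ∀ i, i + 2 ≤ n → f (i + 1) ≤ (f i + f (i + 2)) / 2) :
    ∀ i, i + 1 ≤ n → (i + 1) * f i ≤ f 0 + i * f (i + 1)
  | 0, _ => by simp
  | i + 1, hi => by
    have ih := mul_le_add_mul_succ_of_midpoint_convex hf i (by omega)
    have h := mul_le_mul_of_nonneg_left (hf i hi) (by positivity : (0 : ℝ) ≤ i + 1)
    push_cast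
    linarith

theorem mul_le_of_midpoint_convex {f : ℕ → ℝ} {n : ℕ}
    (hf : ∀ i, i + 2 ≤ n → f (i + 1) ≤ (f i + f (i + 2)) / 2) {i : ℕ} (hi : i ≤ n) :
    n * f i ≤ (n - i) * f 0 + i * f n := by
  induction n with
  | zero => obtain rfl : i = 0 := by omega
            simp
  | succ n ih =>
    rcases hi.eq_or_lt with rfl | hlt
    · simp
    · have h1 := ih (fun j hj => hf j (by omega)) (by omega)
      have h2 := mul_le_add_mul_succ_of_midpoint_convex hf n le_rfl
      rcases Nat.eq_zero_or_pos n with rfl | hn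
      · obtain rfl : i = 0 := by omega
        simp
      · have hn' : (0 : ℝ) < n := by exact_mod_cast hn
        have h3 := mul_le_mul_of_nonneg_left h2 (Nat.cast_nonneg (α := ℝ) i)
        have h4 := mul_le_mul_of_nonneg_left h1 (by positivity : (0 : ℝ) ≤ n + 1)
        refine le_of_mul_le_mul_left ?_ hn'
        push_cast
        linarith

namespace IsMidpointChain

variable {X : Type*} {m : X → X → X} {n : ℕ} {u v : ℕ → X}

theorem mono (hu : IsMidpointChain m n u) {k : ℕ} (hk : k ≤ n) : IsMidpointChain m k u :=
  fun i hi => hu i (hi.trans hk)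

theorem shift {i : ℕ} (hu : IsMidpointChain m (i + n) u) :
    IsMidpointChain m n (fun r => u (i + r)) :=
  fun r hr => hu (i + r) (by omega)

variable [MetricSpace X]

theorem mul_dist_le (hm : IsConicalMidpoint m) (hu : IsMidpointChain m n u)
    (hv : IsMidpointChain m n v) {i : ℕ} (hi : i ≤ n) :
    n * dist (u i) (v i) ≤ (n - i) * dist (u 0) (v 0) + i * dist (u n) (v n) :=
  mul_le_of_midpoint_convex (f := fun i => dist (u i) (v i))
    (fun i hi => by simpa only [hu i hi, hv i hi] using hm.dist_le _ _ _ _) hi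

theorem dist_le_add (hm : IsConicalMidpoint m) (hu : IsMidpointChain m n u)
    (hv : IsMidpointChain m n v) {i : ℕ} (hi : i ≤ n) :
    dist (u i) (v i) ≤ dist (u 0) (v 0) + dist (u n) (v n) := by
  rcases Nat.eq_zero_or_pos n with rfl | hn
  · obtain rfl : i = 0 := by omega
    simp
  · have hn' : (0 : ℝ) < n := by exact_mod_cast hn
    have hi' : (i : ℝ) ≤ n := by exact_mod_cast hi
    refine le_of_mul_le_mul_left ((hu.mul_dist_le hm hv hi).trans ?_) hn'
    rw [mul_add]
    gcongr
    linarith [Nat.cast_nonneg (α := ℝ) i]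

theorem const (hm : IsConicalMidpoint m) (z : X) (n : ℕ) : IsMidpointChain m n fun _ => z :=
  fun _ _ => dist_le_zero.1 (by simp [hm.dist_left])

theorem dist_succ (hm : IsConicalMidpoint m) (hu : IsMidpointChain m n u) :
    ∀ i, i + 1 ≤ n → dist (u i) (u (i + 1)) = dist (u 0) (u 1)
  | 0, _ => rfl
  | i + 1, hi => by
    rw [← dist_succ hm hu i (by omega), hu i hi, hm.dist_left, hm.dist_right]

theorem dist_zero (hm : IsConicalMidpoint m) (hu : IsMidpointChain m n u) {i : ℕ} (hi : i ≤ n) :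
    dist (u 0) (u i) = i * dist (u 0) (u 1) := by
  induction i with
  | zero => simp
  | succ i ih =>
    have ih := ih (by omega)
    have h1 := mul_le_add_mul_succ_of_midpoint_convex (f := fun i => dist (u 0) (u i)) (n := n)
      (fun j hj => by
        simpa only [hu j hj, ← const hm (u 0) n j hj] using
          hm.dist_le (u 0) (u 0) (u j) (u (j + 2))) i hi
    have h2 := dist_triangle (u 0) (u i) (u (i + 1))
    rw [hu.dist_succ hm i hi] at h2
    simp only [dist_self, zero_add] at h1
    push_cast
    refine le_antisymm (by linarith) ?_
    rcases Nat.eq_zero_or_pos i with rfl | hpos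
    · simp
    · have hpos' : (0 : ℝ) < i := by exact_mod_cast hpos
      rw [ih] at h1
      refine le_of_mul_le_mul_left ?_ hpos'
      linarith

theorem dist_add (hm : IsConicalMidpoint m) {i r : ℕ} (hu : IsMidpointChain m n u)
    (h : i + r ≤ n) : dist (u i) (u (i + r)) = r * dist (u 0) (u 1) := by
  rcases Nat.eq_zero_or_pos r with rfl | hr
  · simp
  · have := (hu.mono h).shift.dist_zero hm le_rfl
    rw [← hu.dist_succ hm i (by omega)]
    simpa using this

theorem dist_eq (hm : IsConicalMidpoint m) (hn : 0 < n) (hu : IsMidpointChain m n u) {i j : ℕ}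
    (hi : i ≤ n) (hj : j ≤ n) :
    dist (u i) (u j) = |(i / n : ℝ) * dist (u 0) (u n) - j / n * dist (u 0) (u n)| := by
  wlog hij : i ≤ j generalizing i j
  · rw [dist_comm, this hj hi (by omega), abs_sub_comm]
  obtain ⟨r, rfl⟩ := Nat.exists_eq_add_of_le hij
  have hn' : (n : ℝ) ≠ 0 := by positivity
  rw [hu.dist_add hm hj, hu.dist_zero hm le_rfl, abs_sub_comm, abs_of_nonneg]
  · push_cast
    field_simp
    ring
  · push_cast
    rw [← sub_mul, ← sub_div]
    have : (0 : ℝ) ≤ i + r - i := by simp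
    positivity

end IsMidpointChain

theorem exists_isMidpointChain {X : Type*} [MetricSpace X] [CompleteSpace X] {m : X → X → X}
    (hm : IsConicalMidpoint m) (n : ℕ) :
    ∀ x y, ∃ u : ℕ → X, IsMidpointChain m (n + 1) u ∧ u 0 = x ∧ u (n + 1) = y := by
  induction n with
  | zero => exact fun x y => ⟨fun i => if i = 0 then x else y, fun i hi => by omega, by simp⟩
  | succ n ih =>
    intro x y
    choose C hC h0 h1 using ih
    have : Nonempty X := ⟨x⟩
    have hF : ContractingWith (1 / 2) fun p => m (C x p n) y := by
      refine ⟨by norm_num, LipschitzWith.of_dist_le_mul fun p q => ?_⟩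
      have h := (hC x p).dist_le_add hm (hC x q) (i := n) (by omega)
      have h' := hm.dist_le (C x p n) y (C x q n) y
      simp only [h0, h1, dist_self] at h h'
      push_cast
      linarith
    set p := hF.fixedPoint
    have hp : m (C x p n) y = p := hF.fixedPoint_isFixedPt
    refine ⟨fun i => if i ≤ n + 1 then C x p i else y, fun i hi => ?_, by simp [h0], by simp⟩
    rcases (show i ≤ n by omega).eq_or_lt with rfl | hlt
    · simp [h1, hp]
    · simpa [show i ≤ n by omega, show i ≤ n + 1 by omega, show i + 1 ≤ n by omega,
        show i + 2 ≤ n + 1 by omega] using hC x p i (by omega)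

theorem IsConical.isConicalMidpoint {X : Type*} [MetricSpace X] {σ : X → X → ℝ → X}
    (hc : IsConical σ) (hg : IsGeodesicBicombing σ) :
    IsConicalMidpoint fun x y => σ x y (1 / 2) where
  dist_left x y := by
    have := hg.2.2 x y 0 (by simp) (1 / 2) (by constructor <;> norm_num)
    rw [hg.1] at this
    rw [this, zero_sub, abs_neg, abs_of_pos (by norm_num)]
    ring
  dist_right x y := by
    have := hg.2.2 x y (1 / 2) (by constructor <;> norm_num) 1 (by simp)
    rw [hg.2.1] at this
    rw [this, abs_sub_comm, abs_of_pos (by norm_num)]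
    ring
  dist_le x y x' y' := by
    have := hc x y x' y' (1 / 2) (by constructor <;> norm_num)
    linarith

/-- The number of steps used at scale `1 / k` to subdivide a geodesic of length `l`. -/
noncomputable def stepCount (k : ℕ) (l : ℝ) : ℕ := ⌊l * k⌋₊ + 1

theorem stepCount_pos (k : ℕ) (l : ℝ) : 0 < stepCount k l := Nat.succ_pos _

theorem tendsto_stepCount_div {l : ℝ} (hl : 0 ≤ l) :
    Tendsto (fun k => (stepCount k l / k : ℝ)) atTop (𝓝 l) := by
  have h := ((tendsto_nat_floor_mul_div_atTop hl).comp tendsto_natCast_atTop_atTop).add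
    (tendsto_inv_atTop_nhds_zero_nat (𝕜 := ℝ))
  rw [add_zero] at h
  refine h.congr fun k => ?_
  simp [stepCount, add_div]

theorem tendsto_stepCount {l : ℝ} (hl : 0 < l) :
    Tendsto (fun k => (stepCount k l : ℝ)) atTop atTop := by
  refine ((tendsto_stepCount_div hl.le).pos_mul_atTop hl tendsto_natCast_atTop_atTop).congr' ?_
  filter_upwards [eventually_gt_atTop 0] with k hk
  field_simp

theorem tendsto_floor_mul_stepCount {l t : ℝ} (hl : 0 < l) (ht : 0 ≤ t) :
    Tendsto (fun k => (⌊t * stepCount k l⌋₊ / stepCount k l : ℝ)) atTop (𝓝 t) :=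
  (tendsto_nat_floor_mul_div_atTop ht).comp (tendsto_stepCount hl)

theorem floor_mul_le {t : ℝ} (ht : t ≤ 1) (n : ℕ) : ⌊t * n⌋₊ ≤ n :=
  Nat.floor_le_of_le (mul_le_of_le_one_left (Nat.cast_nonneg n) ht)

/-- `C n x y` is a midpoint chain with `n` steps from `x` to `y`. -/
structure IsChainFamily {X : Type*} (m : X → X → X) (C : ℕ → X → X → ℕ → X) : Prop where
  isMidpointChain : ∀ n, 0 < n → ∀ x y, IsMidpointChain m n (C n x y)
  apply_zero : ∀ n, 0 < n → ∀ x y, C n x y 0 = x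
  apply_self : ∀ n, 0 < n → ∀ x y, C n x y n = y

theorem exists_isChainFamily {X : Type*} [MetricSpace X] [CompleteSpace X] {m : X → X → X}
    (hm : IsConicalMidpoint m) : ∃ C, IsChainFamily m C := by
  choose C hC h0 h1 using exists_isMidpointChain hm
  refine ⟨fun n => C (n - 1), fun n hn => ?_, fun n _ => h0 _, fun n hn => ?_⟩ <;>
    obtain ⟨n, rfl⟩ := Nat.exists_eq_add_of_lt hn
  · simpa using hC n
  · simpa using h1 n

/-- The point at index `i` of the chain from `x` to `y` used at scale `1 / k`. -/
noncomputable def scaleChain {X : Type*} [MetricSpace X] (C : ℕ → X → X → ℕ → X) (x y : X)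
    (k i : ℕ) : X :=
  C (stepCount k (dist x y)) x y i

/-- `s` is the limit along `U` of the rescaled chains of the family `C`. -/
def IsChainLimit {X : Type*} [MetricSpace X] (C : ℕ → X → X → ℕ → X) (U : Filter ℕ)
    (s : X → X → ℝ → X) : Prop :=
  ∀ x y, ∀ t ∈ Set.Icc (0 : ℝ) 1,
    Tendsto (fun k => scaleChain C x y k ⌊t * stepCount k (dist x y)⌋₊) U (𝓝 (s x y t))

namespace IsChainFamily

variable {X : Type*} [MetricSpace X] {m : X → X → X} {C : ℕ → X → X → ℕ → X}

theorem scaleChain_zero (hC : IsChainFamily m C) (x y : X) (k : ℕ) :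
    scaleChain C x y k 0 = x :=
  hC.apply_zero _ (stepCount_pos _ _) x y

theorem scaleChain_stepCount (hC : IsChainFamily m C) (x y : X) (k : ℕ) :
    scaleChain C x y k (stepCount k (dist x y)) = y :=
  hC.apply_self _ (stepCount_pos _ _) x y

theorem isMidpointChain_scaleChain (hC : IsChainFamily m C) (x y : X) (k : ℕ) :
    IsMidpointChain m (stepCount k (dist x y)) (scaleChain C x y k) :=
  hC.isMidpointChain _ (stepCount_pos _ _) x y

theorem dist_scaleChain (hm : IsConicalMidpoint m) (hC : IsChainFamily m C) {x y : X}
    {k i j : ℕ} (hi : i ≤ stepCount k (dist x y)) (hj : j ≤ stepCount k (dist x y)) :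
    dist (scaleChain C x y k i) (scaleChain C x y k j) =
      |(i / stepCount k (dist x y) : ℝ) * dist x y - j / stepCount k (dist x y) * dist x y| := by
  simpa only [hC.scaleChain_zero, hC.scaleChain_stepCount] using
    (hC.isMidpointChain_scaleChain x y k).dist_eq hm (stepCount_pos _ _) hi hj

theorem exists_isChainLimit [ProperSpace X] (hm : IsConicalMidpoint m) (hC : IsChainFamily m C)
    (U : Ultrafilter ℕ) : ∃ s, IsChainLimit C U s := by
  have key : ∀ x y : X, ∀ t : ℝ, ∃ p, t ∈ Set.Icc (0 : ℝ) 1 →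
      Tendsto (fun k => scaleChain C x y k ⌊t * stepCount k (dist x y)⌋₊) U (𝓝 p) := by
    intro x y t
    by_cases ht : t ∈ Set.Icc (0 : ℝ) 1
    swap
    · exact ⟨x, fun h => absurd h ht⟩
    obtain ⟨p, -, hp⟩ := (isCompact_closedBall x (dist x y)).ultrafilter_le_nhds
      (U.map fun k => scaleChain C x y k ⌊t * stepCount k (dist x y)⌋₊) (by
        rw [Ultrafilter.coe_map, le_principal_iff]
        refine Filter.mem_map.2 (univ_mem' fun k => ?_)
        have hle := floor_mul_le ht.2 (stepCount k (dist x y))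
        have h := hC.dist_scaleChain hm hle (Nat.zero_le (stepCount k (dist x y)))
        rw [hC.scaleChain_zero, Nat.cast_zero, zero_div, zero_mul, sub_zero,
          abs_of_nonneg (by positivity)] at h
        rw [Set.mem_preimage, Metric.mem_closedBall, h]
        exact mul_le_of_le_one_left dist_nonneg (div_le_one_of_le₀ (by exact_mod_cast hle)
          (Nat.cast_nonneg _)))
    exact ⟨p, fun _ => hp⟩
  choose s hs using key
  exact ⟨s, hs⟩

end IsChainFamily

namespace IsChainLimit

variable {X : Type*} [MetricSpace X] {m : X → X → X} {C : ℕ → X → X → ℕ → X} {U : Filter ℕ}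
  {s : X → X → ℝ → X}

theorem tendsto (hs : IsChainLimit C U s) (hU : U ≤ atTop) (hm : IsConicalMidpoint m)
    (hC : IsChainFamily m C) {x y : X} (hxy : 0 < dist x y) {t : ℝ} (ht : t ∈ Set.Icc (0 : ℝ) 1)
    {i : ℕ → ℕ} (hi : ∀ k, i k ≤ stepCount k (dist x y))
    (hit : Tendsto (fun k => (i k / stepCount k (dist x y) : ℝ)) U (𝓝 t)) :
    Tendsto (fun k => scaleChain C x y k (i k)) U (𝓝 (s x y t)) := by
  refine (hs x y t ht).congr_dist ?_
  have h := ((((tendsto_floor_mul_stepCount hxy ht.1).mono_left hU).mul_const (dist x y)).sub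
    (hit.mul_const (dist x y))).abs
  rw [sub_self, abs_zero] at h
  exact h.congr fun k => (hC.dist_scaleChain hm (floor_mul_le ht.2 _) (hi k)).symm

variable [NeBot U]

theorem apply_zero (hs : IsChainLimit C U s) (hC : IsChainFamily m C) (x y : X) :
    s x y 0 = x := by
  have h := hs x y 0 (by simp)
  simp only [zero_mul, Nat.floor_zero, hC.scaleChain_zero] at h
  exact (tendsto_const_nhds_iff.1 h).symm

theorem apply_one (hs : IsChainLimit C U s) (hC : IsChainFamily m C) (x y : X) :
    s x y 1 = y := by
  have h := hs x y 1 (by simp)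
  simp only [one_mul, Nat.floor_natCast, hC.scaleChain_stepCount] at h
  exact (tendsto_const_nhds_iff.1 h).symm

theorem dist_eq (hs : IsChainLimit C U s) (hU : U ≤ atTop) (hm : IsConicalMidpoint m)
    (hC : IsChainFamily m C) (x y : X) {t t' : ℝ} (ht : t ∈ Set.Icc (0 : ℝ) 1)
    (ht' : t' ∈ Set.Icc (0 : ℝ) 1) : dist (s x y t) (s x y t') = |t - t'| * dist x y := by
  refine tendsto_nhds_unique ((hs x y t ht).dist (hs x y t' ht')) ?_
  simp only [hC.dist_scaleChain hm (floor_mul_le ht.2 _) (floor_mul_le ht'.2 _), ← sub_mul,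
    abs_mul, abs_of_nonneg (dist_nonneg (x := x) (y := y))]
  rcases (dist_nonneg (x := x) (y := y)).eq_or_lt with h0 | hxy
  · simp [← h0]
  · exact ((((tendsto_floor_mul_stepCount hxy ht.1).sub
      (tendsto_floor_mul_stepCount hxy ht'.1)).mono_left hU).abs).mul_const _

theorem apply_self (hs : IsChainLimit C U s) (hU : U ≤ atTop) (hm : IsConicalMidpoint m)
    (hC : IsChainFamily m C) (x : X) {t : ℝ} (ht : t ∈ Set.Icc (0 : ℝ) 1) : s x x t = x := by
  have h := hs.dist_eq hU hm hC x x (t := 0) (by simp) ht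
  rw [hs.apply_zero hC, dist_self, mul_zero] at h
  exact (dist_eq_zero.1 h).symm

theorem dist_le_of_dist_eq (hs : IsChainLimit C U s) (hU : U ≤ atTop) (hm : IsConicalMidpoint m)
    (hC : IsChainFamily m C) {x y x' y' : X} (h : dist x y = dist x' y') {t : ℝ}
    (ht : t ∈ Set.Icc (0 : ℝ) 1) :
    dist (s x y t) (s x' y' t) ≤ (1 - t) * dist x x' + t * dist y y' := by
  rcases (dist_nonneg (x := x) (y := y)).eq_or_lt with h0 | hxy
  · obtain rfl := dist_eq_zero.1 h0.symm
    obtain rfl := dist_eq_zero.1 (h0.trans h).symm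
    rw [hs.apply_self hU hm hC x ht, hs.apply_self hU hm hC x' ht]
    linarith
  have hlim := (tendsto_floor_mul_stepCount hxy ht.1).mono_left hU
  refine le_of_tendsto_of_tendsto' ((hs x y t ht).dist (hs x' y' t ht))
    (((hlim.const_sub 1).mul_const _).add (hlim.mul_const _)) fun k => ?_
  have hn : (0 : ℝ) < stepCount k (dist x y) := by exact_mod_cast stepCount_pos _ _
  have key := (hC.isMidpointChain_scaleChain x y k).mul_dist_le hm
    (h ▸ hC.isMidpointChain_scaleChain x' y' k) (floor_mul_le ht.2 _)
  have h1 := hC.scaleChain_stepCount x' y' k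
  rw [← h] at h1 ⊢
  rw [hC.scaleChain_zero, hC.scaleChain_zero, hC.scaleChain_stepCount, h1] at key
  refine le_of_mul_le_mul_left (key.trans_eq ?_) hn
  field_simp

theorem dist_le (hs : IsChainLimit C U s) (hU : U ≤ atTop) (hm : IsConicalMidpoint m)
    (hC : IsChainFamily m C) (x y z : X) {t : ℝ} (ht : t ∈ Set.Icc (0 : ℝ) 1) :
    dist z (s x y t) ≤ (1 - t) * dist z x + t * dist z y := by
  rcases (dist_nonneg (x := x) (y := y)).eq_or_lt with h0 | hxy
  · obtain rfl := dist_eq_zero.1 h0.symm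
    rw [hs.apply_self hU hm hC x ht]
    linarith
  have hlim := (tendsto_floor_mul_stepCount hxy ht.1).mono_left hU
  refine le_of_tendsto_of_tendsto' (tendsto_const_nhds.dist (hs x y t ht))
    (((hlim.const_sub 1).mul_const _).add (hlim.mul_const _)) fun k => ?_
  have hn : (0 : ℝ) < stepCount k (dist x y) := by exact_mod_cast stepCount_pos _ _
  have key := (IsMidpointChain.const hm z _).mul_dist_le hm
    (hC.isMidpointChain_scaleChain x y k) (floor_mul_le ht.2 _)
  rw [hC.scaleChain_zero, hC.scaleChain_stepCount] at key
  refine le_of_mul_le_mul_left (key.trans_eq ?_) hn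
  field_simp

theorem consistent (hs : IsChainLimit C U s) (hU : U ≤ atTop) (hm : IsConicalMidpoint m)
    (hC : IsChainFamily m C) (x y : X) {a b c : ℝ} (ha : a ∈ Set.Icc (0 : ℝ) 1)
    (hb : b ∈ Set.Icc (0 : ℝ) 1) (hab : a ≤ b) (hc : c ∈ Set.Icc (0 : ℝ) 1) :
    s (s x y a) (s x y b) c = s x y ((1 - c) * a + c * b) := by
  rcases hab.eq_or_lt with rfl | hlt
  · rw [hs.apply_self hU hm hC _ hc]
    congr 1
    ring
  rcases (dist_nonneg (x := x) (y := y)).eq_or_lt with h0 | hxy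
  · obtain rfl := dist_eq_zero.1 h0.symm
    have hd : (1 - c) * a + c * b ∈ Set.Icc (0 : ℝ) 1 :=
      convex_Icc (0 : ℝ) 1 ha hb (by linarith [hc.2]) hc.1 (by ring)
    rw [hs.apply_self hU hm hC _ ha, hs.apply_self hU hm hC _ hb, hs.apply_self hU hm hC _ hc,
      hs.apply_self hU hm hC _ hd]
  set p := s x y a with hp
  set q := s x y b with hq
  have hpq_eq : dist p q = (b - a) * dist x y := by
    rw [hp, hq, hs.dist_eq hU hm hC x y ha hb, abs_sub_comm, abs_of_pos (by linarith)]
  have hpq : 0 < dist p q := by rw [hpq_eq]; exact mul_pos (by linarith) hxy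
  set n : ℕ → ℕ := fun k => stepCount k (dist x y) with hn
  set l : ℕ → ℕ := fun k => stepCount k (dist p q) with hl
  set i : ℕ → ℕ := fun k => ⌊a * n k⌋₊ with hi
  set j : ℕ → ℕ := fun k => ⌊b * n k⌋₊ with hj
  have hij : ∀ k, i k ≤ j k := fun k => Nat.floor_mono (by gcongr)
  have hjn : ∀ k, j k ≤ n k := fun k => floor_mul_le hb.2 _
  have hnpos : ∀ k, (0 : ℝ) < n k := fun k => by exact_mod_cast stepCount_pos _ _
  have hlpos : ∀ k, (0 : ℝ) < l k := fun k => by exact_mod_cast stepCount_pos _ _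
  have lim_i : Tendsto (fun k => (i k / n k : ℝ)) U (𝓝 a) :=
    (tendsto_floor_mul_stepCount hxy ha.1).mono_left hU
  have lim_j : Tendsto (fun k => (j k / n k : ℝ)) U (𝓝 b) :=
    (tendsto_floor_mul_stepCount hxy hb.1).mono_left hU
  have lim_l : Tendsto (fun k => (l k / n k : ℝ)) U (𝓝 (b - a)) := by
    have h := ((tendsto_stepCount_div hpq.le).div (tendsto_stepCount_div hxy.le) hxy.ne').mono_left
      hU
    rw [hpq_eq, mul_div_cancel_right₀ _ hxy.ne'] at h
    refine h.congr' (hU ?_)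
    filter_upwards [eventually_gt_atTop 0] with k hk
    have hk' : (k : ℝ) ≠ 0 := by positivity
    simp only [Pi.div_apply, hn, hl, hpq_eq]
    exact div_div_div_cancel_right₀ hk' _ _
  have lim_sub : Tendsto (fun k => ((j k - i k : ℕ) / l k : ℝ)) U (𝓝 1) := by
    have h := (lim_j.sub lim_i).div lim_l (by linarith : b - a ≠ 0)
    rw [div_self (by linarith : b - a ≠ 0)] at h
    refine h.congr fun k => ?_
    simp only [Pi.div_apply]
    rw [← sub_div, div_div_div_cancel_right₀ (hnpos k).ne', Nat.cast_sub (hij k)]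
  -- Indices at parameter `t` that lie in both chains to be compared.
  set r : ℝ → ℕ → ℕ := fun t k => min ⌊t * l k⌋₊ (j k - i k) with hr
  have hrl : ∀ t ∈ Set.Icc (0 : ℝ) 1, ∀ k, r t k ≤ l k := fun t ht k =>
    (min_le_left _ _).trans (floor_mul_le ht.2 _)
  have hrn : ∀ t k, i k + r t k ≤ n k := fun t k => by
    have := hij k
    have := hjn k
    have : r t k ≤ j k - i k := min_le_right _ _
    omega
  have lim_r : ∀ t ∈ Set.Icc (0 : ℝ) 1, Tendsto (fun k => (r t k / l k : ℝ)) U (𝓝 t) := by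
    intro t ht
    have h := ((tendsto_floor_mul_stepCount hpq ht.1).mono_left hU).min lim_sub
    rw [min_eq_left ht.2] at h
    refine h.congr fun k => ?_
    rw [hr, Nat.cast_min, min_div_div_right (hlpos k).le]
  have lim_pq : ∀ t ∈ Set.Icc (0 : ℝ) 1,
      Tendsto (fun k => scaleChain C p q k (r t k)) U (𝓝 (s p q t)) := fun t ht =>
    hs.tendsto hU hm hC hpq ht (hrl t ht) (lim_r t ht)
  have lim_xy : ∀ t ∈ Set.Icc (0 : ℝ) 1, Tendsto (fun k => scaleChain C x y k (i k + r t k)) U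
      (𝓝 (s x y ((1 - t) * a + t * b))) := by
    intro t ht
    refine hs.tendsto hU hm hC hxy
      (convex_Icc (0 : ℝ) 1 ha hb (by linarith [ht.2]) ht.1 (by ring)) (hrn t) ?_
    have h := lim_i.add ((lim_r t ht).mul lim_l)
    rw [show a + t * (b - a) = (1 - t) * a + t * b by ring] at h
    refine h.congr fun k => ?_
    rw [div_mul_div_cancel₀ (hlpos k).ne', Nat.cast_add, add_div]
  have h1 := lim_xy 1 (by simp)
  have h1' := lim_pq 1 (by simp)
  rw [sub_self, zero_mul, one_mul, zero_add, ← hq] at h1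
  rw [hs.apply_one hC] at h1'
  have h0 : Tendsto (fun k => scaleChain C x y k (i k)) U (𝓝 p) := hs x y a ha
  have hbound := (tendsto_const_nhds (x := p)).dist h0 |>.add (h1'.dist h1)
  rw [dist_self, dist_self, add_zero] at hbound
  refine dist_le_zero.1 (le_of_tendsto_of_tendsto' ((lim_pq c hc).dist (lim_xy c hc)) hbound
    fun k => ?_)
  have hle : r c k ≤ r 1 k := min_le_min_right _ (Nat.floor_mono (by gcongr; exact hc.2))
  simpa [hC.scaleChain_zero] using
    ((hC.isMidpointChain_scaleChain p q k).mono (hrl 1 (by simp) k)).dist_le_add hm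
      ((hC.isMidpointChain_scaleChain x y k).mono (hrn 1 k)).shift hle

end IsChainLimit

/-- **Descombes–Lang type improvement (Theorem 1.4).** Every proper metric space admitting a
conical geodesic bicombing admits a geodesic bicombing `s` that is (1) consistent,
(2) consists of straight geodesics, and (3) satisfies the convexity condition
for pairs of geodesics of equal length. -/
theorem proper_conical_bicombing_exists_consistent
    {X : Type*} [MetricSpace X] [ProperSpace X]
    (h : ∃ σ : X → X → ℝ → X, IsGeodesicBicombing σ ∧ IsConical σ) :
    ∃ s : X → X → ℝ → X, IsGeodesicBicombing s ∧
      -- (1) `s` is consistent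
      (∀ x y : X, ∀ a ∈ Set.Icc (0:ℝ) 1, ∀ b ∈ Set.Icc (0:ℝ) 1, a ≤ b →
        ∀ lam ∈ Set.Icc (0:ℝ) 1,
          s (s x y a) (s x y b) lam = s x y ((1 - lam) * a + lam * b)) ∧
      -- (2) every geodesic of `s` is straight
      (∀ x y z : X, ConvexOn ℝ (Set.Icc (0:ℝ) 1) (fun t => dist z (s x y t))) ∧
      -- (3) convexity for pairs of geodesics of equal length
      (∀ x y x' y' : X, dist x y = dist x' y' →
        ConvexOn ℝ (Set.Icc (0:ℝ) 1) (fun t => dist (s x y t) (s x' y' t))) := by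
  obtain ⟨σ, hg, hc⟩ := h
  have hm := hc.isConicalMidpoint hg
  obtain ⟨C, hC⟩ := exists_isChainFamily hm
  have hU : (hyperfilter ℕ : Filter ℕ) ≤ atTop := Nat.hyperfilter_le_atTop
  obtain ⟨s, hs⟩ := hC.exists_isChainLimit hm (hyperfilter ℕ)
  refine ⟨s, ⟨hs.apply_zero hC, hs.apply_one hC,
    fun x y t ht t' ht' => hs.dist_eq hU hm hC x y ht ht'⟩,
    fun x y a ha b hb hab c hc => hs.consistent hU hm hC x y ha hb hab hc, fun x y z => ?_,
    fun x y x' y' h => ?_⟩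
  · refine LinearOrder.convexOn_of_lt (convex_Icc 0 1) fun a ha b hb hab v w hv hw hvw => ?_
    obtain rfl : v = 1 - w := by linarith
    have hw' : w ∈ Set.Icc (0 : ℝ) 1 := ⟨hw.le, by linarith⟩
    simp only [smul_eq_mul]
    rw [← hs.consistent hU hm hC x y ha hb hab.le hw']
    exact hs.dist_le hU hm hC _ _ z hw'
  · refine LinearOrder.convexOn_of_lt (convex_Icc 0 1) fun a ha b hb hab v w hv hw hvw => ?_
    obtain rfl : v = 1 - w := by linarith
    have hw' : w ∈ Set.Icc (0 : ℝ) 1 := ⟨hw.le, by linarith⟩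
    simp only [smul_eq_mul]
    rw [← hs.consistent hU hm hC x y ha hb hab.le hw',
      ← hs.consistent hU hm hC x' y' ha hb hab.le hw']
    refine hs.dist_le_of_dist_eq hU hm hC ?_ hw'
    rw [hs.dist_eq hU hm hC x y ha hb, hs.dist_eq hU hm hC x' y' ha hb, h]
end

section
/- Let (X,d) be a complete metric space admitting a conical geodesic bicombing σ. Then there exists a contracting barycenter map β_σ : P₁(X) → X such that β_σ(μ) lies in the closed σ-convex hull of the support of μ, for every μ ∈ P₁(X). -/
open scoped ENNReal
open MeasureTheory

/-- A set `C` is `σ`-convex if `σ x y t ∈ C` whenever `x, y ∈ C` and `t ∈ [0,1]`. -/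
def IsSigmaConvex {X : Type*} [MetricSpace X] (σ : X → X → ℝ → X) (C : Set X) : Prop :=
  ∀ x ∈ C, ∀ y ∈ C, ∀ t ∈ Set.Icc (0:ℝ) 1, σ x y t ∈ C

/-- The `σ`-convex hull of `A`: the smallest `σ`-convex set containing `A`. -/
def sigmaConvexHull {X : Type*} [MetricSpace X] (σ : X → X → ℝ → X) (A : Set X) : Set X :=
  ⋂₀ {C : Set X | A ⊆ C ∧ IsSigmaConvex σ C}

/-- The support of a measure: the points all of whose open neighbourhoods have positive
measure. -/
def measureSupport {X : Type*} [TopologicalSpace X] [MeasurableSpace X]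
    (μ : Measure X) : Set X :=
  {x : X | ∀ U : Set X, IsOpen U → x ∈ U → 0 < μ U}

section SymmetricMeans

open Filter Topology

section Deterministic

variable {X : Type*} [MetricSpace X]

/-- A weak form of the Goebel–Kirk lemma: the two orbits of the iteration
`(x, y) ↦ (M x y, M y x)` of a nonexpansive midpoint map are asymptotic. -/
lemma tendsto_dist_of_midpoint_iteration (M : X → X → X) (hid : ∀ x, M x x = x)
    (hM : ∀ x y x' y', dist (M x y) (M x' y') ≤ (dist x x' + dist y y') / 2)
    (x y : ℕ → X) (hx : ∀ k, x (k + 1) = M (x k) (y k))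
    (hy : ∀ k, y (k + 1) = M (y k) (x k)) :
    Tendsto (fun k => dist (x k) (y k)) atTop (𝓝 0) := by
  have hanti : Antitone fun k => dist (x k) (y k) := by
    refine antitone_nat_of_succ_le fun k => ?_
    have h := hM (x k) (y k) (y k) (x k)
    rw [hx, hy]
    rw [dist_comm (y k) (x k)] at h
    linarith
  obtain ⟨r, hr⟩ : ∃ r, Tendsto (fun k => dist (x k) (y k)) atTop (𝓝 r) :=
    ⟨_, tendsto_atTop_ciInf hanti ⟨0, by rintro _ ⟨k, rfl⟩; exact dist_nonneg⟩⟩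
  have hr0 : 0 ≤ r := ge_of_tendsto' hr fun k => dist_nonneg
  have hsum : ∀ z k, dist (x k) z + dist (y k) z ≤ dist (x 0) z + dist (y 0) z := by
    intro z k
    induction k with
    | zero => exact le_rfl
    | succ k ih =>
      have h1 := hM (x k) (y k) z z
      have h2 := hM (y k) (x k) z z
      rw [hid] at h1 h2
      rw [hx, hy]
      linarith
  have hstep : ∀ k, dist (y k) (y (k + 1)) ≤ dist (x k) (y k) / 2 := by
    intro k
    have h := hM (y k) (x k) (y k) (y k)
    rw [hid, dist_self] at h
    rw [hy, dist_comm]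
    linarith
  have hpath : ∀ n i, dist (y i) (y (i + n)) ≤ n * dist (x i) (y i) / 2 := by
    intro n i
    induction n with
    | zero => simp
    | succ n ih =>
      have h1 := hstep (i + n)
      have h2 : dist (x (i + n)) (y (i + n)) ≤ dist (x i) (y i) := hanti (Nat.le_add_right i n)
      have h3 := dist_triangle (y i) (y (i + n)) (y (i + n + 1))
      rw [← add_assoc]
      push_cast
      linarith
  have hlow : ∀ n : ℕ, ∀ ε > 0, ∀ᶠ i in atTop, (1 + n / 2) * r - ε ≤ dist (x i) (y (i + n)) := by
    intro n
    induction n with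
    | zero =>
      intro ε hε
      filter_upwards with i
      have := hanti.le_of_tendsto hr i
      simp only [Nat.cast_zero, add_zero]
      linarith
    | succ n ih =>
      intro ε hε
      have h1 := (tendsto_add_atTop_nat 1).eventually (ih (ε / 4) (by positivity))
      have h2 : ∀ᶠ i in atTop, dist (x i) (y i) < r + ε / (2 * (n + 1)) :=
        hr.eventually_lt_const (by have : 0 < ε / (2 * ((n : ℝ) + 1)) := by positivity
                                   linarith)
      filter_upwards [h1, h2] with i h1 h2
      have h3 := hM (x i) (y i) (y (i + (n + 1))) (y (i + (n + 1)))
      rw [hid, ← hx] at h3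
      have h4 := hpath (n + 1) i
      have h5 : ((n : ℝ) + 1) * dist (x i) (y i) ≤ (n + 1) * r + ε / 2 := by
        calc ((n : ℝ) + 1) * dist (x i) (y i) ≤ (n + 1) * (r + ε / (2 * (n + 1))) := by gcongr
          _ = _ := by field_simp
      rw [show i + 1 + n = i + (n + 1) by ring] at h1
      push_cast at h4 ⊢
      linarith
  have hrn : ∀ n : ℕ, (1 + n / 2) * r ≤ 2 * dist (x 0) (y 0) + 1 := by
    intro n
    obtain ⟨i, hi⟩ := (hlow n 1 one_pos).exists
    have h1 := hsum (x 0) i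
    have h2 := hsum (x 0) (i + n)
    have h3 := dist_triangle_right (x i) (y (i + n)) (x 0)
    have h4 : 0 ≤ dist (y i) (x 0) := dist_nonneg
    have h5 : 0 ≤ dist (x (i + n)) (x 0) := dist_nonneg
    rw [dist_self, dist_comm (y 0)] at h1 h2
    linarith
  have : r = 0 := by
    by_contra hne
    have hpos : 0 < r := lt_of_le_of_ne hr0 (Ne.symm hne)
    obtain ⟨n, hn⟩ := exists_nat_gt (2 * (2 * dist (x 0) (y 0) + 1) / r)
    rw [div_lt_iff₀ hpos] at hn
    have := hrn n
    nlinarith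
  rwa [this] at hr

lemma exists_limit_of_sum_dist_nonincreasing [CompleteSpace X] {ι : Type*} [Fintype ι]
    (T : (ι → X) → ι → X)
    (hT : ∀ x y, ∑ i, dist (T x i) (T y i) ≤ ∑ i, dist (x i) (y i))
    (hc : ∀ z, T (fun _ => z) = fun _ => z)
    (hd : ∀ x i j, Tendsto (fun k => dist (T^[k] x i) (T^[k] x j)) atTop (𝓝 0)) [Nonempty ι] :
    ∃ L : (ι → X) → X, ∀ x i, Tendsto (fun k => T^[k] x i) atTop (𝓝 (L x)) := by
  have hit : ∀ k x z, ∑ i, dist (T^[k] x i) z ≤ ∑ i, dist (x i) z := by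
    intro k x z
    induction k with
    | zero => exact le_rfl
    | succ k ih =>
      have h := hT (T^[k] x) (fun _ => z)
      rw [hc] at h
      rw [Function.iterate_succ_apply']
      exact h.trans ih
  obtain ⟨i₀⟩ := ‹Nonempty ι›
  have hlim : ∀ x, ∃ l, Tendsto (fun k => T^[k] x i₀) atTop (𝓝 l) := by
    intro x
    apply cauchySeq_tendsto_of_complete
    have h0 : Tendsto (fun k => ∑ j, dist (T^[k] x j) (T^[k] x i₀)) atTop (𝓝 0) := by
      simpa using tendsto_finsetSum Finset.univ (fun j _ => hd x j i₀)
    refine cauchySeq_of_le_tendsto_0' _ (fun n m hnm => ?_) h0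
    obtain ⟨k, rfl⟩ := Nat.exists_eq_add_of_le hnm
    have h1 := hit k (T^[n] x) (T^[n] x i₀)
    rw [← Function.iterate_add_apply, add_comm k n] at h1
    rw [dist_comm]
    exact (Finset.single_le_sum (f := fun j => dist (T^[n + k] x j) (T^[n] x i₀))
      (fun _ _ => dist_nonneg) (Finset.mem_univ i₀)).trans h1
  choose L hL using hlim
  refine ⟨L, fun x i => ?_⟩
  exact (hL x).congr_dist (hd x i₀ i)

/-- A symmetric mean of `n + 1` points which is `1`-Lipschitz for the averaged distance and stays
in every closed set that is stable under `M` and contains the points. -/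
structure IsSymmetricMean (M : X → X → X) (n : ℕ) (b : (Fin (n + 1) → X) → X) : Prop where
  lip : ∀ x y, (n + 1) * dist (b x) (b y) ≤ ∑ i, dist (x i) (y i)
  const : ∀ z, b (fun _ => z) = z
  symm : ∀ (e : Equiv.Perm (Fin (n + 1))) x, b (x ∘ e) = b x
  mem : ∀ C : Set X, IsClosed C → (∀ x ∈ C, ∀ y ∈ C, M x y ∈ C) →
    ∀ x : Fin (n + 1) → X, (∀ i, x i ∈ C) → b x ∈ C

lemma exists_symmetricMean_of_iteration [CompleteSpace X] {M : X → X → X} {n : ℕ}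
    (T : (Fin (n + 1) → X) → Fin (n + 1) → X)
    (hT : ∀ x y, ∑ i, dist (T x i) (T y i) ≤ ∑ i, dist (x i) (y i))
    (hc : ∀ z, T (fun _ => z) = fun _ => z)
    (hd : ∀ x i j, Tendsto (fun k => dist (T^[k] x i) (T^[k] x j)) atTop (𝓝 0))
    (hs : ∀ (e : Equiv.Perm (Fin (n + 1))) x, T (x ∘ e) = T x ∘ e)
    (hmem : ∀ C : Set X, IsClosed C → (∀ x ∈ C, ∀ y ∈ C, M x y ∈ C) →
      ∀ x : Fin (n + 1) → X, (∀ i, x i ∈ C) → ∀ i, T x i ∈ C) :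
    ∃ b, IsSymmetricMean M n b ∧
      ∀ x z, (n + 1) * dist (b x) z ≤ ∑ i, dist (T x i) z := by
  obtain ⟨L, hL⟩ := exists_limit_of_sum_dist_nonincreasing T hT hc hd
  have hit : ∀ k x y, ∑ i, dist (T^[k] x i) (T^[k] y i) ≤ ∑ i, dist (x i) (y i) := by
    intro k x y
    induction k with
    | zero => exact le_rfl
    | succ k ih =>
      rw [Function.iterate_succ_apply', Function.iterate_succ_apply']
      exact (hT _ _).trans ih
  have hcit : ∀ k z, T^[k] (fun _ => z) = fun _ => z := fun k z =>
    Function.iterate_fixed (hc z) k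
  have hconst : ∀ z, L (fun _ => z) = z := fun z =>
    tendsto_nhds_unique (hL _ 0) (by simp only [hcit]; exact tendsto_const_nhds)
  have hlip : ∀ x y, (n + 1) * dist (L x) (L y) ≤ ∑ i, dist (x i) (y i) := by
    intro x y
    have h : Tendsto (fun k => ∑ i, dist (T^[k] x i) (T^[k] y i)) atTop
        (𝓝 (∑ _i : Fin (n + 1), dist (L x) (L y))) :=
      tendsto_finsetSum _ fun i _ => (hL x i).dist (hL y i)
    have h' := le_of_tendsto' h fun k => hit k x y
    simpa using h'
  have hLT : ∀ x, L (T x) = L x := fun x =>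
    tendsto_nhds_unique (hL (T x) 0)
      (by simpa only [← Function.iterate_succ_apply] using (tendsto_add_atTop_iff_nat 1).2 (hL x 0))
  refine ⟨L, ⟨hlip, hconst, fun e x => ?_, fun C hC hMC x hx => ?_⟩, fun x z => ?_⟩
  · have h : ∀ k, T^[k] (x ∘ e) = T^[k] x ∘ e := by
      intro k
      induction k with
      | zero => rfl
      | succ k ih => rw [Function.iterate_succ_apply', Function.iterate_succ_apply', ih, hs]
    refine tendsto_nhds_unique (hL (x ∘ e) 0) ?_
    simp only [h]
    exact hL x (e 0)
  · have h : ∀ k i, T^[k] x i ∈ C := by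
      intro k
      induction k with
      | zero => exact hx
      | succ k ih => rw [Function.iterate_succ_apply']; exact hmem C hC hMC _ ih
    exact hC.mem_of_tendsto (hL x 0) (Eventually.of_forall fun k => h k 0)
  · have h := hlip (T x) (fun _ => z)
    rwa [hLT, hconst] at h

lemma Fin.exists_perm_comp_succAbove {m : ℕ} (e : Equiv.Perm (Fin (m + 1))) (i : Fin (m + 1)) :
    ∃ e' : Equiv.Perm (Fin m), e ∘ i.succAbove = (e i).succAbove ∘ e' := by
  have h : ∀ k, ∃ l, (e i).succAbove l = e (i.succAbove k) := fun k =>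
    Fin.exists_succAbove_eq (e.injective.ne (Fin.succAbove_ne i k))
  choose f hf using h
  have hinj : Function.Injective f := by
    intro k l hkl
    have := (hf k).symm.trans ((congrArg _ hkl).trans (hf l))
    exact Fin.succAbove_right_injective (e.injective this)
  exact ⟨Equiv.ofBijective f (Finite.injective_iff_bijective.1 hinj), funext fun k => (hf k).symm⟩

lemma IsSymmetricMean.exists_succ [CompleteSpace X] {M : X → X → X} (hid : ∀ x, M x x = x)
    (hM : ∀ x y x' y', dist (M x y) (M x' y') ≤ (dist x x' + dist y y') / 2)
    {n : ℕ} {b : (Fin (n + 1) → X) → X} (hb : IsSymmetricMean M n b) :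
    ∃ b', IsSymmetricMean M (n + 1) b' ∧
      ∀ x z, (n + 2) * dist (b' x) z ≤ ∑ i : Fin (n + 2), dist (b (x ∘ i.succAbove)) z := by
  rcases n with _ | n
  · have h2s : ∀ g : Fin (1 + 1) → ℝ, ∑ i, g i = g 0 + g 1 := fun g => Fin.sum_univ_two g
    obtain ⟨b', hb', -⟩ := exists_symmetricMean_of_iteration (M := M) (n := 1)
      (fun x i => M (x i) (x (i + 1)))
      (by
        intro x y
        have h1 := hM (x 0) (x 1) (y 0) (y 1)
        have h2 := hM (x 1) (x 0) (y 1) (y 0)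
        rw [h2s, h2s]
        change dist (M (x 0) (x 1)) (M (y 0) (y 1)) + dist (M (x 1) (x 0)) (M (y 1) (y 0)) ≤ _
        linarith)
      (fun z => by simp [hid])
      (by
        intro x
        have key : ∀ i : Fin 2, Tendsto (fun k => dist
            (((fun (x : Fin 2 → X) i => M (x i) (x (i + 1)))^[k]) x i)
            (((fun (x : Fin 2 → X) i => M (x i) (x (i + 1)))^[k]) x (i + 1))) atTop (𝓝 0) := by
          intro i
          refine tendsto_dist_of_midpoint_iteration M hid hM _ _ (fun k => ?_) fun k => ?_
          · rw [Function.iterate_succ_apply']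
          · rw [Function.iterate_succ_apply', add_assoc, show (1 + 1 : Fin 2) = 0 from rfl,
              add_zero]
        intro i j
        rcases (by revert i j; decide : ∀ i j : Fin 2, j = i ∨ j = i + 1) i j with rfl | rfl
        · simp
        · exact key i)
      (by
        intro e x
        have h : ∀ (e : Equiv.Perm (Fin 2)) (i : Fin 2), e (i + 1) = e i + 1 := by decide
        funext i
        simp [h])
      (fun C _ hMC x hx i => hMC _ (hx _) _ (hx _))
    refine ⟨b', hb', fun x z => ?_⟩
    have h := hb'.lip x (fun _ => z)
    rw [hb'.const] at h
    have h2 : ∀ y : Fin 1 → X, dist (b y) z ≥ dist (y 0) z := by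
      intro y
      have : b y = y 0 := by
        have : y = fun _ => y 0 := by funext i; rw [Subsingleton.elim i 0]
        rw [this, hb.const]
      rw [this]
    have h0 := h2 (x ∘ (0 : Fin 2).succAbove)
    have h1 := h2 (x ∘ (1 : Fin 2).succAbove)
    refine le_of_eq_of_le (by norm_num) (h.trans ?_)
    rw [h2s]
    refine le_of_le_of_eq ?_ (Fin.sum_univ_two _).symm
    change _ ≥ dist (x 1) z at h0
    change _ ≥ dist (x 0) z at h1
    linarith
  · have hcontr : ∀ (x : Fin (n + 3) → X) i j,
        (n + 2) * dist (b (x ∘ i.succAbove)) (b (x ∘ j.succAbove)) ≤ dist (x i) (x j) := by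
      intro x i j
      rcases eq_or_ne i j with rfl | hij
      · simp
      obtain ⟨e, he⟩ := Fin.exists_perm_comp_succAbove (Equiv.swap i j) i
      rw [Equiv.swap_apply_left] at he
      obtain ⟨k₀, hk₀⟩ := Fin.exists_succAbove_eq hij.symm
      rw [← hb.symm e (x ∘ j.succAbove), Function.comp_assoc, ← he]
      have h := hb.lip (x ∘ i.succAbove) (x ∘ Equiv.swap i j ∘ i.succAbove)
      rw [Finset.sum_eq_single k₀] at h
      · simp only [Function.comp_apply, hk₀, Equiv.swap_apply_right] at h
        rw [dist_comm (x i)]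
        refine le_of_eq_of_le ?_ h
        push_cast
        ring
      · intro k _ hk
        have h1 : i.succAbove k ≠ j := by
          rw [← hk₀]
          exact fun h => hk (Fin.succAbove_right_injective h)
        simp [Equiv.swap_apply_of_ne_of_ne (Fin.succAbove_ne i k) h1]
      · simp
    obtain ⟨b', hb', hstep⟩ := exists_symmetricMean_of_iteration (M := M) (n := n + 2)
      (fun x i => b (x ∘ i.succAbove))
      (by
        intro x y
        have h1 : ∀ i : Fin (n + 3), (n + 2) * dist (b (x ∘ i.succAbove)) (b (y ∘ i.succAbove)) ≤
            ∑ l, dist (x l) (y l) - dist (x i) (y i) := by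
          intro i
          rw [Fin.sum_univ_succAbove _ i, add_sub_cancel_left]
          refine le_of_eq_of_le ?_ (hb.lip (x ∘ i.succAbove) (y ∘ i.succAbove))
          push_cast
          ring
        have h2 := Finset.sum_le_sum fun i (_ : i ∈ Finset.univ) => h1 i
        rw [← Finset.mul_sum, Finset.sum_sub_distrib, Finset.sum_const, Finset.card_univ,
          Fintype.card_fin, nsmul_eq_mul] at h2
        push_cast at h2
        refine le_of_mul_le_mul_left (a := (n : ℝ) + 2) ?_ (by positivity)
        linarith)
      (fun z => by
        funext i
        exact hb.const z)
      (by
        intro x i j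
        have h : ∀ k, dist ((fun (x : Fin (n + 3) → X) i => b (x ∘ i.succAbove))^[k] x i)
            ((fun (x : Fin (n + 3) → X) i => b (x ∘ i.succAbove))^[k] x j) ≤
            ((n + 2 : ℝ)⁻¹) ^ k * dist (x i) (x j) := by
          intro k
          induction k with
          | zero => simp
          | succ k ih =>
            rw [Function.iterate_succ_apply', pow_succ', mul_assoc,
              le_inv_mul_iff₀ (by positivity)]
            exact (hcontr _ i j).trans ih
        refine squeeze_zero (fun _ => dist_nonneg) h ?_
        have hlt : ((n + 2 : ℝ)⁻¹) < 1 := inv_lt_one_of_one_lt₀ (by linarith [n.cast_nonneg (α := ℝ)])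
        simpa using (tendsto_pow_atTop_nhds_zero_of_lt_one (by positivity) hlt).mul_const
          (dist (x i) (x j)))
      (by
        intro e x
        funext i
        obtain ⟨e', he'⟩ := Fin.exists_perm_comp_succAbove e i
        simp only [Function.comp_apply]
        rw [Function.comp_assoc, he', ← Function.comp_assoc, hb.symm])
      (fun C hC hMC x hx i => hb.mem C hC hMC _ fun _ => hx _)
    refine ⟨b', hb', fun x z => le_of_eq_of_le ?_ (hstep x z)⟩
    push_cast
    ring

lemma exists_symmetricMean_seq [CompleteSpace X] {M : X → X → X} (hid : ∀ x, M x x = x)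
    (hM : ∀ x y x' y', dist (M x y) (M x' y') ≤ (dist x x' + dist y y') / 2) :
    ∃ b : ∀ n, (Fin (n + 1) → X) → X, (∀ n, IsSymmetricMean M n (b n)) ∧
      ∀ n x z, (n + 2) * dist (b (n + 1) x) z ≤
        ∑ i : Fin (n + 2), dist (b n (x ∘ i.succAbove)) z := by
  have h0 : IsSymmetricMean M 0 (fun x : Fin 1 → X => x 0) :=
    ⟨fun x y => by simp, fun _ => rfl, fun e x => congrArg x (Subsingleton.elim (α := Fin 1) _ _),
      fun C _ _ x hx => hx 0⟩
  choose F hF using fun n (b : {b // IsSymmetricMean M n b}) => b.2.exists_succ hid hM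
  let B : ∀ n, {b // IsSymmetricMean M n b} := fun n =>
    Nat.rec ⟨_, h0⟩ (fun n b => ⟨F n b, (hF n b).1⟩) n
  exact ⟨fun n => (B n).1, fun n => (B n).2, fun n => (hF n (B n)).2⟩

end Deterministic

lemma MeasureTheory.StronglyMeasurable.pi_mk {α ι X : Type*} [Finite ι] [MeasurableSpace α]
    [TopologicalSpace X] {f : ι → α → X} (h : ∀ i, StronglyMeasurable (f i)) :
    StronglyMeasurable fun a i => f i a := by
  choose fs hfs using h
  refine ⟨fun n => ⟨fun a i => fs i n a, fun y => ?_, ?_⟩, fun a => tendsto_pi_nhds.2 fun i => hfs i a⟩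
  · have : (fun a i => fs i n a) ⁻¹' {y} = ⋂ i, fs i n ⁻¹' {y i} := by
      ext a
      simp [funext_iff]
    rw [this]
    exact MeasurableSet.iInter fun i => (fs i n).measurableSet_fiber _
  · refine (Set.Finite.pi' fun i => (fs i n).finite_range).subset ?_
    rintro _ ⟨a, rfl⟩ i
    exact ⟨a, rfl⟩

lemma MeasureTheory.AEStronglyMeasurable.pi_mk {α ι X : Type*} [Finite ι] [MeasurableSpace α]
    {μ : Measure α} [TopologicalSpace X] {f : ι → α → X} (h : ∀ i, AEStronglyMeasurable (f i) μ) :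
    AEStronglyMeasurable (fun a i => f i a) μ := by
  refine ⟨fun a i => (h i).mk _ a, StronglyMeasurable.pi_mk fun i => (h i).stronglyMeasurable_mk, ?_⟩
  filter_upwards [eventually_all.2 fun i => (h i).ae_eq_mk] with a ha
  exact funext ha

lemma aestronglyMeasurable_id_of_innerRegular {X : Type*} [MetricSpace X] [MeasurableSpace X]
    [BorelSpace X] (μ : Measure X) [IsFiniteMeasure μ] [μ.InnerRegular] :
    AEStronglyMeasurable (fun x : X => x) μ := by
  refine aestronglyMeasurable_iff_aemeasurable_separable.2 ⟨aemeasurable_id, ?_⟩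
  have h : ∀ n : ℕ, ∃ K : Set X, IsCompact K ∧ μ Kᶜ < (n + 1 : ℝ≥0∞)⁻¹ := by
    intro n
    obtain ⟨K, -, hK, h⟩ := MeasurableSet.univ.exists_isCompact_sdiff_lt (μ := μ)
      (measure_ne_top μ _) (ε := (n + 1 : ℝ≥0∞)⁻¹) (by simp)
    exact ⟨K, hK, by rwa [Set.compl_eq_univ_sdiff]⟩
  choose K hK hμ using h
  refine ⟨⋃ n, K n, .iUnion fun n => (hK n).isSeparable, ?_⟩
  change μ (⋃ n, K n)ᶜ = 0
  have hle : ∀ n : ℕ, μ (⋃ n, K n)ᶜ ≤ (n : ℝ≥0∞)⁻¹ := by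
    intro n
    refine (measure_mono (Set.compl_subset_compl.2 (Set.subset_iUnion K n))).trans
      ((hμ n).le.trans ?_)
    exact ENNReal.inv_le_inv.2 le_self_add
  exact le_antisymm (ge_of_tendsto' ENNReal.tendsto_inv_nat_nhds_zero hle) bot_le

lemma ae_mem_support_of_innerRegular {X : Type*} [MetricSpace X] [MeasurableSpace X]
    [BorelSpace X] (μ : Measure X) [μ.InnerRegular] :
    ∀ᵐ x ∂μ, ∀ U : Set X, IsOpen U → x ∈ U → 0 < μ U := by
  set S := {x : X | ∀ U : Set X, IsOpen U → x ∈ U → 0 < μ U}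
  have hx : ∀ x ∈ Sᶜ, ∃ U, IsOpen U ∧ x ∈ U ∧ μ U = 0 := by
    intro x hx
    simpa [S] using hx
  have hopen : IsOpen Sᶜ := by
    refine isOpen_iff_mem_nhds.2 fun x hxS => ?_
    obtain ⟨U, hU, hxU, h0⟩ := hx x hxS
    exact mem_of_superset (hU.mem_nhds hxU) fun y hy hyS => (hyS U hU hy).ne' h0
  change μ Sᶜ = 0
  rw [hopen.measurableSet.measure_eq_iSup_isCompact]
  simp only [ENNReal.iSup_eq_zero]
  intro K hKS hK
  refine hK.measure_zero_of_nhdsWithin fun x hxK => ?_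
  obtain ⟨U, hU, hxU, h0⟩ := hx x (hKS hxK)
  exact ⟨U, mem_nhdsWithin_of_mem_nhds (hU.mem_nhds hxU), h0⟩

/-- A measure with separable support and finite first moment is carried, up to a small average
displacement, to finitely many points by a simple function. -/
lemma exists_simpleFunc_lintegral_edist_lt {X : Type*} [MetricSpace X] [MeasurableSpace X]
    [BorelSpace X] {μ : Measure X} [IsFiniteMeasure μ] [μ.InnerRegular] (x₀ : X)
    (h : ∫⁻ x, edist x x₀ ∂μ ≠ ⊤) {ε : ℝ≥0∞} (hε : ε ≠ 0) :
    ∃ g : SimpleFunc X X, ∫⁻ x, edist x (g x) ∂μ < ε := by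
  have hid := aestronglyMeasurable_id_of_innerRegular μ
  obtain ⟨t, ht, hμt⟩ := (aestronglyMeasurable_iff_aemeasurable_separable.1 hid).2
  obtain ⟨c, hc, htc⟩ := ht
  have : TopologicalSpace.SeparableSpace (insert x₀ c : Set X) :=
    (hc.insert x₀).isSeparable.separableSpace
  let F := SimpleFunc.approxOn (fun x : X => x) measurable_id (insert x₀ c) x₀ (Set.mem_insert _ _)
  have hlim : Tendsto (fun n => ∫⁻ x, edist x (F n x) ∂μ) atTop (𝓝 (∫⁻ _x : X, 0 ∂μ)) := by
    refine tendsto_lintegral_of_dominated_convergence' (fun x => edist x x₀)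
      (fun n => hid.edist (F n).aestronglyMeasurable) (fun n => ?_) h ?_
    · refine Eventually.of_forall fun x => ?_
      change edist x (F n x) ≤ edist x x₀
      rw [edist_comm, edist_comm x]
      exact SimpleFunc.edist_approxOn_le measurable_id _ x n
    · filter_upwards [hμt] with x hx
      have h1 : Tendsto (fun n => F n x) atTop (𝓝 x) :=
        SimpleFunc.tendsto_approxOn measurable_id _
          (closure_mono (Set.subset_insert _ _) (htc hx))
      simpa using (tendsto_const_nhds (x := x)).edist h1
  rw [lintegral_zero] at hlim
  obtain ⟨n, hn⟩ := (hlim.eventually_lt_const (pos_iff_ne_zero.2 hε)).exists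
  exact ⟨F n, hn⟩

lemma exists_perm_card_mismatch_le {ι V : Type*} [Fintype ι] [DecidableEq ι] [DecidableEq V]
    (S : Finset V) (x y : ι → V) (hy : ∀ i, y i ∈ S) :
    ∃ e : Equiv.Perm ι, ((Finset.univ.filter fun i => x (e i) ≠ y i).card : ℝ) ≤
      ∑ v ∈ S, |∑ i, ((if x i = v then (1 : ℝ) else 0) - (if y i = v then 1 else 0))| := by
  obtain ⟨e, he⟩ := Finite.exists_min fun e : Equiv.Perm ι =>
    (Finset.univ.filter fun i => x (e i) ≠ y i).card
  refine ⟨e, ?_⟩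
  set U := Finset.univ.filter fun i => x (e i) ≠ y i with hU
  have hdis : ∀ i ∈ U, ∀ j ∈ U, x (e i) ≠ y j := by
    intro i hi j hj hij
    have hi' : x (e i) ≠ y i := by simpa [U] using hi
    have hj' : x (e j) ≠ y j := by simpa [U] using hj
    have hne : i ≠ j := fun h => hi' (h ▸ hij)
    refine absurd (he (e * Equiv.swap i j)) (not_le.2 ?_)
    refine Finset.card_lt_card (Finset.ssubset_iff_of_subset ?_ |>.2 ⟨j, hj, ?_⟩)
    · intro k hk
      by_cases hki : k = i
      · exact hki ▸ hi
      by_cases hkj : k = j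
      · exact hkj ▸ hj
      have hk' := (Finset.mem_filter.1 hk).2
      rw [Equiv.Perm.mul_apply, Equiv.swap_apply_of_ne_of_ne hki hkj] at hk'
      exact Finset.mem_filter.2 ⟨Finset.mem_univ k, hk'⟩
    · refine fun h => (Finset.mem_filter.1 h).2 ?_
      rwa [Equiv.Perm.mul_apply, Equiv.swap_apply_right]
  have hcard : (U.card : ℝ) = ∑ v ∈ S, ∑ i ∈ U, if y i = v then (1 : ℝ) else 0 := by
    rw [Finset.sum_comm]
    simp [hy]
  rw [hcard]
  refine Finset.sum_le_sum fun v _ => ?_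
  have h1 : ∑ i, ((if x i = v then (1 : ℝ) else 0) - (if y i = v then 1 else 0)) =
      ∑ i, ((if x (e i) = v then (1 : ℝ) else 0) - (if y i = v then 1 else 0)) := by
    rw [Finset.sum_sub_distrib, Finset.sum_sub_distrib,
      Equiv.sum_comp e fun i => if x i = v then (1 : ℝ) else 0]
  have h2 : ∑ i, ((if x (e i) = v then (1 : ℝ) else 0) - (if y i = v then 1 else 0)) =
      ∑ i ∈ U, ((if x (e i) = v then (1 : ℝ) else 0) - (if y i = v then 1 else 0)) := by
    refine (Finset.sum_subset (Finset.subset_univ U) fun i _ hi => ?_).symm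
    have : x (e i) = y i := by simpa [U] using hi
    simp [this]
  rw [h1, h2]
  by_cases hv : ∃ j ∈ U, y j = v
  · obtain ⟨j, hj, rfl⟩ := hv
    rw [← abs_neg, ← Finset.sum_neg_distrib]
    refine (Finset.sum_le_sum fun i hi => ?_).trans (le_abs_self _)
    simp [hdis i hi j hj]
  · push Not at hv
    rw [Finset.sum_eq_zero fun i hi => if_neg (hv i hi)]
    exact abs_nonneg _

lemma MeasureTheory.MeasurePreserving.lintegral_comp_aemeasurable {α β : Type*}
    [MeasurableSpace α] [MeasurableSpace β] {μ : Measure α} {ν : Measure β} {g : α → β}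
    (hg : MeasurePreserving g μ ν) {f : β → ℝ≥0∞} (hf : AEMeasurable f ν) :
    ∫⁻ a, f (g a) ∂μ = ∫⁻ y, f y ∂ν := by
  conv_rhs => rw [← hg.map_eq]
  rw [lintegral_map' (by rwa [hg.map_eq]) hg.aemeasurable]

lemma lintegral_abs_sum_pi_le {Ω ι : Type*} [Fintype ι] [Nonempty ι] [MeasurableSpace Ω]
    (P : Measure Ω) [IsProbabilityMeasure P] {h : Ω → ℝ} (hm : Measurable h)
    (h1 : ∀ x, |h x| ≤ 1) (h0 : ∫ x, h x ∂P = 0) :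
    ∫⁻ ω, ENNReal.ofReal |∑ i : ι, h (ω i)| ∂(Measure.pi fun _ : ι => P) ≤
      ENNReal.ofReal √(Fintype.card ι) := by
  set Q := Measure.pi fun _ : ι => P
  set S : (ι → Ω) → ℝ := fun ω => ∑ i, h (ω i) with hSdef
  have hL : MemLp h 2 P := MemLp.of_bound hm.aestronglyMeasurable 1 (Eventually.of_forall h1)
  have hcomp : ∀ i : ι, MemLp (fun ω : ι → Ω => h (ω i)) 2 Q := fun i =>
    hL.comp_measurePreserving (measurePreserving_eval (fun _ : ι => P) i)
  have hS : MemLp S 2 Q := memLp_finsetSum _ fun i _ => hcomp i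
  have hES : ∫ ω, S ω ∂Q = 0 := by
    rw [hSdef, integral_finsetSum _ fun i _ => (hcomp i).integrable one_le_two]
    refine Finset.sum_eq_zero fun i _ => ?_
    rw [integral_comp_eval (μ := fun _ : ι => P) (i := i) (f := h) hm.aestronglyMeasurable, h0]
  have hvar : ∫ ω, S ω ^ 2 ∂Q ≤ Fintype.card ι := by
    have e := ProbabilityTheory.variance_sum_pi (μ := fun _ : ι => P) (X := fun _ => h) fun _ => hL
    have hS' : (∑ i : ι, fun ω : ι → Ω => h (ω i)) = S := by
      funext ω
      simp [hSdef]
    rw [hS', ProbabilityTheory.variance_of_integral_eq_zero hS.aemeasurable hES] at e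
    rw [e]
    have : ProbabilityTheory.variance h P ≤ 1 := by
      rw [ProbabilityTheory.variance_of_integral_eq_zero hm.aemeasurable h0]
      calc ∫ x, h x ^ 2 ∂P ≤ ∫ _, (1 : ℝ) ∂P :=
            integral_mono hL.integrable_sq (integrable_const _) fun x => by
              have := h1 x
              rw [← sq_abs]
              nlinarith [abs_nonneg (h x)]
        _ = 1 := by simp
    calc ∑ _i : ι, ProbabilityTheory.variance h P ≤ ∑ _i : ι, (1 : ℝ) :=
          Finset.sum_le_sum fun _ _ => this
      _ = _ := by simp
  rw [← ofReal_integral_eq_lintegral_ofReal (hS.integrable one_le_two).abs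
    (Eventually.of_forall fun _ => abs_nonneg _)]
  refine ENNReal.ofReal_le_ofReal ?_
  have hcard : (0 : ℝ) < Fintype.card ι := by exact_mod_cast Fintype.card_pos
  set s := √(Fintype.card ι : ℝ)
  have hs : 0 < s := Real.sqrt_pos.2 hcard
  have hss : s * s = Fintype.card ι := Real.mul_self_sqrt hcard.le
  have hint : Integrable (fun ω => S ω ^ 2 / s) Q := hS.integrable_sq.div_const s
  calc ∫ ω, |S ω| ∂Q ≤ ∫ ω, (S ω ^ 2 / s + s) / 2 ∂Q := by
        refine integral_mono (hS.integrable one_le_two).abs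
          ((hint.add (integrable_const s)).div_const 2) fun ω => ?_
        have : (|S ω| - s) ^ 2 / s = S ω ^ 2 / s - 2 * |S ω| + s := by
          rw [sub_sq, sq_abs]
          field_simp
        have : 0 ≤ (|S ω| - s) ^ 2 / s := by positivity
        change |S ω| ≤ (S ω ^ 2 / s + s) / 2
        linarith
    _ = ((∫ ω, S ω ^ 2 ∂Q) / s + s) / 2 := by
        rw [integral_div, integral_add hint (integrable_const s), integral_div]
        simp
    _ ≤ (Fintype.card ι / s + s) / 2 := by gcongr
    _ = s := by
        rw [← hss]
        field_simp
        norm_num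

section Means

variable {X : Type*} [MetricSpace X] {M : X → X → X} {n : ℕ} {b : (Fin (n + 1) → X) → X}

lemma IsSymmetricMean.continuous (hb : IsSymmetricMean M n b) : Continuous b := by
  refine (LipschitzWith.of_dist_le' (K := 1) fun x y => ?_).continuous
  have h : ∑ i, dist (x i) (y i) ≤ ∑ _i : Fin (n + 1), dist x y :=
    Finset.sum_le_sum fun i _ => dist_le_pi_dist x y i
  rw [Finset.sum_const, Finset.card_univ, Fintype.card_fin, nsmul_eq_mul] at h
  have := (hb.lip x y).trans h
  push_cast at this
  rw [one_mul]
  exact le_of_mul_le_mul_left this (by positivity)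

lemma edist_le_inv_mul_sum_edist {ι : Type*} {s : Finset ι} {c : ℝ} (hc : 0 < c) {p q : X}
    {u v : ι → X} (h : c * dist p q ≤ ∑ i ∈ s, dist (u i) (v i)) :
    edist p q ≤ ENNReal.ofReal c⁻¹ * ∑ i ∈ s, edist (u i) (v i) := by
  simp only [edist_dist]
  rw [← ENNReal.ofReal_sum_of_nonneg fun _ _ => dist_nonneg,
    ← ENNReal.ofReal_mul (inv_nonneg.2 hc.le)]
  exact ENNReal.ofReal_le_ofReal ((le_inv_mul_iff₀ hc).2 h)

lemma AEStronglyMeasurable.comp_eval {Ω ι Y : Type*} [Fintype ι] [MeasurableSpace Ω]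
    [TopologicalSpace Y] {P : Measure Ω} [IsProbabilityMeasure P] {f : Ω → Y}
    (hf : AEStronglyMeasurable f P) (i : ι) :
    AEStronglyMeasurable (fun ω : ι → Ω => f (ω i)) (Measure.pi fun _ => P) :=
  hf.comp_measurePreserving (measurePreserving_eval (fun _ : ι => P) i)

lemma IsSymmetricMean.aestronglyMeasurable (hb : IsSymmetricMean M n b) {Ω : Type*}
    [MeasurableSpace Ω] {P : Measure Ω} [IsProbabilityMeasure P] {f : Ω → X}
    (hf : AEStronglyMeasurable f P) :
    AEStronglyMeasurable (fun ω : Fin (n + 1) → Ω => b fun i => f (ω i))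
      (Measure.pi fun _ => P) :=
  hb.continuous.comp_aestronglyMeasurable
    (AEStronglyMeasurable.pi_mk fun i => AEStronglyMeasurable.comp_eval hf i)

lemma IsSymmetricMean.lintegral_edist_le (hb : IsSymmetricMean M n b) {Ω : Type*}
    [MeasurableSpace Ω] {P : Measure Ω} [IsProbabilityMeasure P] {f g : Ω → X}
    (hf : AEStronglyMeasurable f P) (hg : AEStronglyMeasurable g P) :
    ∫⁻ ω, edist (b fun i => f (ω i)) (b fun i => g (ω i)) ∂(Measure.pi fun _ => P) ≤
      ∫⁻ x, edist (f x) (g x) ∂P := by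
  have hc : (0 : ℝ) < n + 1 := by positivity
  calc _ ≤ ∫⁻ ω : Fin (n + 1) → Ω, ENNReal.ofReal ((n + 1 : ℝ)⁻¹) *
        ∑ i, edist (f (ω i)) (g (ω i)) ∂(Measure.pi fun _ => P) :=
        lintegral_mono fun ω => edist_le_inv_mul_sum_edist hc (hb.lip _ _)
    _ = ENNReal.ofReal ((n + 1 : ℝ)⁻¹) * ∑ _i : Fin (n + 1), ∫⁻ x, edist (f x) (g x) ∂P := by
        rw [lintegral_const_mul' _ _ ENNReal.ofReal_ne_top, lintegral_finsetSum' _ fun i _ =>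
          (AEStronglyMeasurable.comp_eval hf i).edist (AEStronglyMeasurable.comp_eval hg i)]
        congr 1
        exact Finset.sum_congr rfl fun i _ =>
          (measurePreserving_eval (fun _ : Fin (n + 1) => P) i).lintegral_comp_aemeasurable
            (hf.edist hg)
    _ = _ := by
        rw [Finset.sum_const, Finset.card_univ, Fintype.card_fin, nsmul_eq_mul, ← mul_assoc,
          ← ENNReal.ofReal_natCast, ← ENNReal.ofReal_mul (by positivity)]
        push_cast
        rw [inv_mul_cancel₀ hc.ne', ENNReal.ofReal_one, one_mul]

lemma IsSymmetricMean.lintegral_edist_simpleFunc_le (hb : IsSymmetricMean M n b)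
    [MeasurableSpace X] {μ : Measure X} [IsProbabilityMeasure μ] (g : SimpleFunc X X) :
    ∫⁻ ω, edist (b fun i => g (ω i).1) (b fun i => g (ω i).2)
        ∂(Measure.pi fun _ => μ.prod μ) ≤
      ENNReal.ofReal (Metric.diam (Set.range g) * g.range.card / √(n + 1)) := by
  classical
  set D := Metric.diam (Set.range g) with hD
  have hc : (0 : ℝ) < n + 1 := by positivity
  have hD0 : 0 ≤ D := Metric.diam_nonneg
  have hdist : ∀ x y, dist (g x) (g y) ≤ D := fun x y =>
    Metric.dist_le_diam_of_mem g.finite_range.isBounded ⟨x, rfl⟩ ⟨y, rfl⟩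
  let φ : X → X → ℝ := fun v x => if g x = v then 1 else 0
  have hφm : ∀ v, Measurable (φ v) := fun v =>
    Measurable.ite (g.measurableSet_fiber v) measurable_const measurable_const
  have hφ : ∀ v x, φ v x = 0 ∨ φ v x = 1 := fun v x => by
    by_cases h : g x = v <;> simp [φ, h]
  have hφi : ∀ v, Integrable (φ v) μ := fun v =>
    Integrable.of_bound (hφm v).aestronglyMeasurable 1 (Eventually.of_forall fun x => by
      rcases hφ v x with h | h <;> simp [h])
  have hpt : ∀ ω : Fin (n + 1) → X × X,
      edist (b fun i => g (ω i).1) (b fun i => g (ω i).2) ≤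
        ENNReal.ofReal (D / (n + 1)) *
          ∑ v ∈ g.range, ENNReal.ofReal |∑ i, (φ v (ω i).1 - φ v (ω i).2)| := by
    intro ω
    obtain ⟨e, he⟩ := exists_perm_card_mismatch_le g.range (fun i => g (ω i).1)
      (fun i => g (ω i).2) fun i => g.mem_range_self _
    rw [← ENNReal.ofReal_sum_of_nonneg fun _ _ => abs_nonneg _,
      ← ENNReal.ofReal_mul (by positivity), edist_dist]
    refine ENNReal.ofReal_le_ofReal ?_
    have h1 := hb.lip ((fun i => g (ω i).1) ∘ e) (fun i => g (ω i).2)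
    rw [hb.symm] at h1
    have h2 : ∑ i, dist (((fun i => g (ω i).1) ∘ e) i) (g (ω i).2) ≤
        D * (Finset.univ.filter fun i => g (ω (e i)).1 ≠ g (ω i).2).card := by
      rw [mul_comm, ← nsmul_eq_mul, ← Finset.sum_const, Finset.sum_filter]
      refine Finset.sum_le_sum fun i _ => ?_
      split_ifs with h
      · exact hdist _ _
      · push Not at h
        simp [h]
    rw [div_mul_eq_mul_div, le_div_iff₀ hc, mul_comm _ ((n : ℝ) + 1)]
    exact h1.trans (h2.trans (mul_le_mul_of_nonneg_left he hD0))
  have hv : ∀ v, ∫⁻ ω : Fin (n + 1) → X × X,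
      ENNReal.ofReal |∑ i, (φ v (ω i).1 - φ v (ω i).2)| ∂(Measure.pi fun _ => μ.prod μ) ≤
        ENNReal.ofReal √(n + 1) := by
    intro v
    have h := lintegral_abs_sum_pi_le (ι := Fin (n + 1)) (μ.prod μ)
      (h := fun p => φ v p.1 - φ v p.2)
      (((hφm v).comp measurable_fst).sub ((hφm v).comp measurable_snd))
      (fun p => by rcases hφ v p.1 with h | h <;> rcases hφ v p.2 with h' | h' <;> simp [h, h'])
      (by
        rw [integral_sub ((hφi v).comp_fst μ) ((hφi v).comp_snd μ), integral_fun_fst,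
          integral_fun_snd, sub_self])
    simpa using h
  calc _ ≤ ∫⁻ ω : Fin (n + 1) → X × X, ENNReal.ofReal (D / (n + 1)) *
          ∑ v ∈ g.range, ENNReal.ofReal |∑ i, (φ v (ω i).1 - φ v (ω i).2)|
          ∂(Measure.pi fun _ => μ.prod μ) := lintegral_mono hpt
    _ ≤ ENNReal.ofReal (D / (n + 1)) * ∑ _v ∈ g.range, ENNReal.ofReal √(n + 1) := by
        rw [lintegral_const_mul' _ _ ENNReal.ofReal_ne_top, lintegral_finsetSum _ fun v _ => ?_]
        · gcongr with v
          exact hv v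
        · have := hφm v
          fun_prop
    _ = _ := by
        rw [Finset.sum_const, nsmul_eq_mul, ← ENNReal.ofReal_natCast,
          ← ENNReal.ofReal_mul (by positivity), ← ENNReal.ofReal_mul (by positivity)]
        congr 1
        have h := Real.mul_self_sqrt hc.le
        have hs : 0 < √((n : ℝ) + 1) := Real.sqrt_pos.2 hc
        rw [div_mul_eq_mul_div, div_eq_div_iff hc.ne' hs.ne']
        linear_combination D * g.range.card * h

end Means

section Barycenter

variable {X : Type*} [MetricSpace X] {M : X → X → X} {b : ∀ n, (Fin (n + 1) → X) → X}

lemma lintegral_edist_mean_antitone [MeasurableSpace X] {μ : Measure X} [IsProbabilityMeasure μ]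
    (hid : AEStronglyMeasurable (fun x : X => x) μ) (hb : ∀ n, IsSymmetricMean M n (b n))
    (hstep : ∀ n x z, (n + 2) * dist (b (n + 1) x) z ≤
        ∑ i : Fin (n + 2), dist (b n (x ∘ i.succAbove)) z) (z : X) :
    Antitone fun n => ∫⁻ ω, edist (b n ω) z ∂(Measure.pi fun _ => μ) := by
  refine antitone_nat_of_succ_le fun n => ?_
  have hc : (0 : ℝ) < n + 2 := by positivity
  have hm : AEMeasurable (fun ω => edist (b n ω) z) (Measure.pi fun _ => μ) :=
    ((hb n).aestronglyMeasurable hid).edist aestronglyMeasurable_const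
  have hp : ∀ i : Fin (n + 2), MeasurePreserving (fun ω : Fin (n + 2) → X => ω ∘ i.succAbove)
      (Measure.pi fun _ => μ) (Measure.pi fun _ => μ) := fun i =>
    measurePreserving_snd.comp (measurePreserving_piFinSuccAbove (fun _ : Fin (n + 2) => μ) i)
  have hm' : ∀ i : Fin (n + 2), AEMeasurable (fun ω : Fin (n + 2) → X =>
      edist (b n (ω ∘ i.succAbove)) z) (Measure.pi fun _ => μ) := fun i =>
    hm.comp_quasiMeasurePreserving (hp i).quasiMeasurePreserving
  calc _ ≤ ∫⁻ ω : Fin (n + 2) → X, ENNReal.ofReal ((n + 2 : ℝ)⁻¹) *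
        ∑ i : Fin (n + 2), edist (b n (ω ∘ i.succAbove)) z ∂(Measure.pi fun _ => μ) :=
        lintegral_mono fun ω => edist_le_inv_mul_sum_edist hc (hstep n ω z)
    _ = ENNReal.ofReal ((n + 2 : ℝ)⁻¹) *
        ∑ _i : Fin (n + 2), ∫⁻ ω, edist (b n ω) z ∂(Measure.pi fun _ => μ) := by
        rw [lintegral_const_mul' _ _ ENNReal.ofReal_ne_top, lintegral_finsetSum' _ fun i _ =>
          hm' i]
        congr 1
        exact Finset.sum_congr rfl fun i _ => (hp i).lintegral_comp_aemeasurable hm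
    _ = _ := by
        rw [Finset.sum_const, Finset.card_univ, Fintype.card_fin, nsmul_eq_mul, ← mul_assoc,
          ← ENNReal.ofReal_natCast, ← ENNReal.ofReal_mul (by positivity)]
        push_cast
        rw [inv_mul_cancel₀ hc.ne', ENNReal.ofReal_one, one_mul]

lemma tendsto_lintegral_edist_mean_prod [MeasurableSpace X] [BorelSpace X] {μ : Measure X}
    [IsProbabilityMeasure μ] [μ.InnerRegular] (x₀ : X) (h : ∫⁻ x, edist x x₀ ∂μ ≠ ⊤)
    (hb : ∀ n, IsSymmetricMean M n (b n)) :
    Tendsto (fun n => ∫⁻ ω, edist (b n fun i => (ω i).1) (b n fun i => (ω i).2)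
      ∂(Measure.pi fun _ => μ.prod μ)) atTop (𝓝 0) := by
  have hid := aestronglyMeasurable_id_of_innerRegular μ
  have hfst : AEStronglyMeasurable (fun p : X × X => p.1) (μ.prod μ) :=
    hid.comp_measurePreserving measurePreserving_fst
  have hsnd : AEStronglyMeasurable (fun p : X × X => p.2) (μ.prod μ) :=
    hid.comp_measurePreserving measurePreserving_snd
  refine ENNReal.tendsto_nhds_zero.2 fun ε hε => ?_
  have hε3 : ε / 3 ≠ 0 := (ENNReal.div_pos hε.ne' (by simp)).ne'
  obtain ⟨g, hg⟩ := exists_simpleFunc_lintegral_edist_lt x₀ h hε3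
  have hgm : AEStronglyMeasurable g μ := g.aestronglyMeasurable
  have hgfst : AEStronglyMeasurable (fun p : X × X => g p.1) (μ.prod μ) :=
    hgm.comp_measurePreserving measurePreserving_fst
  have hgsnd : AEStronglyMeasurable (fun p : X × X => g p.2) (μ.prod μ) :=
    hgm.comp_measurePreserving measurePreserving_snd
  have hlim : Tendsto (fun n : ℕ =>
      ENNReal.ofReal (Metric.diam (Set.range g) * g.range.card / √(n + 1))) atTop (𝓝 0) := by
    rw [← ENNReal.ofReal_zero]
    refine ENNReal.tendsto_ofReal (tendsto_const_nhds.div_atTop ?_)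
    exact Real.tendsto_sqrt_atTop.comp
      (tendsto_atTop_add_const_right _ 1 tendsto_natCast_atTop_atTop)
  filter_upwards [hlim.eventually_le_const (pos_iff_ne_zero.2 hε3)] with n hn
  have e1 : ∫⁻ ω, edist (b n fun i => (ω i).1) (b n fun i => g (ω i).1)
      ∂(Measure.pi fun _ => μ.prod μ) ≤ ε / 3 := by
    refine ((hb n).lintegral_edist_le hfst hgfst).trans (le_of_eq_of_le ?_ hg.le)
    exact measurePreserving_fst.lintegral_comp_aemeasurable (hid.edist hgm)
  have e2 : ∫⁻ ω, edist (b n fun i => g (ω i).2) (b n fun i => (ω i).2)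
      ∂(Measure.pi fun _ => μ.prod μ) ≤ ε / 3 := by
    refine ((hb n).lintegral_edist_le hgsnd hsnd).trans (le_of_eq_of_le ?_ hg.le)
    simp only [edist_comm (g _)]
    exact measurePreserving_snd.lintegral_comp_aemeasurable (hid.edist hgm)
  have e3 := ((hb n).lintegral_edist_simpleFunc_le (μ := μ) g).trans hn
  have m1 := ((hb n).aestronglyMeasurable hfst).edist ((hb n).aestronglyMeasurable hgfst)
  have m2 := ((hb n).aestronglyMeasurable hgfst).edist ((hb n).aestronglyMeasurable hgsnd)
  calc _ ≤ ∫⁻ ω, (edist (b n fun i => (ω i).1) (b n fun i => g (ω i).1) +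
        edist (b n fun i => g (ω i).1) (b n fun i => g (ω i).2)) +
        edist (b n fun i => g (ω i).2) (b n fun i => (ω i).2)
        ∂(Measure.pi fun _ => μ.prod μ) := lintegral_mono fun ω => edist_triangle4 _ _ _ _
    _ ≤ ε / 3 + ε / 3 + ε / 3 := by
        rw [lintegral_add_left' (m1.fun_add m2), lintegral_add_left' m1]
        gcongr
    _ = ε := ENNReal.add_thirds ε

lemma exists_tendsto_lintegral_edist_mean [CompleteSpace X] [MeasurableSpace X] [BorelSpace X]
    {μ : Measure X} [IsProbabilityMeasure μ] [μ.InnerRegular]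
    (h : ∀ x₀, ∫⁻ x, edist x x₀ ∂μ ≠ ⊤) (hb : ∀ n, IsSymmetricMean M n (b n))
    (hstep : ∀ n x z, (n + 2) * dist (b (n + 1) x) z ≤
        ∑ i : Fin (n + 2), dist (b n (x ∘ i.succAbove)) z) :
    ∃ z, Tendsto (fun n => ∫⁻ ω, edist (b n ω) z ∂(Measure.pi fun _ => μ)) atTop (𝓝 0) := by
  have hid := aestronglyMeasurable_id_of_innerRegular μ
  obtain ⟨x₀⟩ : Nonempty X := nonempty_of_isProbabilityMeasure μ
  have hconc := tendsto_lintegral_edist_mean_prod x₀ (h x₀) hb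
  set c := fun n => ∫⁻ ω, edist (b n fun i => (ω i).1) (b n fun i => (ω i).2)
      ∂(Measure.pi fun _ => μ.prod μ) with hc
  set a := fun n z => ∫⁻ ω, edist (b n ω) z ∂(Measure.pi fun _ => μ) with ha
  have hm : ∀ n z, AEMeasurable (fun ω => edist (b n ω) z) (Measure.pi fun _ => μ) := fun n z =>
    ((hb n).aestronglyMeasurable hid).edist aestronglyMeasurable_const
  have hz : ∀ n, ∃ z, a n z ≤ c n := by
    intro n
    have hprod : AEMeasurable (fun p : (Fin (n + 1) → X) × (Fin (n + 1) → X) =>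
        edist (b n p.1) (b n p.2)) ((Measure.pi fun _ => μ).prod (Measure.pi fun _ => μ)) :=
      (((hb n).aestronglyMeasurable hid).comp_measurePreserving measurePreserving_fst).edist
        (((hb n).aestronglyMeasurable hid).comp_measurePreserving measurePreserving_snd)
    have h1 : c n = ∫⁻ ω, a n (b n ω) ∂(Measure.pi fun _ => μ) := by
      have h2 := (measurePreserving_arrowProdEquivProdArrow X X (Fin (n + 1)) (fun _ => μ)
        fun _ => μ).lintegral_comp_aemeasurable hprod
      rw [lintegral_prod_symm _ hprod] at h2
      exact h2
    have h3 : AEMeasurable (fun ω => a n (b n ω)) (Measure.pi fun _ => μ) :=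
      hprod.prod_swap.lintegral_prod_right'
    obtain ⟨ω, hω⟩ := exists_le_lintegral h3
    exact ⟨b n ω, hω.trans h1.ge⟩
  choose z hz using hz
  have hanti : ∀ w, Antitone fun n => a n w := fun w =>
    lintegral_edist_mean_antitone hid hb hstep w
  have hdist : ∀ N u v, edist u v ≤ a N u + a N v := by
    intro N u v
    calc edist u v = ∫⁻ _ω : Fin (N + 1) → X, edist u v ∂(Measure.pi fun _ => μ) := by simp
      _ ≤ ∫⁻ ω, (edist (b N ω) u + edist (b N ω) v) ∂(Measure.pi fun _ => μ) :=
          lintegral_mono fun ω => edist_triangle_left _ _ _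
      _ = _ := lintegral_add_left' (hm N u) _
  have hzz : ∀ n m, edist (z n) (z m) ≤ c n + c m := fun n m =>
    (hdist (max n m) _ _).trans (add_le_add
      ((hanti _ (le_max_left n m)).trans (hz n)) ((hanti _ (le_max_right n m)).trans (hz m)))
  have hcauchy : CauchySeq z := by
    refine EMetric.cauchySeq_iff.2 fun ε hε => ?_
    have hε3 : 0 < ε / 3 := ENNReal.div_pos hε.ne' (by simp)
    obtain ⟨N, hN⟩ := eventually_atTop.1 (hconc.eventually_lt_const (ENNReal.half_pos hε.ne'))
    refine ⟨N, fun m hm n hn => (hzz m n).trans_lt ?_⟩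
    exact (ENNReal.add_lt_add (hN m hm) (hN n hn)).trans_eq (ENNReal.add_halves ε)
  obtain ⟨w, hw⟩ := cauchySeq_tendsto_of_complete hcauchy
  refine ⟨w, ?_⟩
  have hw' : Tendsto (fun n => c n + edist (z n) w) atTop (𝓝 0) := by
    have h1 : Tendsto (fun n => edist (z n) w) atTop (𝓝 0) := by
      simpa using hw.edist (tendsto_const_nhds (x := w))
    simpa using hconc.add h1
  refine tendsto_of_tendsto_of_tendsto_of_le_of_le tendsto_const_nhds hw'
    (fun _ => zero_le) fun n => ?_
  calc a n w ≤ ∫⁻ ω, (edist (b n ω) (z n) + edist (z n) w) ∂(Measure.pi fun _ => μ) :=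
        lintegral_mono fun ω => edist_triangle _ _ _
    _ = a n (z n) + edist (z n) w := by
        rw [lintegral_add_left' (hm n _)]
        simp [ha]
    _ ≤ _ := by
        gcongr
        exact hz n

lemma edist_le_lintegral_coupling [MeasurableSpace X] {μ ν : Measure X} {γ : Measure (X × X)}
    [IsProbabilityMeasure μ] [IsProbabilityMeasure ν] [IsProbabilityMeasure γ]
    (hμ : AEStronglyMeasurable (fun x : X => x) μ) (hν : AEStronglyMeasurable (fun x : X => x) ν)
    (hfst : MeasurePreserving Prod.fst γ μ) (hsnd : MeasurePreserving Prod.snd γ ν)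
    (hb : ∀ n, IsSymmetricMean M n (b n)) {u v : X}
    (hu : Tendsto (fun n => ∫⁻ ω, edist (b n ω) u ∂(Measure.pi fun _ => μ)) atTop (𝓝 0))
    (hv : Tendsto (fun n => ∫⁻ ω, edist (b n ω) v ∂(Measure.pi fun _ => ν)) atTop (𝓝 0)) :
    edist u v ≤ ∫⁻ p, edist p.1 p.2 ∂γ := by
  have hlim : Tendsto (fun n => ∫⁻ ω, edist (b n ω) u ∂(Measure.pi fun _ => μ) +
      ∫⁻ p, edist p.1 p.2 ∂γ + ∫⁻ ω, edist (b n ω) v ∂(Measure.pi fun _ => ν)) atTop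
      (𝓝 (∫⁻ p, edist p.1 p.2 ∂γ)) := by
    simpa using (hu.add_const _).add hv
  refine ge_of_tendsto' hlim fun n => ?_
  have hpf := measurePreserving_pi (fun _ : Fin (n + 1) => γ) (fun _ => μ) fun _ => hfst
  have hps := measurePreserving_pi (fun _ : Fin (n + 1) => γ) (fun _ => ν) fun _ => hsnd
  have mμ := (hb n).aestronglyMeasurable hμ
  have mν := (hb n).aestronglyMeasurable hν
  have hf : AEStronglyMeasurable (fun p : X × X => p.1) γ := hμ.comp_measurePreserving hfst
  have hs : AEStronglyMeasurable (fun p : X × X => p.2) γ := hν.comp_measurePreserving hsnd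
  have mf := (hb n).aestronglyMeasurable hf
  have ms := (hb n).aestronglyMeasurable hs
  have e1 := hpf.lintegral_comp_aemeasurable (mμ.edist (aestronglyMeasurable_const (b := u)))
  have e2 := hps.lintegral_comp_aemeasurable (mν.edist (aestronglyMeasurable_const (b := v)))
  have m1 := mf.edist (aestronglyMeasurable_const (b := u))
  have m2 := mf.edist ms
  calc edist u v = ∫⁻ _ω : Fin (n + 1) → X × X, edist u v ∂(Measure.pi fun _ => γ) := by simp
    _ ≤ ∫⁻ ω : Fin (n + 1) → X × X, (edist (b n fun i => (ω i).1) u +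
        edist (b n fun i => (ω i).1) (b n fun i => (ω i).2)) +
        edist (b n fun i => (ω i).2) v ∂(Measure.pi fun _ => γ) :=
        lintegral_mono fun ω => by
          rw [edist_comm _ u]
          exact edist_triangle4 _ _ _ _
    _ ≤ _ := by
        rw [lintegral_add_left' (m1.fun_add m2), lintegral_add_left' m1]
        exact add_le_add (add_le_add e1.le ((hb n).lintegral_edist_le hf hs)) e2.le

lemma mem_of_tendsto_lintegral_edist_mean [MeasurableSpace X] {μ : Measure X}
    [IsProbabilityMeasure μ] (hb : ∀ n, IsSymmetricMean M n (b n)) {u : X}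
    (hu : Tendsto (fun n => ∫⁻ ω, edist (b n ω) u ∂(Measure.pi fun _ => μ)) atTop (𝓝 0))
    {C : Set X} (hC : IsClosed C) (hMC : ∀ x ∈ C, ∀ y ∈ C, M x y ∈ C) (hμC : ∀ᵐ x ∂μ, x ∈ C) :
    u ∈ C := by
  rw [← hC.closure_eq, Metric.mem_closure_iff_infEDist_zero]
  refine le_antisymm (ge_of_tendsto' hu fun n => ?_) bot_le
  have hae : ∀ᵐ ω : Fin (n + 1) → X ∂(Measure.pi fun _ => μ), ∀ i, ω i ∈ C :=
    eventually_all.2 fun i => Measure.tendsto_eval_ae_ae.eventually hμC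
  calc Metric.infEDist u C = ∫⁻ _ω : Fin (n + 1) → X, Metric.infEDist u C
        ∂(Measure.pi fun _ => μ) := by simp
    _ ≤ _ := by
        refine lintegral_mono_ae ?_
        filter_upwards [hae] with ω hω
        rw [edist_comm]
        exact Metric.infEDist_le_edist_of_mem ((hb n).mem C hC hMC ω hω)

end Barycenter

section Bicombing

variable {X : Type*} [MetricSpace X] {σ : X → X → ℝ → X}

lemma IsConical.dist_midpoint_le (hcon : IsConical σ) (x y x' y' : X) :
    dist (σ x y (1 / 2)) (σ x' y' (1 / 2)) ≤ (dist x x' + dist y y') / 2 :=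
  (hcon x y x' y' (1 / 2) (by norm_num)).trans_eq (by ring)

lemma IsGeodesicBicombing.midpoint_self (hgeo : IsGeodesicBicombing σ) (x : X) :
    σ x x (1 / 2) = x := by
  have h := hgeo.2.2 x x (1 / 2) (by norm_num) 0 (by norm_num)
  rwa [dist_self, mul_zero, dist_eq_zero, hgeo.1] at h

lemma IsSigmaConvex.midpoint_mem_closure (hcon : IsConical σ) {C : Set X}
    (hC : IsSigmaConvex σ C) {x y : X} (hx : x ∈ closure C) (hy : y ∈ closure C) :
    σ x y (1 / 2) ∈ closure C := by
  have hcont : Continuous fun p : X × X => σ p.1 p.2 (1 / 2) := by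
    refine (LipschitzWith.of_dist_le' (K := 1) fun p q => ?_).continuous
    have h := hcon.dist_midpoint_le p.1 p.2 q.1 q.2
    have h1 : dist p.1 q.1 ≤ dist p q := le_max_left _ _
    have h2 : dist p.2 q.2 ≤ dist p q := le_max_right _ _
    linarith
  exact map_mem_closure₂ (f := fun x y => σ x y (1 / 2)) hcont hx hy fun a ha b hb =>
    hC a ha b hb _ (by norm_num)

lemma subset_sigmaConvexHull (A : Set X) : A ⊆ sigmaConvexHull σ A :=
  Set.subset_sInter fun _ hC => hC.1

lemma isSigmaConvex_sigmaConvexHull (A : Set X) : IsSigmaConvex σ (sigmaConvexHull σ A) :=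
  fun x hx y hy t ht C hC => hC.2 x (hx C hC) y (hy C hC) t ht

end Bicombing

end SymmetricMeans

/-- **Theorem 2.7.** Every complete metric space with a conical geodesic bicombing `σ` admits
a contracting barycenter map `β_σ` such that `β_σ μ` lies in the closed `σ`-convex hull of
the support of `μ` for every `μ ∈ P₁(X)`. -/
theorem exists_contracting_barycenter_in_convex_hull_of_support
    {X : Type*} [MetricSpace X] [CompleteSpace X] [MeasurableSpace X] [BorelSpace X]
    (σ : X → X → ℝ → X) (hgeo : IsGeodesicBicombing σ) (hcon : IsConical σ) :
    ∃ β : P1 X → X, IsContractingBarycenter β ∧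
      ∀ μ : P1 X, β μ ∈ closure (sigmaConvexHull σ (measureSupport μ.1)) := by
  obtain ⟨b, hb, hstep⟩ := exists_symmetricMean_seq (M := fun x y => σ x y (1 / 2))
    hgeo.midpoint_self hcon.dist_midpoint_le
  have hprob : ∀ μ : P1 X, IsProbabilityMeasure μ.1 := fun μ => μ.2.1
  have hreg : ∀ μ : P1 X, μ.1.InnerRegular := fun μ => μ.2.2.1
  choose β hβ using fun μ : P1 X => exists_tendsto_lintegral_edist_mean μ.2.2.2 hb hstep
  refine ⟨β, ⟨fun μ ν => le_iInf₂ fun γ hγ => ?_, fun x μ hμ => ?_⟩, fun μ => ?_⟩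
  · have := hγ.1
    exact edist_le_lintegral_coupling (aestronglyMeasurable_id_of_innerRegular μ.1)
      (aestronglyMeasurable_id_of_innerRegular ν.1) ⟨measurable_fst, hγ.2.1⟩
      ⟨measurable_snd, hγ.2.2⟩ hb (hβ μ) (hβ ν)
  · refine mem_of_tendsto_lintegral_edist_mean hb (hβ μ) (isClosed_singleton (x := x)) ?_ ?_
    · rintro _ rfl _ rfl
      exact hgeo.midpoint_self _
    · rw [hμ]
      exact (ae_dirac_iff (measurableSet_singleton x)).2 rfl
  · refine mem_of_tendsto_lintegral_edist_mean hb (hβ μ) isClosed_closure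
      (fun x hx y hy => (isSigmaConvex_sigmaConvexHull _).midpoint_mem_closure hcon hx hy) ?_
    filter_upwards [ae_mem_support_of_innerRegular μ.1] with x hx
    exact subset_closure (subset_sigmaConvexHull _ hx)
end
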